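/- arXiv:1906.05161 — 2 statements merged into one kernel-verified Lean document; each statement's English description precedes it below -/
import Mathlib

section
/- Assume the stated hypotheses on Ω and u, and let a ∈ ∂Ω be a GBU point. Then liminf_{r→0⁺} r^β |u_ν(a + r ν_a, T)| ≥ d_p, where u_ν(x,T) = ∇u(x,T)·ν(x) is defined for x ∈ Ω_{δ₀} since u is C² in space on Ω up to time T. -/
open Set Metric Filter RealInnerProductSpace

noncomputable section

set_option linter.unusedVariables false

/-- A set `Ω ⊆ ℝⁿ` has boundary of class `C²`: near each boundary point, `Ω` is the strict
sublevel set of a `C²` function with nonvanishing gradient (equivalently, after a rigid motion,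
the boundary is locally the graph of a `C²` function with `Ω` strictly on one side). -/
def IsC2Boundary {n : ℕ} (Ω : Set (EuclideanSpace ℝ (Fin n))) : Prop :=
  ∀ x ∈ frontier Ω, ∃ f : EuclideanSpace ℝ (Fin n) → ℝ, ∃ U ∈ nhds x,
    ContDiffOn ℝ 2 f U ∧ (∀ y ∈ U, fderiv ℝ f y ≠ 0) ∧
    U ∩ Ω = U ∩ {y | f y < 0} ∧ U ∩ frontier Ω = U ∩ {y | f y = 0}

/-- trace of an endomorphism in the standard basis -/
def lap {n : ℕ} (A : EuclideanSpace ℝ (Fin n) →L[ℝ] EuclideanSpace ℝ (Fin n)) : ℝ :=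
  ∑ i : Fin n, ⟪A (EuclideanSpace.single i (1 : ℝ)), EuclideanSpace.single i (1 : ℝ)⟫

/-- `w` is twice differentiable at `x` with gradient `g` and Laplacian `L`. -/
def HasLap {n : ℕ} (w : EuclideanSpace ℝ (Fin n) → ℝ) (x g : EuclideanSpace ℝ (Fin n))
    (L : ℝ) : Prop :=
  ∃ G : EuclideanSpace ℝ (Fin n) → EuclideanSpace ℝ (Fin n),
  ∃ H : EuclideanSpace ℝ (Fin n) →L[ℝ] EuclideanSpace ℝ (Fin n),
    (∀ᶠ y in nhds x, HasGradientAt w (G y) y) ∧ HasFDerivAt G H x ∧ G x = g ∧ lap H = L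

section HasLapLib

variable {n : ℕ}

local notation "E" => EuclideanSpace ℝ (Fin n)

theorem lap_add (A B : E →L[ℝ] E) : lap (A + B) = lap A + lap B := by
  simp [lap, inner_add_left, Finset.sum_add_distrib]

theorem lap_smul (c : ℝ) (A : E →L[ℝ] E) : lap (c • A) = c * lap A := by
  simp [lap, inner_smul_left, Finset.mul_sum]

theorem lap_id : lap (ContinuousLinearMap.id ℝ E) = n := by
  simp [lap]

theorem lap_rankone (a b : E) : lap ((innerSL ℝ a).smulRight b) = ⟪a, b⟫ := by
  simp [lap, PiLp.inner_apply, inner_smul_left, mul_comm]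

theorem HasLap.add {w₁ w₂ : E → ℝ} {x g₁ g₂ : E} {L₁ L₂ : ℝ} (h₁ : HasLap w₁ x g₁ L₁)
    (h₂ : HasLap w₂ x g₂ L₂) : HasLap (fun y => w₁ y + w₂ y) x (g₁ + g₂) (L₁ + L₂) := by
  obtain ⟨G₁, H₁, a₁, b₁, rfl, rfl⟩ := h₁
  obtain ⟨G₂, H₂, a₂, b₂, rfl, rfl⟩ := h₂
  refine ⟨fun y => G₁ y + G₂ y, H₁ + H₂, ?_, b₁.add b₂, rfl, lap_add _ _⟩
  filter_upwards [a₁, a₂] with y h1 h2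
  rw [hasGradientAt_iff_hasFDerivAt] at *
  rw [map_add]
  exact h1.add h2

theorem HasLap.const_mul {w : E → ℝ} {x g : E} {L : ℝ} (c : ℝ) (h : HasLap w x g L) :
    HasLap (fun y => c * w y) x (c • g) (c * L) := by
  obtain ⟨G₁, H₁, a₁, b₁, rfl, rfl⟩ := h
  refine ⟨fun y => c • G₁ y, c • H₁, ?_, b₁.const_smul c, rfl, lap_smul _ _⟩
  filter_upwards [a₁] with y h1
  rw [hasGradientAt_iff_hasFDerivAt] at *
  simpa using h1.const_mul c

theorem HasLap.neg {w : E → ℝ} {x g : E} {L : ℝ} (h : HasLap w x g L) :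
    HasLap (fun y => - w y) x (- g) (- L) := by
  simpa using h.const_mul (-1)

theorem HasLap.sub {w₁ w₂ : E → ℝ} {x g₁ g₂ : E} {L₁ L₂ : ℝ} (h₁ : HasLap w₁ x g₁ L₁)
    (h₂ : HasLap w₂ x g₂ L₂) : HasLap (fun y => w₁ y - w₂ y) x (g₁ - g₂) (L₁ - L₂) := by
  simpa [sub_eq_add_neg] using h₁.add h₂.neg

theorem HasLap.const (c : ℝ) (x : E) : HasLap (fun _ => c) x 0 0 := by
  refine ⟨fun _ => 0, 0, ?_, hasFDerivAt_const _ _, rfl, by simp [lap]⟩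
  filter_upwards with y
  rw [hasGradientAt_iff_hasFDerivAt]
  simpa using hasFDerivAt_const c y

theorem HasLap.lin (ν z x : E) : HasLap (fun y => ⟪y - z, ν⟫) x ν 0 := by
  refine ⟨fun _ => ν, 0, ?_, hasFDerivAt_const _ _, rfl, by simp [lap]⟩
  filter_upwards with y
  rw [hasGradientAt_iff_hasFDerivAt]
  have h := ((InnerProductSpace.toDual ℝ E) ν).hasFDerivAt (x := y - z)
  have h2 := h.comp y ((hasFDerivAt_id y).sub_const z)
  refine (h2.congr_of_eventuallyEq ?_)
  filter_upwards with y
  simp [real_inner_comm]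

theorem HasLap.sq (z x : E) : HasLap (fun y => ‖y - z‖ ^ 2) x ((2 : ℝ) • (x - z)) (2 * n) := by
  refine ⟨fun y => (2 : ℝ) • (y - z), (2 : ℝ) • ContinuousLinearMap.id ℝ E, ?_, ?_, rfl, ?_⟩
  · filter_upwards with y
    rw [hasGradientAt_iff_hasFDerivAt]
    have h2 := ((hasFDerivAt_id y).sub_const z).norm_sq
    have e : (InnerProductSpace.toDual ℝ E) ((2 : ℝ) • (y - z)) =
        2 • (innerSL ℝ (y - z)).comp (ContinuousLinearMap.id ℝ E) := by
      ext w; simp [two_smul]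
    rw [e]
    exact h2
  · exact ((hasFDerivAt_id x).sub_const z).const_smul (2 : ℝ)
  · rw [lap_smul, lap_id]

theorem HasLap.congr {w₁ w₂ : E → ℝ} {x g₁ g₂ : E} {L₁ L₂ : ℝ} (h₁ : HasLap w₁ x g₁ L₁)
    (h : w₁ = w₂) (hg : g₁ = g₂) (hL : L₁ = L₂) : HasLap w₂ x g₂ L₂ := by
  subst h hg hL; exact h₁

theorem HasLap.comp {w : E → ℝ} {x g : E} {L : ℝ} (h : HasLap w x g L) {F F1 : ℝ → ℝ} {F2 : ℝ}
    (hF : ∀ᶠ s in nhds (w x), HasDerivAt F (F1 s) s) (hF1 : HasDerivAt F1 F2 (w x)) :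
    HasLap (fun y => F (w y)) x (F1 (w x) • g) (F2 * ‖g‖ ^ 2 + F1 (w x) * L) := by
  obtain ⟨G, H, a, b, rfl, rfl⟩ := h
  have hwx := a.self_of_nhds
  rw [hasGradientAt_iff_hasFDerivAt] at hwx
  have h1 := (hF1.comp_hasFDerivAt x hwx).smul b
  refine ⟨fun y => F1 (w y) • G y, _, ?_, h1, rfl, ?_⟩
  · have hc := hwx.continuousAt.eventually hF
    filter_upwards [a, hc] with y h1 h2
    rw [hasGradientAt_iff_hasFDerivAt] at *
    have e : (InnerProductSpace.toDual ℝ E) (F1 (w y) • G y) =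
        F1 (w y) • (InnerProductSpace.toDual ℝ E) (G y) := by
      ext w; simp
    rw [e]
    exact h2.comp_hasFDerivAt y h1
  · rw [lap_add, lap_smul]
    have : (F2 • (InnerProductSpace.toDual ℝ E) (G x)).smulRight (G x)
        = F2 • ((innerSL ℝ (G x)).smulRight (G x)) := by
      ext; simp [mul_assoc]
    rw [this, lap_smul, lap_rankone, real_inner_self_eq_norm_sq]
    simp; ring

theorem HasLap.trans {w : E → ℝ} {x g c : E} {L : ℝ} (h : HasLap w (x + c) g L) :
    HasLap (fun y => w (y + c)) x g L := by
  obtain ⟨G, H, a, b, rfl, rfl⟩ := h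
  refine ⟨fun y => G (y + c), H, ?_, ?_, rfl, rfl⟩
  · have hc : Tendsto (fun y => y + c) (nhds x) (nhds (x + c)) :=
      (continuous_id.add continuous_const).continuousAt
    filter_upwards [hc.eventually a] with y h1
    rw [hasGradientAt_iff_hasFDerivAt] at *
    exact (hasFDerivAt_comp_add_right c).2 h1
  · exact (hasFDerivAt_comp_add_right c).2 b

/-- coordinate reflection -/
def reflC (j : Fin n) : E →L[ℝ] E :=
  ContinuousLinearMap.id ℝ E -
    (2 : ℝ) • (innerSL ℝ (EuclideanSpace.single j (1 : ℝ))).smulRight (EuclideanSpace.single j (1 : ℝ))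

theorem reflC_apply (j : Fin n) (y : E) :
    reflC j y = y - (2 * y j) • EuclideanSpace.single j (1 : ℝ) := by
  simp [reflC, EuclideanSpace.inner_single_left, smul_smul]

theorem refl_single (j i : Fin n) : reflC j (EuclideanSpace.single i (1 : ℝ)) =
    EuclideanSpace.single i (1 : ℝ) ∨
    reflC j (EuclideanSpace.single i (1 : ℝ)) = - EuclideanSpace.single i (1 : ℝ) := by
  by_cases h : i = j
  · right; subst h; rw [reflC_apply]; simp [two_smul]
  · left; rw [reflC_apply]; simp [Ne.symm h]

theorem refl_inner (j : Fin n) (y z : E) : ⟪reflC j y, z⟫ = ⟪y, reflC j z⟫ := by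
  simp only [reflC_apply, inner_sub_left, inner_sub_right, inner_smul_left, inner_smul_right,
    EuclideanSpace.inner_single_left, EuclideanSpace.inner_single_right]
  simp; ring

theorem norm_refl (j : Fin n) (y : E) : ‖reflC j y‖ = ‖y‖ := by
  have : reflC j (reflC j y) = y := by
    simp [reflC_apply]
    have : (2 * (y j - 2 * y j)) = - (2 * y j) := by ring
    rw [this]; simp
  rw [← sq_eq_sq₀ (norm_nonneg _) (norm_nonneg _), ← real_inner_self_eq_norm_sq,
    ← real_inner_self_eq_norm_sq, refl_inner, this]

theorem HasLap.reflX {w : E → ℝ} {x g c : E} {L : ℝ} (j : Fin n)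
    (h : HasLap w (reflC j x + c) g L) :
    HasLap (fun y => w (reflC j y + c)) x (reflC j g) L := by
  obtain ⟨G, H, a, b, rfl, rfl⟩ := h
  have hR : ∀ y, HasFDerivAt (fun y => reflC j y + c) (reflC j) y := fun y =>
    ((reflC j).hasFDerivAt).add_const c
  refine ⟨fun y => reflC j (G (reflC j y + c)),
    (reflC j).comp (H.comp (reflC j)), ?_, ?_, rfl, ?_⟩
  · filter_upwards [(hR x).continuousAt.eventually a] with y h1
    rw [hasGradientAt_iff_hasFDerivAt] at *
    have := h1.comp y (hR y)
    have e : (InnerProductSpace.toDual ℝ E) (reflC j (G (reflC j y + c))) =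
        ((InnerProductSpace.toDual ℝ E) (G (reflC j y + c))).comp (reflC j) := by
      ext z; simp [refl_inner]
    rw [e]
    exact this
  · exact (reflC j).hasFDerivAt.comp x (b.comp x (hR x))
  · unfold lap
    refine Finset.sum_congr rfl fun i _ => ?_
    simp only [ContinuousLinearMap.comp_apply, refl_inner]
    rcases refl_single j i with h | h <;> rw [h] <;> simp

theorem second_deriv_le {f f1 : ℝ → ℝ} {f2 : ℝ} (hm : IsLocalMax f 0)
    (h1 : ∀ᶠ s in nhds (0 : ℝ), HasDerivAt f (f1 s) s) (h2 : HasDerivAt f1 f2 0) : f2 ≤ 0 := by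
  by_contra hc
  push Not at hc
  have e : deriv f =ᶠ[nhds 0] f1 := h1.mono fun s hs => hs.deriv
  have h3 : deriv (deriv f) 0 = f2 := by rw [e.deriv_eq]; exact h2.deriv
  have hmin : IsLocalMin f 0 := isLocalMin_of_deriv_deriv_pos (by rw [h3]; exact hc)
    hm.deriv_eq_zero h1.self_of_nhds.continuousAt
  have hconst : f =ᶠ[nhds 0] fun _ => f 0 := by
    filter_upwards [hm, hmin] with s a b using le_antisymm a b
  have : deriv (deriv f) 0 = 0 := by
    rw [hconst.deriv.deriv_eq]; simp
  linarith

theorem HasLap.isLocalMax {w : E → ℝ} {x g : E} {L : ℝ} (h : HasLap w x g L)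
    (hm : IsLocalMax w x) : g = 0 ∧ L ≤ 0 := by
  obtain ⟨G, H, a, b, rfl, rfl⟩ := h
  constructor
  · have := hm.hasFDerivAt_eq_zero (hasGradientAt_iff_hasFDerivAt.1 a.self_of_nhds)
    simpa using this
  · refine Finset.sum_nonpos fun i _ => ?_
    set e : E := EuclideanSpace.single i (1 : ℝ)
    have hl : ∀ s : ℝ, HasDerivAt (fun s : ℝ => x + s • e) e s := fun s => by
      simpa using ((hasDerivAt_id s).smul_const e).const_add x
    have hc : Tendsto (fun s : ℝ => x + s • e) (nhds 0) (nhds x) := by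
      have := (hl 0).continuousAt
      simpa [ContinuousAt] using this
    refine second_deriv_le (f := fun s => w (x + s • e)) (f1 := fun s => ⟪G (x + s • e), e⟫) ?_ ?_ ?_
    · have := hc.eventually hm
      simpa [IsLocalMax, IsMaxFilter] using this
    · filter_upwards [hc.eventually a] with s hs
      rw [hasGradientAt_iff_hasFDerivAt] at hs
      have := hs.comp_hasDerivAt s (hl s)
      simp only [InnerProductSpace.toDual_apply_apply] at this
      exact this
    · have b' : HasFDerivAt G H (x + (0 : ℝ) • e) := by simpa using b
      have := (b'.comp_hasDerivAt (0 : ℝ) (hl 0)).inner ℝ (hasDerivAt_const (0 : ℝ) e)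
      simpa using this

theorem HasLap.isLocalMin {w : E → ℝ} {x g : E} {L : ℝ} (h : HasLap w x g L)
    (hm : IsLocalMin w x) : g = 0 ∧ 0 ≤ L := by
  have := h.neg.isLocalMax hm.neg
  constructor
  · simpa using this.1
  · linarith [this.2]

theorem HasLap.continuousAt {w : E → ℝ} {x g : E} {L : ℝ} (h : HasLap w x g L) :
    ContinuousAt w x := by
  obtain ⟨G, H, a, b, rfl, rfl⟩ := h
  exact (hasGradientAt_iff_hasFDerivAt.1 a.self_of_nhds).continuousAt

end HasLapLib

section Interp
variable {n : ℕ}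

local notation "E" => EuclideanSpace ℝ (Fin n)

/-- one-sided directional estimate -/
theorem interp_dir {w : E → ℝ} {g : E → E} {Lw : E → ℝ} {x : E} {ρ S N : ℝ} (hρ : 0 < ρ)
    (hw : ∀ y ∈ closedBall x ρ, HasLap w y (g y) (Lw y))
    (hS : ∀ y ∈ closedBall x ρ, |w y| ≤ S) (hN : ∀ y ∈ closedBall x ρ, |Lw y| ≤ N) (j : Fin n) :
    ⟪g x, EuclideanSpace.single j (1 : ℝ)⟫ ≤ n * S / ρ + N * ρ := by
  set e : E := EuclideanSpace.single j (1 : ℝ) with he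
  have hS0 : 0 ≤ S := (abs_nonneg _).trans (hS x (mem_closedBall_self hρ.le))
  have hN0 : 0 ≤ N := (abs_nonneg _).trans (hN x (mem_closedBall_self hρ.le))
  have hn : (1 : ℝ) ≤ n := by
    have : 0 < n := Fin.pos j
    exact_mod_cast this
  have hye : ∀ y : E, ⟪y, e⟫ = y j := fun y => by simp [he, EuclideanSpace.inner_single_right]
  have mem1 : ∀ y : E, ‖y‖ ≤ ρ → y + x ∈ closedBall x ρ := fun y hy => by simpa using hy
  have mem2 : ∀ y : E, ‖y‖ ≤ ρ → reflC j y + x ∈ closedBall x ρ := fun y hy => by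
    simpa [norm_refl] using hy
  have key : ∀ N', N < N' → ∀ y : E, ‖y‖ ≤ ρ → 0 ≤ ⟪y, e⟫ →
      (w (y + x) - w (reflC j y + x)) / 2 ≤
        S / ρ ^ 2 * (‖y‖ ^ 2 + n * ⟪y, e⟫ * (ρ - ⟪y, e⟫)) + N' / 2 * (⟪y, e⟫ * (ρ - ⟪y, e⟫)) := by
    intro N' hN' y0 hy0 hy0'
    set ψ : E → ℝ := fun y => S / ρ ^ 2 * (‖y‖ ^ 2 + n * ⟪y, e⟫ * (ρ - ⟪y, e⟫)) +
      N' / 2 * (⟪y, e⟫ * (ρ - ⟪y, e⟫)) with hψ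
    set f : E → ℝ := fun y => (w (y + x) - w (reflC j y + x)) / 2 - ψ y with hf
    have hfl : ∀ y : E, ‖y‖ ≤ ρ → ∃ gg, HasLap f y gg ((Lw (y + x) - Lw (reflC j y + x)) / 2 + N') := by
      intro y hy
      have h1 := (hw _ (mem1 y hy)).trans
      have h2 := (hw _ (mem2 y hy)).reflX
      have h3 := (h1.sub h2).const_mul (1 / 2)
      have h4 := HasLap.sq (0 : E) y
      have h5 := HasLap.lin e (0 : E) y
      have h6 := h5.comp (F := fun s => s * (ρ - s)) (F1 := fun s => ρ - 2 * s) (F2 := -2)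
        (Eventually.of_forall fun s => by
          have := (hasDerivAt_id s).mul ((hasDerivAt_id s).const_sub ρ)
          exact this.congr_deriv (by simp; ring))
        (by
          have := ((hasDerivAt_id (⟪y - 0, e⟫ : ℝ)).const_mul 2).const_sub ρ
          exact this.congr_deriv (by simp))
      have h7 := (h4.const_mul (S / ρ ^ 2)).add (h6.const_mul (S / ρ ^ 2 * n + N' / 2))
      refine ⟨_, (h3.sub h7).congr ?_ rfl ?_⟩
      · funext y
        simp only [hf, hψ, sub_zero]; ring
      · have : ‖e‖ = 1 := by simp [he]
        rw [this]; ring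
    set Q : Set E := closedBall 0 ρ ∩ {y | 0 ≤ ⟪y, e⟫} with hQ
    have hQc : IsCompact Q := (isCompact_closedBall _ _).inter_right
      (isClosed_le continuous_const (by fun_prop))
    have hfc : ContinuousOn f Q := fun y hy => by
      obtain ⟨gg, h⟩ := hfl y (by simpa using hy.1)
      exact h.continuousAt.continuousWithinAt
    obtain ⟨ys, hys, hmax⟩ := hQc.exists_isMaxOn ⟨y0, by simpa using hy0, hy0'⟩ hfc
    have hle : f y0 ≤ f ys := hmax ⟨by simpa using hy0, hy0'⟩
    suffices f ys ≤ 0 by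
      have h : f y0 ≤ 0 := hle.trans this
      simp only [hf, hψ] at h
      linarith
    by_contra hpos
    push Not at hpos
    have hysn : ‖ys‖ ≤ ρ := by simpa using hys.1
    have hys0 : 0 ≤ ⟪ys, e⟫ := hys.2
    have hysρ : ⟪ys, e⟫ ≤ ρ := by
      have := real_inner_le_norm ys e
      have h1 : ‖e‖ = 1 := by simp [he]
      rw [h1, mul_one] at this
      linarith
    have hNp : 0 < N' := by linarith
    have hprod : 0 ≤ ⟪ys, e⟫ * (ρ - ⟪ys, e⟫) := mul_nonneg hys0 (by linarith)
    have hb1 : ‖ys‖ < ρ := by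
      by_contra hc
      have heq : ‖ys‖ = ρ := le_antisymm hysn (not_lt.1 hc)
      have a1 := abs_le.1 (hS _ (mem1 ys hysn))
      have a2 := abs_le.1 (hS _ (mem2 ys hysn))
      have : S ≤ ψ ys := by
        simp only [hψ, heq]
        have : S / ρ ^ 2 * (ρ ^ 2 + n * ⟪ys, e⟫ * (ρ - ⟪ys, e⟫)) =
          S + S / ρ ^ 2 * n * (⟪ys, e⟫ * (ρ - ⟪ys, e⟫)) := by field_simp
        rw [this]
        have : 0 ≤ S / ρ ^ 2 * n * (⟪ys, e⟫ * (ρ - ⟪ys, e⟫)) := by positivity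
        have : 0 ≤ N' / 2 * (⟪ys, e⟫ * (ρ - ⟪ys, e⟫)) := by positivity
        linarith
      simp only [hf] at hpos
      linarith
    have hb2 : 0 < ⟪ys, e⟫ := by
      refine lt_of_le_of_ne hys0 fun hc => ?_
      have h0 : ys j = 0 := by rw [← hye, ← hc]
      have : reflC j ys = ys := by simp [reflC_apply, h0]
      simp only [hf, hψ, this, ← hc] at hpos
      have : 0 ≤ S / ρ ^ 2 * ‖ys‖ ^ 2 := by positivity
      simp at hpos
      linarith
    have hloc : IsLocalMax f ys := by
      have hn1 : ball (0 : E) ρ ∈ nhds ys := isOpen_ball.mem_nhds (by simpa using hb1)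
      have hn2 : {y : E | 0 < ⟪y, e⟫} ∈ nhds ys :=
        (isOpen_lt continuous_const (by fun_prop)).mem_nhds hb2
      filter_upwards [hn1, hn2] with y h1 h2
      exact hmax ⟨ball_subset_closedBall h1, le_of_lt h2⟩
    obtain ⟨gg, hl⟩ := hfl ys hysn
    have := (hl.isLocalMax hloc).2
    have a1 := abs_le.1 (hN _ (mem1 ys hysn))
    have a2 := abs_le.1 (hN _ (mem2 ys hysn))
    linarith
  -- now differentiate
  have hd : HasDerivAt (fun s : ℝ => (w (s • e + x) - w (reflC j (s • e) + x)) / 2) ⟪g x, e⟫ 0 := by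
    obtain ⟨G, H, a, b, hG, _⟩ := hw x (mem_closedBall_self hρ.le)
    have hx := hasGradientAt_iff_hasFDerivAt.1 a.self_of_nhds
    have l1 : HasDerivAt (fun s : ℝ => s • e + x) e 0 := by
      simpa using ((hasDerivAt_id (0 : ℝ)).smul_const e).add_const x
    have l2 : HasDerivAt (fun s : ℝ => reflC j (s • e) + x) (-e) 0 := by
      have : (fun s : ℝ => reflC j (s • e) + x) = fun s : ℝ => (s • (-e)) + x := by
        funext s
        rw [map_smul]
        congr 2
        rw [reflC_apply]; simp [he, two_smul]
      rw [this]
      simpa using ((hasDerivAt_id (0 : ℝ)).smul_const (-e)).add_const x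
    have hx1 : HasFDerivAt w ((InnerProductSpace.toDual ℝ E) (G x)) ((0 : ℝ) • e + x) := by
      simpa using hx
    have hx2 : HasFDerivAt w ((InnerProductSpace.toDual ℝ E) (G x)) (reflC j ((0 : ℝ) • e) + x) := by
      simpa using hx
    have := ((hx1.comp_hasDerivAt (0 : ℝ) l1).sub (hx2.comp_hasDerivAt (0 : ℝ) l2)).div_const 2
    exact this.congr_deriv (by simp [hG])
  have hee : ⟪e, e⟫ = 1 := by simp [he]
  have hne : ‖e‖ = 1 := by simp [he]
  refine le_of_forall_gt_imp_ge_of_dense fun c hc => ?_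
  have : ⟪g x, e⟫ ≤ n * S / ρ + (N + 2 * (c - (n * S / ρ + N * ρ)) / ρ) / 2 * ρ := by
    set N' := N + 2 * (c - (n * S / ρ + N * ρ)) / ρ with hN'
    have hN'1 : N < N' := by
      have : 0 < 2 * (c - (n * S / ρ + N * ρ)) / ρ := div_pos (by linarith) hρ
      linarith
    have hr : HasDerivAt (fun s : ℝ => S / ρ ^ 2 * (s ^ 2 + n * s * (ρ - s)) + N' / 2 * (s * (ρ - s)))
        (n * S / ρ + N' / 2 * ρ) 0 := by
      have h1 := (hasDerivAt_id (0 : ℝ)).mul ((hasDerivAt_id (0 : ℝ)).const_sub ρ)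
      have h2 := ((((hasDerivAt_id (0 : ℝ)).pow 2).add (h1.const_mul (n : ℝ))).const_mul (S / ρ ^ 2)).add
        (h1.const_mul (N' / 2))
      refine (h2.congr_of_eventuallyEq ?_).congr_deriv ?_
      · filter_upwards with s
        simp only [Pi.add_apply, Pi.mul_apply, Pi.pow_apply, id]; ring
      · simp
        field_simp
    have hdiff := hr.sub hd
    by_contra hlt
    push Not at hlt
    have hneg : n * S / ρ + N' / 2 * ρ - ⟪g x, e⟫ < 0 := by linarith
    have hslope := hdiff.tendsto_slope_zero_right
    have ev := hslope.eventually (gt_mem_nhds hneg)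
    have ev2 : ∀ᶠ s in nhdsWithin (0 : ℝ) (Ioi 0), s < ρ := by
      exact nhdsWithin_le_nhds (gt_mem_nhds hρ)
    obtain ⟨s, ⟨h1, h2⟩, h3⟩ := ((ev.and ev2).and self_mem_nhdsWithin).exists
    have h3 : 0 < s := h3
    have hk := key N' hN'1 (s • e) (by rw [norm_smul, hne]; simp [abs_of_pos h3, h2.le])
      (by rw [inner_smul_left, hee]; simp [h3.le])
    have e1 : ⟪s • e, e⟫ = s := by rw [inner_smul_left, hee]; simp
    have e2 : ‖s • e‖ = s := by rw [norm_smul, hne]; simp [abs_of_pos h3]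
    rw [e1, e2] at hk
    have : 0 ≤ s⁻¹ * (S / ρ ^ 2 * (s ^ 2 + n * s * (ρ - s)) + N' / 2 * (s * (ρ - s)) -
      (w (s • e + x) - w (reflC j (s • e) + x)) / 2) :=
      mul_nonneg (by positivity) (by linarith)
    simp at h1
    rw [map_smul] at this
    linarith
  have e2 : (N + 2 * (c - (n * S / ρ + N * ρ)) / ρ) / 2 * ρ = N * ρ / 2 + (c - (n * S / ρ + N * ρ)) := by
    field_simp
  rw [e2] at this
  have : 0 ≤ N * ρ := by positivity
  linarith

theorem interp {w : E → ℝ} {g : E → E} {Lw : E → ℝ} {x : E} {ρ S N : ℝ} (hρ : 0 < ρ)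
    (hw : ∀ y ∈ closedBall x ρ, HasLap w y (g y) (Lw y))
    (hS : ∀ y ∈ closedBall x ρ, |w y| ≤ S) (hN : ∀ y ∈ closedBall x ρ, |Lw y| ≤ N) :
    ‖g x‖ ≤ n * (n * S / ρ + N * ρ) := by
  have h1 : ∀ j : Fin n, |g x j| ≤ n * S / ρ + N * ρ := by
    intro j
    have a := interp_dir hρ hw hS hN j
    have b := interp_dir (w := fun y => - w y) (g := fun y => - g y) (Lw := fun y => - Lw y) hρ
      (fun y hy => (hw y hy).neg) (fun y hy => by rw [abs_neg]; exact hS y hy)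
      (fun y hy => by rw [abs_neg]; exact hN y hy) j
    rw [EuclideanSpace.inner_single_right] at a b
    simp at a b
    exact abs_le.2 ⟨by linarith, a⟩
  have h2 : g x = ∑ j, (g x j) • EuclideanSpace.single j (1 : ℝ) := by
    ext i; simp [Finset.sum_apply, Pi.single_apply]
  rw [h2]
  refine (norm_sum_le _ _).trans ?_
  refine (Finset.sum_le_card_nsmul _ _ (n * S / ρ + N * ρ) fun j _ => ?_).trans ?_
  · rw [norm_smul]; simpa using h1 j
  · simp [mul_add]
end Interp

theorem exists_small (c a ε : ℝ) (ha : 0 < a) (hε : 0 < ε) :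
    ∃ η > 0, ∀ r, 0 < r → r ≤ η → c * r ^ a ≤ ε := by
  have h : Tendsto (fun r : ℝ => c * r ^ a) (nhds 0) (nhds (c * (0 : ℝ) ^ a)) :=
    (Real.continuousAt_rpow_const 0 a (Or.inr ha.le)).tendsto.const_mul c
  rw [Real.zero_rpow ha.ne', mul_zero] at h
  obtain ⟨η, hη, h2⟩ := Metric.eventually_nhds_iff.1 (h.eventually (gt_mem_nhds hε))
  refine ⟨η / 2, by linarith, fun r h0 h1 => (h2 ?_).le⟩
  rw [Real.dist_eq, sub_zero, abs_of_pos h0]; linarith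

theorem rpow_sub_le {p a b m : ℝ} (hp : 2 < p) (ha : 0 ≤ a) (hb : 0 ≤ b) (ham : a ≤ m) :
    a ^ p - b ^ p ≤ p * m ^ (p - 1) * |a - b| := by
  have hm : 0 ≤ m := ha.trans ham
  by_cases h : a ≤ b
  · have : a ^ p ≤ b ^ p := Real.rpow_le_rpow ha h (by linarith)
    have : 0 ≤ p * m ^ (p - 1) * |a - b| := by positivity
    linarith
  · push Not at h
    have hapos : 0 < a := lt_of_le_of_lt hb h
    rw [abs_of_pos (by linarith)]
    have hB := one_add_mul_self_le_rpow_one_add (s := b / a - 1) (p := p)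
      (by have : 0 ≤ b / a := by positivity
          linarith) (by linarith)
    have e1 : 1 + (b / a - 1) = b / a := by ring
    rw [e1, Real.div_rpow hb ha] at hB
    have hap : 0 < a ^ p := by positivity
    rw [le_div_iff₀ hap] at hB
    have e2 : a ^ p = a ^ (p - 1) * a := by
      rw [← Real.rpow_add_one hapos.ne']; ring_nf
    have e3 : (1 + p * (b / a - 1)) * a ^ p = a ^ p + p * a ^ (p - 1) * (b - a) := by
      rw [add_mul, one_mul]
      nth_rewrite 2 [e2]
      field_simp
    rw [e3] at hB
    have h4 : a ^ (p - 1) ≤ m ^ (p - 1) := Real.rpow_le_rpow ha ham (by linarith)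
    have h5 : p * a ^ (p - 1) * (a - b) ≤ p * m ^ (p - 1) * (a - b) := by
      gcongr
    linarith

theorem int_bound {f f' : ℝ → ℝ} {d C β : ℝ} (hd : 0 ≤ d) (hβ0 : 0 < β) (hβ : β < 1)
    (hc : ContinuousOn f (Icc 0 d)) (hf : ∀ s ∈ Ioo 0 d, HasDerivAt f (f' s) s)
    (hb : ∀ s ∈ Ioo 0 d, f' s ≤ C * s ^ (-β)) : f d - f 0 ≤ C / (1 - β) * d ^ (1 - β) := by
  have hm : MonotoneOn (fun s => C / (1 - β) * s ^ (1 - β) - f s) (Icc 0 d) := by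
    have hD : ∀ s ∈ Ioo 0 d, HasDerivAt (fun s => C / (1 - β) * s ^ (1 - β) - f s)
        (C * s ^ (-β) - f' s) s := fun s hs => by
      have h1 := (Real.hasDerivAt_rpow_const (x := s) (p := 1 - β) (Or.inl hs.1.ne')).const_mul
        (C / (1 - β))
      refine (h1.sub (hf s hs)).congr_deriv ?_
      have : (1 : ℝ) - β - 1 = -β := by ring
      rw [this]
      have : (1 : ℝ) - β ≠ 0 := by linarith
      field_simp
    refine monotoneOn_of_deriv_nonneg (convex_Icc _ _) ?_ ?_ ?_
    · refine ContinuousOn.sub (ContinuousOn.mul continuousOn_const ?_) hc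
      exact (Real.continuous_rpow_const (by linarith)).continuousOn
    · rw [interior_Icc]
      exact fun s hs => (hD s hs).differentiableAt.differentiableWithinAt
    · rw [interior_Icc]
      intro s hs
      rw [(hD s hs).deriv]
      linarith [hb s hs]
  have := hm (left_mem_Icc.2 hd) (right_mem_Icc.2 hd) hd
  simp only [Real.zero_rpow (show (1 : ℝ) - β ≠ 0 by linarith)] at this
  linarith

/-- Geometric facts on the domain. -/
structure Geo {n : ℕ} (Ω : Set (EuclideanSpace ℝ (Fin n))) (δ : EuclideanSpace ℝ (Fin n) → ℝ)
    (K δ₁ : ℝ) : Prop where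
  isOpen : IsOpen Ω
  cpt : IsCompact (closure Ω)
  hK : 0 < K
  hδ₁ : 0 < δ₁
  lip : ∀ x y, δ x ≤ δ y + ‖x - y‖
  zero : ∀ x ∈ frontier Ω, δ x = 0
  pos : ∀ x ∈ Ω, 0 < δ x
  sub : ∀ x ∈ Ω, ∀ y, ‖y - x‖ < δ x → y ∈ Ω
  quad : ∀ x ∈ Ω, δ x < δ₁ → ∃ ν : EuclideanSpace ℝ (Fin n), ‖ν‖ = 1 ∧
    ∀ y ∈ closure Ω, |δ y - δ x - ⟪y - x, ν⟫| ≤ K * ‖y - x‖ ^ 2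
  nrm : ∀ b ∈ frontier Ω, ∃ ν : EuclideanSpace ℝ (Fin n), ‖ν‖ = 1 ∧
    ∀ s, 0 < s → s < δ₁ → b + s • ν ∈ Ω ∧ δ (b + s • ν) = s
  proj : ∀ x ∈ Ω, δ x < δ₁ → ∃ b ∈ frontier Ω, ∃ ν : EuclideanSpace ℝ (Fin n), ‖ν‖ = 1 ∧
    x = b + δ x • ν ∧ ∀ s, 0 < s → s < δ₁ → b + s • ν ∈ Ω ∧ δ (b + s • ν) = s

/-- Approximate elliptic solutions. -/
structure Sol {n : ℕ} (Ω : Set (EuclideanSpace ℝ (Fin n))) (δ : EuclideanSpace ℝ (Fin n) → ℝ)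
    (p β M C : ℝ) (v : EuclideanSpace ℝ (Fin n) → ℝ)
    (g : EuclideanSpace ℝ (Fin n) → EuclideanSpace ℝ (Fin n))
    (Lv : EuclideanSpace ℝ (Fin n) → ℝ) : Prop where
  cont : ContinuousOn v (closure Ω)
  zero : ∀ x ∈ frontier Ω, v x = 0
  hlap : ∀ x ∈ Ω, HasLap v x (g x) (Lv x)
  eqn : ∀ x ∈ Ω, |Lv x + ‖g x‖ ^ p| ≤ M
  gb : ∀ x ∈ Ω, ‖g x‖ ≤ C * δ x ^ (-β)

section Flat
variable {n : ℕ}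

local notation "E" => EuclideanSpace ℝ (Fin n)

theorem HasLap.hasFDerivAt {w : E → ℝ} {x g : E} {L : ℝ} (h : HasLap w x g L) :
    HasFDerivAt w ((InnerProductSpace.toDual ℝ E) g) x := by
  obtain ⟨G, H, a, b, rfl, rfl⟩ := h
  exact hasGradientAt_iff_hasFDerivAt.1 a.self_of_nhds

variable {Ω : Set (EuclideanSpace ℝ (Fin n))} {δ : EuclideanSpace ℝ (Fin n) → ℝ} {K δ₁ p β M C : ℝ}

theorem Geo.mem_cl (hg : Geo Ω δ K δ₁) {x : E} (hx : x ∈ closure Ω) : x ∈ Ω ∨ x ∈ frontier Ω := by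
  by_cases h : x ∈ Ω
  · exact Or.inl h
  · right
    rw [frontier, hg.isOpen.interior_eq]
    exact ⟨hx, h⟩

theorem Geo.mem_of_pos (hg : Geo Ω δ K δ₁) {x : E} (hx : x ∈ closure Ω) (h : 0 < δ x) : x ∈ Ω := by
  rcases hg.mem_cl hx with h1 | h1
  · exact h1
  · rw [hg.zero x h1] at h; exact absurd h (lt_irrefl _)

theorem Geo.nonneg (hg : Geo Ω δ K δ₁) {x : E} (hx : x ∈ closure Ω) : 0 ≤ δ x := by
  rcases hg.mem_cl hx with h1 | h1
  · exact (hg.pos x h1).le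
  · rw [hg.zero x h1]

theorem Geo.cont (hg : Geo Ω δ K δ₁) : Continuous δ := by
  have : LipschitzWith 1 δ := LipschitzWith.of_le_add fun x y => by
    rw [dist_eq_norm]; exact hg.lip x y
  exact this.continuous

theorem Sol.crude {v : E → ℝ} {g : E → E} {Lv : E → ℝ} (hg : Geo Ω δ K δ₁) (hβ0 : 0 < β)
    (hβ : β < 1) (hs : Sol Ω δ p β M C v g Lv) {x : E}
    (hx : x ∈ closure Ω) (hd : δ x < δ₁) : |v x| ≤ C / (1 - β) * δ x ^ (1 - β) := by
  rcases hg.mem_cl hx with h1 | h1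
  swap
  · rw [hs.zero x h1, hg.zero x h1, Real.zero_rpow (by linarith)]; simp
  obtain ⟨b, hb, ν, hν, hxb, hray⟩ := hg.proj x h1 hd
  have hdp := hg.pos x h1
  set d := δ x with hdd
  set f : ℝ → ℝ := fun s => v (b + s • ν) with hf
  have hl : ∀ s : ℝ, HasDerivAt (fun s : ℝ => b + s • ν) ν s := fun s => by
    simpa using ((hasDerivAt_id s).smul_const ν).const_add b
  have hfd : ∀ s ∈ Ioo 0 d, HasDerivAt f ⟪g (b + s • ν), ν⟫ s := fun s hs' => by
    have h2 := hray s hs'.1 (hs'.2.trans hd)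
    have := (hs.hlap _ h2.1).hasFDerivAt.comp_hasDerivAt s (hl s)
    simp only [InnerProductSpace.toDual_apply_apply] at this
    exact this
  have hfc : ContinuousOn f (Icc 0 d) := by
    refine hs.cont.comp (by fun_prop) fun s hs' => ?_
    rcases eq_or_lt_of_le hs'.1 with h | h
    · rw [← h]; simpa using frontier_subset_closure hb
    · exact subset_closure (hray s h (lt_of_le_of_lt hs'.2 hd)).1
  have hbd : ∀ s ∈ Ioo 0 d, |⟪g (b + s • ν), ν⟫| ≤ C * s ^ (-β) := fun s hs' => by
    have h2 := hray s hs'.1 (hs'.2.trans hd)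
    have h3 := hs.gb _ h2.1
    rw [h2.2] at h3
    have h4 := abs_real_inner_le_norm (g (b + s • ν)) ν
    rw [hν, mul_one] at h4
    exact h4.trans h3
  have r1 := int_bound hdp.le hβ0 hβ hfc hfd fun s hs' => (abs_le.1 (hbd s hs')).2
  have r2 := int_bound (f := fun s => - f s) (C := C) hdp.le hβ0 hβ hfc.neg
    (fun s hs' => (hfd s hs').neg) fun s hs' => by linarith [(abs_le.1 (hbd s hs')).1]
  have f0 : f 0 = 0 := by simp [hf, hs.zero b hb]
  have f1 : f d = v x := by simp only [hf]; rw [← hxb]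
  rw [f0, f1] at r1 r2
  exact abs_le.2 ⟨by linarith, by linarith⟩

end Flat

section Flat2
variable {n : ℕ}

local notation "E" => EuclideanSpace ℝ (Fin n)

variable {Ω : Set (EuclideanSpace ℝ (Fin n))} {δ : EuclideanSpace ℝ (Fin n) → ℝ} {K δ₁ p β M C : ℝ}

/-- laplacian and gradient of the penalisation. -/
theorem pen_hasLap (ν x₀ z : E) (hν : ‖ν‖ = 1) (ρ σ κ r R A L : ℝ) (hr : 0 < r) :
    HasLap (fun z : E => ρ * (σ * (1 - Real.exp (κ * (⟪z - x₀, ν⟫ / r - R))) + A / L ^ 2 * ‖z - x₀‖ ^ 2))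
      z ((-(ρ * (σ * (κ / r) * Real.exp (κ * (⟪z - x₀, ν⟫ / r - R))))) • ν
          + (ρ * (A / L ^ 2) * 2) • (z - x₀))
      (ρ * (-(σ * (κ / r) ^ 2 * Real.exp (κ * (⟪z - x₀, ν⟫ / r - R)))) + ρ * (A / L ^ 2 * (2 * n))) := by
  have hF : ∀ τ : ℝ, HasDerivAt (fun τ : ℝ => Real.exp (κ * (τ / r - R)))
      (Real.exp (κ * (τ / r - R)) * (κ / r)) τ := fun τ => by
    have := (((hasDerivAt_id τ).div_const r).sub_const R).const_mul κ
    refine this.exp.congr_deriv ?_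
    simp; ring_nf
  have h1 := (HasLap.lin ν x₀ z).comp (Filter.Eventually.of_forall fun τ => hF τ)
    ((hF _).mul_const (κ / r))
  have h2 := ((((HasLap.const 1 z).sub h1).const_mul σ).add
    ((HasLap.sq x₀ z).const_mul (A / L ^ 2))).const_mul ρ
  refine h2.congr rfl ?_ ?_
  · module
  · rw [hν]; ring

set_option maxHeartbeats 1000000 in
theorem flat_core {v : E → ℝ} {g : E → E} {Lv : E → ℝ} (hg : Geo Ω δ K δ₁) (hp : 2 < p)
    (hβ0 : 0 < β) (hβ : β < 1) (hβp : β * (p - 1) = 1) (hM : 0 ≤ M) (hC : 0 < C)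
    (hs : Sol Ω δ p β M C v g Lv) {ε η R A κ Λ Λ' r : ℝ} (hε : 0 < ε) (hη0 : 0 < η) (hη : η ≤ 1 / 2)
    (hη2 : 2 * (C / (1 - β)) * (2 * η) ^ (1 - β) ≤ ε / 4)
    (hR1 : 1 ≤ R) (hΛ0 : 0 < Λ) (hRΛ : 2 * Λ ≤ R) (hR2 : C * (R / 2) ^ (-β) * Λ ≤ ε / 4)
    (hA : A = 2 * (C / (1 - β)) * (R + 2) ^ (1 - β))
    (hκ : κ = p * C ^ (p - 1) / η + 1) (hΛ' : 1 ≤ Λ')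
    (hΛ'2 : (2 * n * A + 2 * A * (p * C ^ (p - 1) / η)) / Λ' ≤ ε / 4 * κ * Real.exp (-(κ * (R + 2))) / 2)
    (hr : 0 < r) (hr1 : 3 * K * (Λ + Λ') ^ 2 * r ≤ η)
    (hr2 : 2 * M * r ^ (1 + β) ≤ ε / 4 * κ * Real.exp (-(κ * (R + 2))) / 4)
    (hr3 : (R + 3) * r < δ₁) {x y : E} (hx : x ∈ Ω) (hy : y ∈ Ω) (hxr : δ x = r) (hyr : δ y = r)
    (hxy : ‖y - x‖ ≤ Λ * r) : v y - v x ≤ ε * r ^ (1 - β) := by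
  by_contra hcon
  push Not at hcon
  obtain ⟨ν, hν, hq⟩ := hg.quad x hx (by rw [hxr]; linarith [mul_pos (by linarith : 0 < R) hr])
  have hK := hg.hK
  set h := y - x with hh
  have hxh : x + h = y := by rw [hh]; abel
  set ρ := r ^ (1 - β) with hρ
  have hρ0 : 0 < ρ := Real.rpow_pos_of_pos hr _
  have hA0 : 0 < A := by
    rw [hA]
    have : 0 < 1 - β := by linarith
    positivity
  have hκ0 : 0 < κ := by rw [hκ]; positivity
  set pen : E → ℝ := fun z : E => ρ * (ε / 4 * (1 - Real.exp (κ * (⟪z - x, ν⟫ / r - R))) + A / (Λ' * r) ^ 2 * ‖z - x‖ ^ 2) with hpen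
  set W : E → ℝ := fun z => v (z + h) - v z - pen z with hW
  set S : Set E := {z | z ∈ closure Ω ∧ z + h ∈ closure Ω ∧ ‖z - x‖ ≤ Λ' * r ∧ ⟪z - x, ν⟫ ≤ R * r} with hS
  have hSc : IsCompact S := by
    refine hg.cpt.of_isClosed_subset ?_ fun z hz => hz.1
    refine isClosed_closure.inter ?_
    refine (isClosed_closure.preimage (by fun_prop : Continuous fun z : E => z + h)).inter ?_
    exact (isClosed_le (by fun_prop : Continuous fun z : E => ‖z - x‖) continuous_const).inter
      (isClosed_le (by fun_prop : Continuous fun z : E => ⟪z - x, ν⟫) continuous_const)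
  have hxS : x ∈ S := ⟨subset_closure hx, by rw [hxh]; exact subset_closure hy, by simp; positivity,
    by simp; positivity⟩
  have hpc : Continuous pen := by rw [hpen]; fun_prop
  have hWc : ContinuousOn W S := by
    refine ContinuousOn.sub (ContinuousOn.sub ?_ (hs.cont.mono fun z hz => hz.1)) hpc.continuousOn
    exact hs.cont.comp (by fun_prop) fun z hz => hz.2.1
  obtain ⟨z, hz, hmax⟩ := hSc.exists_isMaxOn ⟨x, hxS⟩ hWc
  have hWx := hmax hxS
  simp only [hW, hpen, mem_ofPred_eq, hxh] at hWx
  simp only [sub_self, norm_zero, inner_zero_left, zero_div] at hWx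
  have hzz := hz
  obtain ⟨hz1, hz2, hz3, hz4⟩ := hz
  set s := ⟪z - x, ν⟫ with hsdef
  have hsr : s / r ≤ R := by rw [div_le_iff₀ hr]; exact hz4
  have hE1 : Real.exp (κ * (s / r - R)) ≤ 1 := by
    rw [Real.exp_le_one_iff]; exact mul_nonpos_of_nonneg_of_nonpos hκ0.le (by linarith)
  have hE0 : 0 ≤ Real.exp (κ * (0 - R)) := (Real.exp_pos _).le
  have hLr : 0 < Λ' * r := by positivity
  set Q := A / (Λ' * r) ^ 2 * ‖z - x‖ ^ 2 with hQ
  have hQ0 : 0 ≤ Q := by positivity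
  have hmain : 3 / 4 * ε * ρ + ρ * Q < v (z + h) - v z := by
    have a1 : 0 ≤ ρ * (ε / 4 * (1 - Real.exp (κ * (s / r - R)))) := by
      have : 0 ≤ 1 - Real.exp (κ * (s / r - R)) := by linarith
      positivity
    have a2 : 0 ≤ ρ * (ε / 4 * Real.exp (κ * (0 - R))) := by positivity
    linarith
  have hpow : ∀ c : ℝ, 0 ≤ c → (c * r) ^ (1 - β) = c ^ (1 - β) * ρ := fun c hc => by
    rw [Real.mul_rpow hc hr.le]
  -- geometry
  have nz : ‖z + h - x‖ ≤ (Λ + Λ') * r := by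
    have : z + h - x = (z - x) + h := by abel
    rw [this]
    refine (norm_add_le _ _).trans ?_
    linarith
  have q1 := hq z hz1
  have q2 := hq (z + h) hz2
  have q3 := hq y (subset_closure hy)
  rw [← hh, hyr, hxr] at q3
  rw [hxr] at q1 q2
  have e2 : ⟪z + h - x, ν⟫ = s + ⟪h, ν⟫ := by
    rw [hsdef, ← inner_add_left]; congr 1; abel
  rw [e2] at q2
  have sqb : ∀ t : ℝ, 0 ≤ t → t ≤ (Λ + Λ') * r → K * t ^ 2 ≤ η * r / 3 := fun t h0 h1 => by
    have : t ^ 2 ≤ ((Λ + Λ') * r) ^ 2 := by gcongr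
    have h2 : K * t ^ 2 ≤ K * ((Λ + Λ') * r) ^ 2 := by gcongr
    have h3 : 3 * (K * ((Λ + Λ') * r) ^ 2) = (3 * K * (Λ + Λ') ^ 2 * r) * r := by ring
    have h4 : (3 * K * (Λ + Λ') ^ 2 * r) * r ≤ η * r := by gcongr
    linarith
  have k1 := sqb ‖z - x‖ (norm_nonneg _) (by linarith [mul_pos hΛ0 hr])
  have k2 := sqb ‖z + h - x‖ (norm_nonneg _) nz
  have k3 := sqb ‖h‖ (norm_nonneg _) (by linarith [hLr])
  have Q1 := abs_le.1 (q1.trans k1)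
  have Q2 := abs_le.1 (q2.trans k2)
  have Q3 := abs_le.1 (q3.trans k3)
  have hηr : η * r ≤ r / 2 := by linarith [mul_le_mul_of_nonneg_right hη hr.le]
  have hηr0 : 0 < η * r := by positivity
  have hup1 : δ z ≤ (R + 2) * r := by linarith [Q1.2]
  have hup2 : δ (z + h) ≤ (R + 2) * r := by linarith [Q2.2, Q3.1]
  have hlt1 : δ z < δ₁ := by linarith
  have hlt2 : δ (z + h) < δ₁ := by linarith
  have c1 := hs.crude hg hβ0 hβ hz1 hlt1
  have c2 := hs.crude hg hβ0 hβ hz2 hlt2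
  have hC1 : 0 < C / (1 - β) := div_pos hC (by linarith)
  have hbnd : ∀ c : ℝ, 0 ≤ c → δ z ≤ c * r → δ (z + h) ≤ c * r →
      v (z + h) - v z ≤ 2 * (C / (1 - β)) * c ^ (1 - β) * ρ := fun c hc h1 h2 => by
    have a1 : δ z ^ (1 - β) ≤ (c * r) ^ (1 - β) :=
      Real.rpow_le_rpow (hg.nonneg hz1) h1 (by linarith)
    have a2 : δ (z + h) ^ (1 - β) ≤ (c * r) ^ (1 - β) :=
      Real.rpow_le_rpow (hg.nonneg hz2) h2 (by linarith)
    rw [hpow c hc] at a1 a2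
    have a3 := mul_le_mul_of_nonneg_left a1 hC1.le
    have a4 := mul_le_mul_of_nonneg_left a2 hC1.le
    have a5 := (abs_le.1 c1).1
    have a6 := (abs_le.1 c2).2
    linarith
  have hρQ : 0 ≤ ρ * Q := by positivity
  have hερ : 0 < ε * ρ := by positivity
  -- case 1
  by_cases hc1 : δ z ≤ η * r ∨ δ (z + h) ≤ η * r
  · have h1 : δ z ≤ 2 * η * r ∧ δ (z + h) ≤ 2 * η * r := by
      rcases hc1 with h1 | h1 <;> constructor <;> linarith [Q1.1, Q1.2, Q2.1, Q2.2, Q3.1, Q3.2]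
    have h2 := hbnd (2 * η) (by linarith) h1.1 h1.2
    have h3 := mul_le_mul_of_nonneg_right hη2 hρ0.le
    linarith
  push Not at hc1
  obtain ⟨d1, d2⟩ := hc1
  have hzΩ := hg.mem_of_pos hz1 (hηr0.trans d1)
  have hzhΩ := hg.mem_of_pos hz2 (hηr0.trans d2)
  -- case 2
  rcases eq_or_lt_of_le hz4 with hc2 | hc2
  · have hRr : R * r ≤ δ z := by linarith [Q1.1]
    have hseg : ∀ w ∈ segment ℝ z (z + h), w ∈ Ω ∧ R * r / 2 ≤ δ w := by
      intro w hw
      have hwn : ‖w - z‖ ≤ Λ * r := by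
        have h1 : w ∈ closedBall z (Λ * r) :=
          (convex_closedBall z (Λ * r)).segment_subset (mem_closedBall_self (by positivity))
            (by rw [mem_closedBall, dist_eq_norm]; simpa using hxy) hw
        rwa [mem_closedBall, dist_eq_norm] at h1
      have hwn2 : ‖w - z‖ ≤ R * r / 2 := by linarith [mul_le_mul_of_nonneg_right hRΛ hr.le]
      have hRp : 0 < R * r := by positivity
      refine ⟨hg.sub z hzΩ w (by linarith), ?_⟩
      have := hg.lip z w
      rw [norm_sub_rev] at this
      linarith
    have hmv := (convex_segment z (z + h)).norm_image_sub_le_of_norm_hasFDerivWithin_le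
      (f := v) (f' := fun w => (InnerProductSpace.toDual ℝ E) (g w)) (C := C * (R * r / 2) ^ (-β))
      (x := z) (y := z + h)
      (fun w hw => (hs.hlap w (hseg w hw).1).hasFDerivAt.hasFDerivWithinAt) (fun w hw => by
        rw [LinearIsometryEquiv.norm_map]
        refine (hs.gb w (hseg w hw).1).trans ?_
        have : δ w ^ (-β) ≤ (R * r / 2) ^ (-β) :=
          Real.rpow_le_rpow_of_nonpos (by positivity) (hseg w hw).2 (by linarith)
        gcongr) (left_mem_segment _ _ _) (right_mem_segment _ _ _)
    rw [add_sub_cancel_left, Real.norm_eq_abs] at hmv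
    have e3 : (R * r / 2) ^ (-β) = (R / 2) ^ (-β) * r ^ (-β) := by
      rw [← Real.mul_rpow (by positivity) hr.le]; congr 1; ring
    have e4 : r ^ (-β) * r = ρ := by
      rw [← Real.rpow_add_one hr.ne', hρ]; congr 1; ring
    have h5 : C * (R * r / 2) ^ (-β) * ‖h‖ ≤ ε / 4 * ρ := by
      calc C * (R * r / 2) ^ (-β) * ‖h‖ ≤ C * (R * r / 2) ^ (-β) * (Λ * r) := by gcongr
        _ = C * (R / 2) ^ (-β) * Λ * ρ := by rw [e3, ← e4]; ring
        _ ≤ _ := by gcongr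
    have := (abs_le.1 (hmv.trans h5)).2
    linarith
  -- case 3
  rcases eq_or_lt_of_le hz3 with hc3 | hc3
  · have hQA : Q = A := by
      rw [hQ, hc3]; field_simp
    have h2 := hbnd (R + 2) (by linarith) hup1 hup2
    rw [← hA] at h2
    rw [hQA] at hmain
    linarith
  -- case 4
  have hloc : IsLocalMax W z := by
    refine hmax.isLocalMax ?_
    have i1 : ∀ᶠ w in nhds z, w ∈ Ω := hg.isOpen.mem_nhds hzΩ
    have i2 : ∀ᶠ w in nhds z, w + h ∈ Ω :=
      (continuous_id.add continuous_const).continuousAt.eventually (hg.isOpen.mem_nhds hzhΩ)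
    have i3 : ∀ᶠ w in nhds z, ‖w - x‖ < Λ' * r :=
      (by fun_prop : Continuous fun w : E => ‖w - x‖).continuousAt.eventually (gt_mem_nhds hc3)
    have i4 : ∀ᶠ w in nhds z, ⟪w - x, ν⟫ < R * r :=
      (by fun_prop : Continuous fun w : E => ⟪w - x, ν⟫).continuousAt.eventually (gt_mem_nhds hc2)
    filter_upwards [i1, i2, i3, i4] with w w1 w2 w3 w4
    exact ⟨subset_closure w1, subset_closure w2, w3.le, w4.le⟩
  have hWL := (((hs.hlap _ hzhΩ).trans).sub (hs.hlap _ hzΩ)).sub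
    (pen_hasLap ν x z hν ρ (ε / 4) κ r R A (Λ' * r) hr)
  obtain ⟨hgrad, hlapl⟩ := hWL.isLocalMax hloc
  rw [← hsdef] at hgrad hlapl
  set X := Real.exp (κ * (s / r - R)) with hX
  have hXpos : 0 < X := Real.exp_pos _
  have eq1 := (abs_le.1 (hs.eqn _ hzhΩ)).1
  have eq2 := (abs_le.1 (hs.eqn _ hzΩ)).2
  have gb1 : ‖g (z + h)‖ ≤ C * (η * r) ^ (-β) := (hs.gb _ hzhΩ).trans (by
    have := Real.rpow_le_rpow_of_nonpos (z := -β) hηr0 d2.le (by linarith)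
    gcongr)
  have hrp := rpow_sub_le hp (norm_nonneg (g (z + h))) (norm_nonneg (g z)) gb1
  have em : (C * (η * r) ^ (-β)) ^ (p - 1) = C ^ (p - 1) / (η * r) := by
    rw [Real.mul_rpow hC.le (by positivity), ← Real.rpow_mul hηr0.le, neg_mul, hβp, Real.rpow_neg_one]
    rfl
  rw [em] at hrp
  have hdiff : |‖g (z + h)‖ - ‖g z‖| ≤ ρ * (ε / 4 * (κ / r) * X) + ρ * (A / (Λ' * r) ^ 2) * 2 * (Λ' * r) := by
    refine (abs_norm_sub_norm_le _ _).trans ?_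
    rw [sub_eq_zero.1 hgrad]
    refine (norm_add_le _ _).trans ?_
    rw [norm_smul, norm_smul, hν, norm_neg, Real.norm_of_nonneg (by positivity), Real.norm_of_nonneg (by positivity)]
    rw [mul_one]
    gcongr
  have hfin : p * (C ^ (p - 1) / (η * r)) * |‖g (z + h)‖ - ‖g z‖| ≤ p * (C ^ (p - 1) / (η * r)) *
      (ρ * (ε / 4 * (κ / r) * X) + ρ * (A / (Λ' * r) ^ 2) * 2 * (Λ' * r)) := by
    gcongr
  set B := p * C ^ (p - 1) / η with hB
  have eB : p * (C ^ (p - 1) / (η * r)) = B / r := by rw [hB]; field_simp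
  rw [eB] at hfin hrp
  have key : ρ * (ε / 4 * (κ / r) ^ 2 * X) ≤ 2 * M + B / r *
      (ρ * (ε / 4 * (κ / r) * X) + ρ * (A / (Λ' * r) ^ 2) * 2 * (Λ' * r)) + ρ * (A / (Λ' * r) ^ 2 * (2 * n)) := by
    linarith
  have er : r ^ (1 + β) * ρ = r ^ 2 := by
    rw [hρ, ← Real.rpow_add hr]
    have : 1 + β + (1 - β) = (2 : ℕ) := by push_cast; ring
    rw [this, Real.rpow_natCast]
  have hrb : 0 < r ^ (1 + β) := Real.rpow_pos_of_pos hr _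
  have key2 := mul_le_mul_of_nonneg_left key hrb.le
  have l1 : r ^ (1 + β) * (ρ * (ε / 4 * (κ / r) ^ 2 * X)) = ε / 4 * κ ^ 2 * X := by
    rw [← mul_assoc, er]; field_simp
  have l2 : r ^ (1 + β) * (2 * M + B / r *
      (ρ * (ε / 4 * (κ / r) * X) + ρ * (A / (Λ' * r) ^ 2) * 2 * (Λ' * r)) + ρ * (A / (Λ' * r) ^ 2 * (2 * n)))
      = 2 * M * r ^ (1 + β) + B * (ε / 4 * κ * X + 2 * A / Λ') + 2 * n * A / Λ' ^ 2 := by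
    have : r ^ (1 + β) * (2 * M + B / r *
      (ρ * (ε / 4 * (κ / r) * X) + ρ * (A / (Λ' * r) ^ 2) * 2 * (Λ' * r)) + ρ * (A / (Λ' * r) ^ 2 * (2 * n)))
      = 2 * M * r ^ (1 + β) + (r ^ (1 + β) * ρ) * (B / r *
      ((ε / 4 * (κ / r) * X) + (A / (Λ' * r) ^ 2) * 2 * (Λ' * r)) + (A / (Λ' * r) ^ 2 * (2 * n))) := by ring
    rw [this, er]
    field_simp
    ring
  rw [l1, l2] at key2
  have hκB : κ = B + 1 := hκ
  have hXlow : Real.exp (-(κ * (R + 2))) ≤ X := by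
    rw [hX, Real.exp_le_exp]
    have : -2 ≤ s / r := by
      rw [le_div_iff₀ hr]; linarith [Q1.2]
    have h9 := mul_le_mul_of_nonneg_left this hκ0.le
    linarith
  have f1 : 2 * n * A / Λ' ^ 2 ≤ 2 * n * A / Λ' := by
    gcongr
    exact le_self_pow₀ hΛ' two_ne_zero
  have f2 : (2 * n * A + 2 * A * B) / Λ' = 2 * n * A / Λ' + B * (2 * A / Λ') := by
    field_simp
  rw [f2] at hΛ'2
  have f3 : ε / 4 * κ ^ 2 * X = B * (ε / 4 * κ * X) + ε / 4 * κ * X := by rw [hκB]; ring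
  have f4 : ε / 4 * κ * Real.exp (-(κ * (R + 2))) ≤ ε / 4 * κ * X := by gcongr
  have f5 : 0 < ε / 4 * κ * Real.exp (-(κ * (R + 2))) := by positivity
  linarith

theorem flat (hg : Geo Ω δ K δ₁) (hp : 2 < p)
    (hβ0 : 0 < β) (hβ : β < 1) (hβp : β * (p - 1) = 1) (hM : 0 ≤ M) (hC : 0 < C)
    {ε Λ : ℝ} (hε : 0 < ε) (hΛ : 0 < Λ) :
    ∃ r₀ > 0, ∀ v g Lv, Sol Ω δ p β M C v g Lv → ∀ x ∈ Ω, ∀ y ∈ Ω, δ x < r₀ → δ x = δ y →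
      ‖y - x‖ ≤ Λ * δ x → v y - v x ≤ ε * δ x ^ (1 - β) := by
  obtain ⟨η', hη'0, hη'⟩ := exists_small (2 * (C / (1 - β))) (1 - β) (ε / 4) (by linarith) (by linarith)
  set η := min (1 / 2) (η' / 2) with hη
  have hη0 : 0 < η := by positivity
  obtain ⟨ζ, hζ0, hζ⟩ := exists_small (C * Λ) β (ε / 4) hβ0 (by linarith)
  set R := max 1 (max (2 * Λ) (2 / ζ)) with hR
  have hR1 : 1 ≤ R := le_max_left _ _
  have hR2 : 2 * Λ ≤ R := (le_max_left _ _).trans (le_max_right _ _)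
  have hR3 : 2 / ζ ≤ R := (le_max_right _ _).trans (le_max_right _ _)
  set A := 2 * (C / (1 - β)) * (R + 2) ^ (1 - β) with hA
  set κ := p * C ^ (p - 1) / η + 1 with hκ
  have hκ0 : 0 < κ := by positivity
  set m := ε / 4 * κ * Real.exp (-(κ * (R + 2))) with hm
  have hm0 : 0 < m := by positivity
  set Λ' := max 1 ((2 * n * A + 2 * A * (p * C ^ (p - 1) / η)) / (m / 2)) with hΛ'
  have hΛ1 : 1 ≤ Λ' := le_max_left _ _
  obtain ⟨r1, hr10, hr1⟩ := exists_small (2 * M) (1 + β) (m / 4) (by linarith) (by linarith)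
  have hK := hg.hK
  have hδ₁ := hg.hδ₁
  refine ⟨min r1 (min (η / (3 * K * (Λ + Λ') ^ 2)) (δ₁ / (R + 3))), by positivity, ?_⟩
  intro v g Lv hs x hx y hy hr hxy hΛx
  have hr0 := hg.pos x hx
  have b1 := hr.trans_le (min_le_left _ _)
  have b2 := hr.trans_le ((min_le_right _ _).trans (min_le_left _ _))
  have b3 := hr.trans_le ((min_le_right _ _).trans (min_le_right _ _))
  refine flat_core hg hp hβ0 hβ hβp hM hC hs (η := η) (R := R) (A := A) (κ := κ) (Λ := Λ) (Λ' := Λ')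
    hε hη0 (min_le_left _ _) ?_ hR1 hΛ hR2 ?_ rfl rfl hΛ1 ?_ hr0 ?_ (hr1 _ hr0 b1.le) ?_ hx hy rfl hxy.symm hΛx
  · refine hη' _ (by positivity) ?_
    have : η ≤ η' / 2 := min_le_right _ _
    linarith
  · have e : (R / 2) ^ (-β) = (2 / R) ^ β := by
      rw [Real.rpow_neg (by positivity), ← Real.inv_rpow (by positivity), inv_div]
    rw [e]
    have := hζ (2 / R) (by positivity) (by
      rw [div_le_iff₀ (by linarith)]
      rw [div_le_iff₀ hζ0] at hR3; linarith)
    linarith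
  · rw [div_le_iff₀ (by linarith)]
    have : (2 * n * A + 2 * A * (p * C ^ (p - 1) / η)) / (m / 2) ≤ Λ' := le_max_right _ _
    rw [div_le_iff₀ (by linarith)] at this
    change _ ≤ m / 2 * Λ'
    linarith
  · rw [lt_div_iff₀ (by positivity)] at b2
    linarith
  · rw [lt_div_iff₀ (by linarith)] at b3
    linarith

end Flat2

section Upper
variable {n : ℕ}

local notation "E" => EuclideanSpace ℝ (Fin n)

variable {Ω : Set (EuclideanSpace ℝ (Fin n))} {δ : EuclideanSpace ℝ (Fin n) → ℝ} {K δ₁ p β M C : ℝ}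

theorem test_hasLap (ν x₁ z : E) (hν : ‖ν‖ = 1) (c1 k d κ A c : ℝ) (hd : 0 < d + k) :
    HasLap (fun y : E => c1 * (d + ⟪y - z, ν⟫ + κ * ‖y - z‖ ^ 2 + k) ^ (1 - β) + (c + A * ‖y - x₁‖ ^ 2)) z
      ((c1 * (1 - β) * (d + k) ^ (-β)) • ν + (2 * A) • (z - x₁))
      (-(c1 * (1 - β) * β * (d + k) ^ (-β - 1)) + c1 * (1 - β) * (d + k) ^ (-β) * (2 * n * κ)
        + 2 * n * A) := by
  have hq : HasLap (fun y : E => d + ⟪y - z, ν⟫ + κ * ‖y - z‖ ^ 2 + k) z ν (2 * n * κ) := by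
    refine ((((HasLap.const d z).add (HasLap.lin ν z z)).add ((HasLap.sq z z).const_mul κ)).add
      (HasLap.const k z)).congr rfl ?_ ?_
    · simp
    · ring
  have hv : (d + ⟪z - z, ν⟫ + κ * ‖z - z‖ ^ 2 + k) = d + k := by simp
  have hF : ∀ s : ℝ, 0 < s → HasDerivAt (fun s : ℝ => c1 * s ^ (1 - β)) (c1 * (1 - β) * s ^ (-β)) s :=
    fun s hs => by
      refine ((Real.hasDerivAt_rpow_const (Or.inl hs.ne')).const_mul c1).congr_deriv ?_
      rw [show (1 : ℝ) - β - 1 = -β by ring]; ring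
  have hF1 : HasDerivAt (fun s : ℝ => c1 * (1 - β) * s ^ (-β)) (-(c1 * (1 - β) * β * (d + k) ^ (-β - 1)))
      (d + k) := by
    refine ((Real.hasDerivAt_rpow_const (Or.inl hd.ne')).const_mul (c1 * (1 - β))).congr_deriv ?_
    ring
  have h1 := hq.comp (F := fun s : ℝ => c1 * s ^ (1 - β)) (F1 := fun s : ℝ => c1 * (1 - β) * s ^ (-β))
    (F2 := -(c1 * (1 - β) * β * (d + k) ^ (-β - 1))) (by
      rw [hv]
      filter_upwards [lt_mem_nhds hd] with s hs using hF s hs) (by rw [hv]; exact hF1)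
  rw [hv] at h1
  refine (h1.add ((HasLap.const c z).add ((HasLap.sq x₁ z).const_mul A))).congr rfl ?_ ?_
  · module
  · rw [hν]; ring

theorem lin_vs_pow (B c : ℝ) (hc : 0 < c) (hβ0 : 0 < β) (hβ : β < 1) :
    ∃ s₀ > 0, ∀ s, 0 < s → s ≤ s₀ → B * s < c * s ^ (1 - β) := by
  obtain ⟨η, h0, h1⟩ := exists_small B β (c / 2) hβ0 (by linarith)
  refine ⟨η, h0, fun s hs hs1 => ?_⟩
  have e : s = s ^ β * s ^ (1 - β) := by
    rw [← Real.rpow_add hs]; simp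
  have h2 := h1 s hs hs1
  have h3 : 0 < s ^ (1 - β) := Real.rpow_pos_of_pos hs _
  calc B * s = B * s ^ β * s ^ (1 - β) := by rw [mul_assoc, ← e]
    _ ≤ c / 2 * s ^ (1 - β) := by gcongr
    _ < _ := by nlinarith

set_option maxHeartbeats 1000000 in
theorem upper_core {v : E → ℝ} {g : E → E} {Lv : E → ℝ} (hg : Geo Ω δ K δ₁) (hp : 2 < p)
    (hβ0 : 0 < β) (hβ : β < 1) (hβp : β * (p - 1) = 1) (hM : 0 ≤ M) (hC : 0 < C)
    (hs : Sol Ω δ p β M C v g Lv) {cp dp : ℝ} (hdp0 : 0 < dp) (hcd : cp * (1 - β) = dp)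
    (hdp : dp ^ (p - 1) = β) {B : ℝ} (hB : ∀ x ∈ Ω, v x ≤ B * δ x)
    {ε γ A Λ r : ℝ} (hε : 0 < ε) (hγ : γ * cp = ε / 4)
    (hA : A = C / (1 - β) + cp + ε) (hΛ : 1 ≤ Λ) (hΛ1 : A / Λ ^ 2 < ε / 4) (hΛ2 : 2 * A / Λ ≤ γ / 2 * dp)
    (hr : 0 < r) (hr1 : r < δ₁)
    (hr2 : M * r ^ (1 + β) + 2 * n * K * (1 + γ) * dp * r + 2 * n * A / Λ ^ 2 < γ ^ 2 / 4 * (β * dp))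
    {x : E} (hx : x ∈ Ω) (hxr : δ x = r)
    (hflat : ∀ y ∈ Ω, δ y = r → ‖y - x‖ ≤ Λ * r → v x - v y ≤ ε / 4 * r ^ (1 - β)) :
    v x ≤ (cp + ε) * r ^ (1 - β) := by
  by_contra hcon
  push Not at hcon
  have h1β : 0 < 1 - β := by linarith
  have hcp0 : 0 < cp := by
    by_contra h; push Not at h; nlinarith
  have hγ0 : 0 < γ := by
    by_contra h; push Not at h; nlinarith
  set ρ := r ^ (1 - β) with hρ
  have hρ0 : 0 < ρ := Real.rpow_pos_of_pos hr _
  have hC1 : 0 < C / (1 - β) := div_pos hC (by linarith)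
  have hA0 : 0 < A := by rw [hA]; positivity
  set A' := A * ρ / (Λ * r) ^ 2 with hA'
  have hA'0 : 0 < A' := by positivity
  have hLr : 0 < Λ * r := by positivity
  set W : E → ℝ := fun y => v y - ((1 + γ) * cp * δ y ^ (1 - β) + (ε / 4 * ρ - A' * ‖y - x‖ ^ 2)) with hW
  set S : Set E := {z | z ∈ closure Ω ∧ δ z ≤ r ∧ ‖z - x‖ ≤ Λ * r} with hS
  have hδc := hg.cont
  have hSc : IsCompact S := by
    refine hg.cpt.of_isClosed_subset ?_ fun z hz => hz.1
    refine isClosed_closure.inter ?_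
    exact (isClosed_le hδc continuous_const).inter
      (isClosed_le (by fun_prop : Continuous fun z : E => ‖z - x‖) continuous_const)
  obtain ⟨b, hb, νb, hνb, hxb, hbray⟩ := hg.proj x hx (by linarith)
  rw [hxr] at hxb
  have hbn : ‖b - x‖ = r := by
    rw [hxb, sub_add_cancel_left, norm_neg, norm_smul, hνb, Real.norm_of_nonneg hr.le, mul_one]
  have hbS : b ∈ S := ⟨frontier_subset_closure hb, by rw [hg.zero b hb]; exact hr.le, by
    rw [hbn]; exact le_mul_of_one_le_left hr.le hΛ⟩
  have hWc : ContinuousOn W S := by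
    refine ContinuousOn.sub (hs.cont.mono fun z hz => hz.1) (Continuous.continuousOn ?_)
    have : Continuous fun y => δ y ^ (1 - β) := hδc.rpow_const fun _ => Or.inr h1β.le
    fun_prop
  obtain ⟨z, hz, hmin⟩ := hSc.exists_isMinOn ⟨b, hbS⟩ hWc
  have hWb := hmin hbS
  have hneg : W z < 0 := by
    refine lt_of_le_of_lt hWb ?_
    simp only [hW]
    rw [hs.zero b hb, hg.zero b hb, Real.zero_rpow h1β.ne', hbn, hA']
    have : A * ρ / (Λ * r) ^ 2 * r ^ 2 = A / Λ ^ 2 * ρ := by field_simp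
    rw [this]
    have := mul_lt_mul_of_pos_right hΛ1 hρ0
    linarith
  have hzS := hz
  obtain ⟨hz1, hz2, hz3⟩ := hz
  have hd0 := hg.nonneg hz1
  set d := δ z with hd
  have hdρ : d ^ (1 - β) ≤ ρ := Real.rpow_le_rpow hd0 hz2 h1β.le
  have hdρ0 : 0 ≤ d ^ (1 - β) := Real.rpow_nonneg hd0 _
  have hWz : v z < (1 + γ) * cp * d ^ (1 - β) + (ε / 4 * ρ - A' * ‖z - x‖ ^ 2) := by
    simp only [hW] at hneg; linarith
  have hq0 : 0 ≤ A' * ‖z - x‖ ^ 2 := by positivity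
  have hφ : (1 + γ) * cp * d ^ (1 - β) ≤ (cp + ε / 4) * ρ := by
    have : (1 + γ) * cp = cp + ε / 4 := by rw [← hγ]; ring
    rw [this]; gcongr
  -- top
  rcases eq_or_lt_of_le hz2 with hc1 | hc1
  · have hzΩ := hg.mem_of_pos hz1 (by rw [← hd, hc1]; exact hr)
    have := hflat z hzΩ hc1 hz3
    have : 0 < ε * ρ := by positivity
    linarith
  -- lateral
  rcases eq_or_lt_of_le hz3 with hc2 | hc2
  · have e1 : A' * ‖z - x‖ ^ 2 = A * ρ := by rw [hc2, hA']; field_simp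
    have c1 := (abs_le.1 (hs.crude hg hβ0 hβ hz1 (by linarith))).1
    have c2 : C / (1 - β) * δ z ^ (1 - β) ≤ C / (1 - β) * ρ := by gcongr
    have : 0 < ε * ρ := by positivity
    rw [e1, hA] at hWz
    linarith
  -- bottom
  rcases hg.mem_cl hz1 with hzΩ | hzf
  swap
  · obtain ⟨ν, hν, hray⟩ := hg.nrm z hzf
    obtain ⟨s₀, hs₀, hlin⟩ := lin_vs_pow (B + A' * (1 + 2 * (Λ * r))) ((1 + γ) * cp) (by positivity) hβ0 hβ
    have i1 : 0 < Λ * r - ‖z - x‖ := by linarith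
    have i0 := hg.hδ₁
    set s := min (min s₀ (r / 2)) (min (min (δ₁ / 2) 1) (Λ * r - ‖z - x‖)) with hsdef
    have hs0 : 0 < s := by positivity
    have j1 : s ≤ s₀ := (min_le_left _ _).trans (min_le_left _ _)
    have j2 : s ≤ r / 2 := (min_le_left _ _).trans (min_le_right _ _)
    have j3 : s ≤ δ₁ / 2 := (min_le_right _ _).trans ((min_le_left _ _).trans (min_le_left _ _))
    have j4 : s ≤ 1 := (min_le_right _ _).trans ((min_le_left _ _).trans (min_le_right _ _))
    have j5 : s ≤ Λ * r - ‖z - x‖ := (min_le_right _ _).trans (min_le_right _ _)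
    obtain ⟨k1, k2⟩ := hray s hs0 (by linarith)
    have hn1 : ‖z + s • ν - x‖ ≤ ‖z - x‖ + s := by
      have : z + s • ν - x = (z - x) + s • ν := by abel
      rw [this]
      refine (norm_add_le _ _).trans ?_
      rw [norm_smul, hν, Real.norm_of_nonneg hs0.le, mul_one]
    have hyS : z + s • ν ∈ S := ⟨subset_closure k1, by rw [k2]; linarith, by linarith⟩
    have hm := hmin hyS
    simp only [hW, mem_ofPred_eq] at hm
    have hdz : d = 0 := hg.zero z hzf
    rw [hs.zero z hzf, ← hd, hdz, Real.zero_rpow h1β.ne', k2] at hm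
    have l1 := hlin s hs0 j1
    have l2 := hB _ k1
    rw [k2] at l2
    have l3 : ‖z + s • ν - x‖ ^ 2 ≤ ‖z - x‖ ^ 2 + s * (1 + 2 * (Λ * r)) := by
      have : ‖z + s • ν - x‖ ^ 2 ≤ (‖z - x‖ + s) ^ 2 := by gcongr
      have h3 : s * ‖z - x‖ ≤ s * (Λ * r) := by gcongr
      have h4 : s * s ≤ s * 1 := by gcongr
      linarith
    have l4 := mul_le_mul_of_nonneg_left l3 hA'0.le
    linarith
  -- interior
  have hdpos : 0 < d := hg.pos z hzΩ
  obtain ⟨ν, hν, hq⟩ := hg.quad z hzΩ (by linarith)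
  have hloc : IsLocalMin (fun y => v y - ((1 + γ) * cp * (d + ⟪y - z, ν⟫ + (-K) * ‖y - z‖ ^ 2 + 0) ^ (1 - β)
      + (ε / 4 * ρ + (-A') * ‖y - x‖ ^ 2))) z := by
    have i1 : ∀ᶠ w in nhds z, w ∈ Ω := hg.isOpen.mem_nhds hzΩ
    have i2 : ∀ᶠ w in nhds z, δ w < r := hδc.continuousAt.eventually (gt_mem_nhds hc1)
    have i3 : ∀ᶠ w in nhds z, ‖w - x‖ < Λ * r :=
      (by fun_prop : Continuous fun w : E => ‖w - x‖).continuousAt.eventually (gt_mem_nhds hc2)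
    have i4 : ∀ᶠ w in nhds z, 0 < d + ⟪w - z, ν⟫ + (-K) * ‖w - z‖ ^ 2 + 0 := by
      refine (by fun_prop : Continuous fun w : E => d + ⟪w - z, ν⟫ + (-K) * ‖w - z‖ ^ 2 + 0).continuousAt.eventually
        (lt_mem_nhds ?_)
      simpa using hdpos
    filter_upwards [i1, i2, i3, i4] with w w1 w2 w3 w4
    have hm := hmin ⟨subset_closure w1, w2.le, w3.le⟩
    simp only [hW, mem_ofPred_eq, ← hd] at hm
    have hqw := (abs_le.1 (hq w (subset_closure w1))).1
    have hle : (d + ⟪w - z, ν⟫ + (-K) * ‖w - z‖ ^ 2 + 0) ^ (1 - β) ≤ δ w ^ (1 - β) :=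
      Real.rpow_le_rpow w4.le (by linarith) h1β.le
    have hle2 : (1 + γ) * cp * (d + ⟪w - z, ν⟫ + (-K) * ‖w - z‖ ^ 2 + 0) ^ (1 - β) ≤
        (1 + γ) * cp * δ w ^ (1 - β) := by gcongr
    have e0 : (d + ⟪z - z, ν⟫ + (-K) * ‖z - z‖ ^ 2 + 0) = d := by simp
    rw [e0]
    linarith
  obtain ⟨hgr, hlp⟩ := ((hs.hlap z hzΩ).sub (test_hasLap (β := β) ν x z hν ((1 + γ) * cp) 0 d (-K) (-A')
    (ε / 4 * ρ) (by linarith))).isLocalMin hloc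
  rw [add_zero] at hgr hlp
  have e1 : (1 + γ) * cp * (1 - β) = (1 + γ) * dp := by rw [mul_assoc, hcd]
  rw [e1] at hgr hlp
  set D := d ^ (-β) with hD
  have hD0 : 0 < D := Real.rpow_pos_of_pos hdpos _
  have hDr : r ^ (-β) ≤ D := Real.rpow_le_rpow_of_nonpos hdpos hz2 (by linarith)
  have hrβ : r ^ (-β) * r = ρ := by
    rw [← Real.rpow_add_one hr.ne', hρ]; congr 1; ring
  have hgn : (1 + γ / 2) * dp * D ≤ ‖g z‖ := by
    have e2 : g z = ((1 + γ) * dp * D) • ν - (2 * A') • (z - x) := by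
      have := sub_eq_zero.1 hgr
      rw [this]; module
    have h1 := norm_sub_norm_le (((1 + γ) * dp * D) • ν) ((2 * A') • (z - x))
    rw [← e2, norm_smul, norm_smul, hν, Real.norm_of_nonneg (by positivity),
      Real.norm_of_nonneg (by positivity)] at h1
    have h2 : 2 * A' * ‖z - x‖ ≤ 2 * A' * (Λ * r) := by gcongr
    have h3 : 2 * A' * (Λ * r) = 2 * A / Λ * r ^ (-β) := by
      rw [hA', ← hrβ]; field_simp
    have h4 : 2 * A / Λ * r ^ (-β) ≤ γ / 2 * dp * D := by gcongr
    linarith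
  have hgp : (1 + γ + γ ^ 2 / 4) * (β * dp) * d ^ (-β - 1) ≤ ‖g z‖ ^ p := by
    have h1 : ((1 + γ / 2) * dp * D) ^ p ≤ ‖g z‖ ^ p := Real.rpow_le_rpow (by positivity) hgn (by linarith)
    refine le_trans ?_ h1
    rw [Real.mul_rpow (by positivity) hD0.le, Real.mul_rpow (by positivity) hdp0.le]
    have e3 : D ^ p = d ^ (-β - 1) := by
      rw [hD, ← Real.rpow_mul hd0]; congr 1; linarith
    have e4 : dp ^ p = β * dp := by
      rw [← hdp, ← Real.rpow_add_one hdp0.ne']; congr 1; ring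
    rw [e3, e4]
    have e5 : (1 + γ / 2) ^ (2 : ℝ) ≤ (1 + γ / 2) ^ p := Real.rpow_le_rpow_of_exponent_le (by linarith) hp.le
    have e6 : (1 + γ / 2) ^ (2 : ℝ) = 1 + γ + γ ^ 2 / 4 := by rw [Real.rpow_two]; ring
    rw [e6] at e5
    have : 0 < d ^ (-β - 1) := Real.rpow_pos_of_pos hdpos _
    gcongr
  have heq := (abs_le.1 (hs.eqn z hzΩ)).2
  have key : γ ^ 2 / 4 * (β * dp) * d ^ (-β - 1) ≤ M + 2 * n * K * (1 + γ) * dp * D + 2 * n * A' := by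
    linarith
  have hdb : 0 < d ^ (1 + β) := Real.rpow_pos_of_pos hdpos _
  have key2 := mul_le_mul_of_nonneg_right key hdb.le
  have t1 : d ^ (-β - 1) * d ^ (1 + β) = 1 := by
    rw [← Real.rpow_add hdpos]; ring_nf; simp
  have t2 : D * d ^ (1 + β) = d := by
    rw [hD, ← Real.rpow_add hdpos]; ring_nf; simp
  have t3 : d ^ (1 + β) ≤ r ^ (1 + β) := Real.rpow_le_rpow hd0 hz2 (by linarith)
  have t4 : A' * r ^ (1 + β) = A / Λ ^ 2 := by
    have er : r ^ (1 + β) * ρ = r ^ 2 := by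
      rw [hρ, ← Real.rpow_add hr]
      have : 1 + β + (1 - β) = (2 : ℕ) := by push_cast; ring
      rw [this, Real.rpow_natCast]
    rw [hA', show A * ρ / (Λ * r) ^ 2 * r ^ (1 + β) = A * (r ^ (1 + β) * ρ) / (Λ * r) ^ 2 by ring, er]
    field_simp
  have s1 : γ ^ 2 / 4 * (β * dp) * d ^ (-β - 1) * d ^ (1 + β) = γ ^ 2 / 4 * (β * dp) := by
    rw [mul_assoc, t1, mul_one]
  have s2 : (M + 2 * n * K * (1 + γ) * dp * D + 2 * n * A') * d ^ (1 + β) =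
      M * d ^ (1 + β) + 2 * n * K * (1 + γ) * dp * d + 2 * n * A' * d ^ (1 + β) := by
    linear_combination (2 * n * K * (1 + γ) * dp) * t2
  rw [s1, s2] at key2
  have hK := hg.hK
  have s3 : M * d ^ (1 + β) ≤ M * r ^ (1 + β) := by gcongr
  have s4 : 2 * n * K * (1 + γ) * dp * d ≤ 2 * n * K * (1 + γ) * dp * r := by gcongr
  have s5 : 2 * n * A' * d ^ (1 + β) ≤ 2 * n * A / Λ ^ 2 := by
    calc 2 * n * A' * d ^ (1 + β) ≤ 2 * n * A' * r ^ (1 + β) := by gcongr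
      _ = 2 * n * (A' * r ^ (1 + β)) := by ring
      _ = _ := by rw [t4]; ring
  linarith

theorem upper (hg : Geo Ω δ K δ₁) (hp : 2 < p)
    (hβ0 : 0 < β) (hβ : β < 1) (hβp : β * (p - 1) = 1) (hM : 0 ≤ M) (hC : 0 < C)
    {cp dp : ℝ} (hdp0 : 0 < dp) (hcd : cp * (1 - β) = dp)
    (hdp : dp ^ (p - 1) = β) {ε : ℝ} (hε : 0 < ε) :
    ∃ r₀ > 0, ∀ v g Lv, Sol Ω δ p β M C v g Lv → (∃ B, ∀ x ∈ Ω, v x ≤ B * δ x) →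
      ∀ x ∈ Ω, δ x < r₀ → v x ≤ (cp + ε) * δ x ^ (1 - β) := by
  have h1β : 0 < 1 - β := by linarith
  have hcp0 : 0 < cp := by
    by_contra h; push Not at h; nlinarith
  set γ := ε / 4 / cp with hγ
  have hγ0 : 0 < γ := by positivity
  set A := C / (1 - β) + cp + ε with hA
  have hA0 : 0 < A := by positivity
  set Λ := max (max 1 (8 * A / ε)) (max (4 * A / (γ * dp)) (2 * n * A / (γ ^ 2 / 16 * (β * dp)))) with hΛ
  have hΛ1 : 1 ≤ Λ := (le_max_left _ _).trans (le_max_left _ _)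
  have hΛ2 : 8 * A / ε ≤ Λ := (le_max_right _ _).trans (le_max_left _ _)
  have hΛ3 : 4 * A / (γ * dp) ≤ Λ := (le_max_left _ _).trans (le_max_right _ _)
  have hΛ4 : 2 * n * A / (γ ^ 2 / 16 * (β * dp)) ≤ Λ := (le_max_right _ _).trans (le_max_right _ _)
  have hΛsq : Λ ≤ Λ ^ 2 := le_self_pow₀ hΛ1 two_ne_zero
  set m := γ ^ 2 / 16 * (β * dp) with hm
  have hm0 : 0 < m := by positivity
  rw [div_le_iff₀ (by positivity)] at hΛ2 hΛ3 hΛ4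
  obtain ⟨r1, hr10, hr1⟩ := flat (M := M) hg hp hβ0 hβ hβp hM hC (ε := ε / 4) (Λ := Λ) (by linarith) (by linarith)
  obtain ⟨r2, hr20, hr2⟩ := exists_small M (1 + β) m (by linarith) hm0
  obtain ⟨r3, hr30, hr3⟩ := exists_small (2 * n * K * (1 + γ) * dp) 1 m (by linarith) hm0
  have hδ₁ := hg.hδ₁
  refine ⟨min (min r1 r2) (min r3 δ₁), by positivity, ?_⟩
  intro v g Lv hs ⟨B, hB⟩ x hx hr
  have hr0 := hg.pos x hx
  have b1 := hr.trans_le ((min_le_left _ _).trans (min_le_left _ _))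
  have b2 := hr.trans_le ((min_le_left _ _).trans (min_le_right _ _))
  have b3 := hr.trans_le ((min_le_right _ _).trans (min_le_left _ _))
  have b4 := hr.trans_le ((min_le_right _ _).trans (min_le_right _ _))
  refine upper_core hg hp hβ0 hβ hβp hM hC hs hdp0 hcd hdp hB (γ := γ) (A := A) (Λ := Λ) (r := δ x) hε
    (by rw [hγ]; field_simp) rfl hΛ1 ?_ ?_ hr0 b4 ?_ hx rfl ?_
  · rw [div_lt_iff₀ (by positivity)]
    have : ε / 4 * Λ ≤ ε / 4 * Λ ^ 2 := by gcongr
    linarith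
  · rw [div_le_iff₀ (by positivity)]
    linarith
  · have t1 := hr2 _ hr0 b2.le
    have t2 := hr3 _ hr0 b3.le
    rw [Real.rpow_one] at t2
    have t3 : 2 * n * A / Λ ^ 2 ≤ m := by
      rw [div_le_iff₀ (by positivity)]
      have : m * Λ ≤ m * Λ ^ 2 := by gcongr
      linarith
    have : γ ^ 2 / 4 * (β * dp) = 4 * m := by rw [hm]; ring
    linarith
  · intro y hy hyr hyn
    have := hr1 v g Lv hs y hy x hx (by rw [hyr]; exact b1) hyr (by rw [norm_sub_rev, hyr]; exact hyn)
    rw [hyr] at this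
    exact this

end Upper

section Barrier
variable {n : ℕ}

local notation "E" => EuclideanSpace ℝ (Fin n)

variable {Ω : Set (EuclideanSpace ℝ (Fin n))} {δ : EuclideanSpace ℝ (Fin n) → ℝ} {K δ₁ p β M C : ℝ}

theorem concave_bd (hβ0 : 0 < β) (hβ : β < 1) {a d : ℝ} (ha : 0 < a) (hd : 0 ≤ d) :
    (d + a) ^ (1 - β) - a ^ (1 - β) ≤ (1 - β) * a ^ (-β) * d := by
  have h := rpow_one_add_le_one_add_mul_self (s := d / a) (p := 1 - β)
    (by have : 0 ≤ d / a := by positivity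
        linarith) (by linarith) (by linarith)
  have e : d + a = a * (1 + d / a) := by field_simp; ring
  rw [e, Real.mul_rpow ha.le (by positivity)]
  have h2 : 0 < a ^ (1 - β) := Real.rpow_pos_of_pos ha _
  have h3 := mul_le_mul_of_nonneg_left h h2.le
  have e2 : a ^ (1 - β) = a ^ (-β) * a := by
    rw [← Real.rpow_add_one ha.ne']; congr 1; ring
  have e3 : a ^ (1 - β) * (1 + (1 - β) * (d / a)) = a ^ (1 - β) + (1 - β) * a ^ (-β) * d := by
    rw [mul_add, mul_one]
    nth_rewrite 2 [e2]
    field_simp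
  linarith

set_option maxHeartbeats 1000000 in
theorem barrier_core {w : E → ℝ} {g : E → E} {Lw : E → ℝ} (hg : Geo Ω δ K δ₁) (hp : 2 < p)
    (hβ0 : 0 < β) (hβ : β < 1) (hβp : β * (p - 1) = 1) (hM : 0 ≤ M)
    {cp dp : ℝ} (hdp0 : 0 < dp) (hcd : cp * (1 - β) = dp)
    (hdp : dp ^ (p - 1) = β) (hwc : ContinuousOn w (closure Ω)) (hw0 : ∀ x ∈ frontier Ω, w x ≤ 0)
    (hwl : ∀ x ∈ Ω, HasLap w x (g x) (Lw x)) (hweq : ∀ x ∈ Ω, -Lw x ≤ ‖g x‖ ^ p + M)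
    {ε γ A Λ k r : ℝ} (hr : 0 < r) (hr1 : r < δ₁) (hA0 : 0 < A)
    (hcr : ∀ x ∈ closure Ω, δ x ≤ r → w x ≤ A * r ^ (1 - β))
    (hγ0 : 0 < γ) (hγ : γ ≤ 1 / 2) (hk0 : 0 < k) (hk : k ≤ 1)
    (hγk : cp - ε / 2 ≤ (1 - γ) * cp * ((1 + k) ^ (1 - β) - k ^ (1 - β)))
    (hΛ : 1 ≤ Λ) (hΛ2 : 4 * A / Λ ≤ γ / 8 * dp)
    (hr2 : 4 * M * r ^ (1 + β) + 4 * n * K * dp * r + 8 * n * A / Λ ^ 2 < γ / 4 * (β * dp))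
    {x : E} (hx : x ∈ Ω) (hxr : δ x ≤ r)
    (htop : ∀ y ∈ Ω, δ y = r → ‖y - x‖ ≤ Λ * r → w y ≤ (cp - ε / 2) * r ^ (1 - β)) :
    w x ≤ dp * (k * r) ^ (-β) * δ x := by
  have h1β : 0 < 1 - β := by linarith
  have hcp0 : 0 < cp := by
    by_contra h; push Not at h; nlinarith
  have hkr : 0 < k * r := by positivity
  set ρ := r ^ (1 - β) with hρ
  have hρ0 : 0 < ρ := Real.rpow_pos_of_pos hr _
  set A' := A * ρ / (Λ * r) ^ 2 with hA'
  have hA'0 : 0 < A' := by positivity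
  have hLr : 0 < Λ * r := by positivity
  have h1γ : 0 < 1 - γ := by linarith
  set W : E → ℝ := fun y => w y - ((1 - γ) * cp * (δ y + k * r) ^ (1 - β) +
    (-((1 - γ) * cp * (k * r) ^ (1 - β)) + A' * ‖y - x‖ ^ 2)) with hW
  set S : Set E := {z | z ∈ closure Ω ∧ δ z ≤ r ∧ ‖z - x‖ ≤ Λ * r} with hS
  have hδc := hg.cont
  have hSc : IsCompact S := by
    refine hg.cpt.of_isClosed_subset ?_ fun z hz => hz.1
    refine isClosed_closure.inter ?_
    exact (isClosed_le hδc continuous_const).inter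
      (isClosed_le (by fun_prop : Continuous fun z : E => ‖z - x‖) continuous_const)
  have hxS : x ∈ S := ⟨subset_closure hx, hxr, by simp; exact hLr.le⟩
  have hWc : ContinuousOn W S := by
    refine ContinuousOn.sub (hwc.mono fun z hz => hz.1) (Continuous.continuousOn ?_)
    have : Continuous fun y => (δ y + k * r) ^ (1 - β) :=
      (hδc.add continuous_const).rpow_const fun _ => Or.inr h1β.le
    fun_prop
  obtain ⟨z, hz, hmax⟩ := hSc.exists_isMaxOn ⟨x, hxS⟩ hWc
  have hWx := hmax hxS
  have hfin : W x ≤ 0 → w x ≤ dp * (k * r) ^ (-β) * δ x := by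
    intro h
    simp only [hW] at h
    rw [sub_self, norm_zero] at h
    have hpx := hg.pos x hx
    have h2 := concave_bd hβ0 hβ hkr hpx.le
    have h3 := mul_le_mul_of_nonneg_left h2 (mul_pos h1γ hcp0).le
    have h4 : (1 - γ) * cp * ((1 - β) * (k * r) ^ (-β) * δ x) = (1 - γ) * (dp * (k * r) ^ (-β) * δ x) := by
      rw [← hcd]; ring
    have h5 : 0 < dp * (k * r) ^ (-β) * δ x := by positivity
    have h6 : (1 - γ) * (dp * (k * r) ^ (-β) * δ x) ≤ dp * (k * r) ^ (-β) * δ x := by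
      have := mul_pos hγ0 h5
      linarith
    linarith
  by_contra hcon
  have hpos : 0 < W z := by
    by_contra h
    push Not at h
    exact hcon (hfin (le_trans hWx h))
  obtain ⟨hz1, hz2, hz3⟩ := hz
  have hd0 := hg.nonneg hz1
  set d := δ z with hd
  have hq0 : 0 ≤ A' * ‖z - x‖ ^ 2 := by positivity
  have hF0 : 0 ≤ (1 - γ) * cp * ((d + k * r) ^ (1 - β) - (k * r) ^ (1 - β)) := by
    have : (k * r) ^ (1 - β) ≤ (d + k * r) ^ (1 - β) := Real.rpow_le_rpow hkr.le (by linarith) h1β.le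
    have h2 : 0 ≤ (d + k * r) ^ (1 - β) - (k * r) ^ (1 - β) := by linarith
    positivity
  have hWz : (1 - γ) * cp * ((d + k * r) ^ (1 - β) - (k * r) ^ (1 - β)) + A' * ‖z - x‖ ^ 2 < w z := by
    simp only [hW] at hpos; rw [← hd] at hpos; linarith
  -- top
  rcases eq_or_lt_of_le hz2 with hc1 | hc1
  · have hzΩ := hg.mem_of_pos hz1 (by rw [← hd, hc1]; exact hr)
    have h1 := htop z hzΩ hc1 hz3
    have e1 : r + k * r = (1 + k) * r := by ring
    rw [hc1, e1, Real.mul_rpow (by positivity) hr.le, Real.mul_rpow hk0.le hr.le, ← hρ] at hWz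
    have h2 := mul_le_mul_of_nonneg_right hγk hρ0.le
    linarith
  -- lateral
  rcases eq_or_lt_of_le hz3 with hc2 | hc2
  · have e1 : A' * ‖z - x‖ ^ 2 = A * ρ := by rw [hc2, hA']; field_simp
    have c1 := hcr z hz1 hz2
    linarith
  -- bottom
  rcases hg.mem_cl hz1 with hzΩ | hzf
  swap
  · have := hw0 z hzf
    linarith
  -- interior
  have hdpos : 0 < d := hg.pos z hzΩ
  obtain ⟨ν, hν, hq⟩ := hg.quad z hzΩ (by linarith)
  have hloc : IsLocalMax (fun y => w y - ((1 - γ) * cp * (d + ⟪y - z, ν⟫ + K * ‖y - z‖ ^ 2 + k * r) ^ (1 - β)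
      + (-((1 - γ) * cp * (k * r) ^ (1 - β)) + A' * ‖y - x‖ ^ 2))) z := by
    have i1 : ∀ᶠ w in nhds z, w ∈ Ω := hg.isOpen.mem_nhds hzΩ
    have i2 : ∀ᶠ w in nhds z, δ w < r := hδc.continuousAt.eventually (gt_mem_nhds hc1)
    have i3 : ∀ᶠ w in nhds z, ‖w - x‖ < Λ * r :=
      (by fun_prop : Continuous fun w : E => ‖w - x‖).continuousAt.eventually (gt_mem_nhds hc2)
    filter_upwards [i1, i2, i3] with y w1 w2 w3
    have hm := hmax ⟨subset_closure w1, w2.le, w3.le⟩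
    simp only [hW, mem_ofPred_eq, ← hd] at hm
    have hqw := (abs_le.1 (hq y (subset_closure w1))).2
    have hyp := hg.pos y w1
    have hle : (δ y + k * r) ^ (1 - β) ≤ (d + ⟪y - z, ν⟫ + K * ‖y - z‖ ^ 2 + k * r) ^ (1 - β) :=
      Real.rpow_le_rpow (by positivity) (by linarith) h1β.le
    have hle2 : (1 - γ) * cp * (δ y + k * r) ^ (1 - β) ≤
        (1 - γ) * cp * (d + ⟪y - z, ν⟫ + K * ‖y - z‖ ^ 2 + k * r) ^ (1 - β) := by gcongr
    have e0 : (d + ⟪z - z, ν⟫ + K * ‖z - z‖ ^ 2 + k * r) = d + k * r := by simp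
    rw [e0]
    linarith
  obtain ⟨hgr, hlp⟩ := ((hwl z hzΩ).sub (test_hasLap (β := β) ν x z hν ((1 - γ) * cp) (k * r) d K A'
    (-((1 - γ) * cp * (k * r) ^ (1 - β))) (by positivity))).isLocalMax hloc
  have e1 : (1 - γ) * cp * (1 - β) = (1 - γ) * dp := by rw [mul_assoc, hcd]
  rw [e1] at hgr hlp
  set e := d + k * r with he
  have he0 : 0 < e := by positivity
  have he2 : e ≤ 2 * r := by
    have : k * r ≤ 1 * r := by gcongr
    linarith
  set D := e ^ (-β) with hD
  have hD0 : 0 < D := Real.rpow_pos_of_pos he0 _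
  have hDr : r ^ (-β) ≤ 2 * D := by
    have h1 : (2 * r) ^ (-β) ≤ D := Real.rpow_le_rpow_of_nonpos he0 he2 (by linarith)
    rw [Real.mul_rpow (by norm_num) hr.le] at h1
    have h2 : (1 / 2 : ℝ) ≤ 2 ^ (-β) := by
      have : (2 : ℝ) ^ (-1 : ℝ) ≤ 2 ^ (-β) := Real.rpow_le_rpow_of_exponent_le (by norm_num) (by linarith)
      rw [Real.rpow_neg_one] at this
      linarith
    have h3 : 1 / 2 * r ^ (-β) ≤ 2 ^ (-β) * r ^ (-β) := by gcongr
    linarith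
  have hrβ : r ^ (-β) * r = ρ := by
    rw [← Real.rpow_add_one hr.ne', hρ]; congr 1; ring
  have hgn : ‖g z‖ ≤ (1 - 7 * γ / 8) * dp * D := by
    have e2 := sub_eq_zero.1 hgr
    rw [e2]
    refine (norm_add_le _ _).trans ?_
    rw [norm_smul, norm_smul, hν, Real.norm_of_nonneg (by positivity),
      Real.norm_of_nonneg (by positivity)]
    have h2 : 2 * A' * ‖z - x‖ ≤ 2 * A' * (Λ * r) := by gcongr
    have h3 : 2 * A' * (Λ * r) = 2 * A / Λ * r ^ (-β) := by
      rw [hA', ← hrβ]; field_simp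
    have h4 : 2 * A / Λ * r ^ (-β) ≤ 2 * A / Λ * (2 * D) := by gcongr
    have h5 : 2 * A / Λ * (2 * D) = 4 * A / Λ * D := by ring
    have h6 : 4 * A / Λ * D ≤ γ / 8 * dp * D := by gcongr
    linarith
  have hgp : ‖g z‖ ^ p ≤ (1 - γ - γ / 4) * (β * dp) * e ^ (-β - 1) := by
    have h1 : ‖g z‖ ^ p ≤ ((1 - 7 * γ / 8) * dp * D) ^ p := Real.rpow_le_rpow (by positivity) hgn (by linarith)
    refine le_trans h1 ?_
    have h7 : 0 < 1 - 7 * γ / 8 := by linarith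
    rw [Real.mul_rpow (by positivity) hD0.le, Real.mul_rpow (by positivity) hdp0.le]
    have e3 : D ^ p = e ^ (-β - 1) := by
      rw [hD, ← Real.rpow_mul he0.le]; congr 1; linarith
    have e4 : dp ^ p = β * dp := by
      rw [← hdp, ← Real.rpow_add_one hdp0.ne']; congr 1; ring
    rw [e3, e4]
    have e5 : (1 - 7 * γ / 8) ^ p ≤ (1 - 7 * γ / 8) ^ (2 : ℝ) :=
      Real.rpow_le_rpow_of_exponent_ge h7 (by linarith) hp.le
    rw [Real.rpow_two] at e5
    have e6 : (1 - 7 * γ / 8) ^ 2 ≤ 1 - γ - γ / 4 := by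
      have := mul_le_mul_of_nonneg_left hγ hγ0.le
      linarith
    have : 0 < e ^ (-β - 1) := Real.rpow_pos_of_pos he0 _
    have e7 := e5.trans e6
    gcongr
  have heq := hweq z hzΩ
  have hK := hg.hK
  have key : γ / 4 * (β * dp) * e ^ (-β - 1) ≤ M + 2 * n * K * dp * D + 2 * n * A' := by
    have : 0 ≤ γ * (dp * D * (2 * n * K)) := by positivity
    linarith
  have hdb : 0 < e ^ (1 + β) := Real.rpow_pos_of_pos he0 _
  have key2 := mul_le_mul_of_nonneg_right key hdb.le
  have t1 : e ^ (-β - 1) * e ^ (1 + β) = 1 := by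
    rw [← Real.rpow_add he0]; ring_nf; simp
  have t2 : D * e ^ (1 + β) = e := by
    rw [hD, ← Real.rpow_add he0]; ring_nf; simp
  have hrb : 0 < r ^ (1 + β) := Real.rpow_pos_of_pos hr _
  have t3 : e ^ (1 + β) ≤ 4 * r ^ (1 + β) := by
    have h1 : e ^ (1 + β) ≤ (2 * r) ^ (1 + β) := Real.rpow_le_rpow he0.le he2 (by linarith)
    rw [Real.mul_rpow (by norm_num) hr.le] at h1
    have h2 : (2 : ℝ) ^ (1 + β) ≤ 4 := by
      have : (2 : ℝ) ^ (1 + β) ≤ 2 ^ (2 : ℝ) := Real.rpow_le_rpow_of_exponent_le (by norm_num) (by linarith)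
      rw [Real.rpow_two] at this
      linarith
    have h3 : 2 ^ (1 + β) * r ^ (1 + β) ≤ 4 * r ^ (1 + β) := by gcongr
    linarith
  have t4 : A' * r ^ (1 + β) = A / Λ ^ 2 := by
    have er : r ^ (1 + β) * ρ = r ^ 2 := by
      rw [hρ, ← Real.rpow_add hr]
      have : 1 + β + (1 - β) = (2 : ℕ) := by push_cast; ring
      rw [this, Real.rpow_natCast]
    rw [hA', show A * ρ / (Λ * r) ^ 2 * r ^ (1 + β) = A * (r ^ (1 + β) * ρ) / (Λ * r) ^ 2 by ring, er]
    field_simp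
  have s1 : γ / 4 * (β * dp) * e ^ (-β - 1) * e ^ (1 + β) = γ / 4 * (β * dp) := by
    rw [mul_assoc, t1, mul_one]
  have s2 : (M + 2 * n * K * dp * D + 2 * n * A') * e ^ (1 + β) =
      M * e ^ (1 + β) + 2 * n * K * dp * e + 2 * n * A' * e ^ (1 + β) := by
    linear_combination (2 * n * K * dp) * t2
  rw [s1, s2] at key2
  have s3 : M * e ^ (1 + β) ≤ M * (4 * r ^ (1 + β)) := by gcongr
  have s4 : 2 * n * K * dp * e ≤ 2 * n * K * dp * (2 * r) := by gcongr
  have s5 : 2 * n * A' * e ^ (1 + β) ≤ 8 * n * A / Λ ^ 2 := by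
    calc 2 * n * A' * e ^ (1 + β) ≤ 2 * n * A' * (4 * r ^ (1 + β)) := by gcongr
      _ = 8 * n * (A' * r ^ (1 + β)) := by ring
      _ = _ := by rw [t4]; ring
  linarith

theorem barrier_sol (hg : Geo Ω δ K δ₁) (hp : 2 < p)
    (hβ0 : 0 < β) (hβ : β < 1) (hβp : β * (p - 1) = 1) (hM : 0 ≤ M) (hC : 0 < C)
    {cp dp : ℝ} (hdp0 : 0 < dp) (hcd : cp * (1 - β) = dp)
    (hdp : dp ^ (p - 1) = β) {ε : ℝ} (hε : 0 < ε) (hεc : ε < cp) :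
    ∃ r₀ > 0, ∀ r, 0 < r → r < r₀ → ∃ K₃ > 0, ∀ v g Lv, Sol Ω δ p β M C v g Lv →
      ∀ x ∈ Ω, δ x = r → v x ≤ (cp - ε) * r ^ (1 - β) →
      ∀ z ∈ Ω, δ z ≤ r → ‖z - x‖ ≤ 2 * r → |v z| ≤ K₃ * δ z := by
  have h1β : 0 < 1 - β := by linarith
  have hcp0 : 0 < cp := by linarith
  set γ := min (1 / 2) (ε / 4 / cp) with hγ
  have hγ0 : 0 < γ := by positivity
  have hγ1 : γ ≤ 1 / 2 := min_le_left _ _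
  have hγ2 : γ * cp ≤ ε / 4 := by
    have : γ ≤ ε / 4 / cp := min_le_right _ _
    rwa [le_div_iff₀ hcp0] at this
  obtain ⟨k', hk'0, hk'⟩ := exists_small cp (1 - β) (ε / 4) h1β (by linarith)
  set k := min 1 k' with hk
  have hk0 : 0 < k := by positivity
  have hk1 : k ≤ 1 := min_le_left _ _
  have hk2 := hk' k hk0 (min_le_right _ _)
  set A := C / (1 - β) with hA
  have hA0 : 0 < A := by positivity
  set Λ := max 1 (max (32 * A / (γ * dp)) (8 * n * A / (γ / 16 * (β * dp)))) with hΛ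
  have hΛ1 : 1 ≤ Λ := (le_max_left _ _)
  have hΛ3 : 32 * A / (γ * dp) ≤ Λ := (le_max_left _ _).trans (le_max_right _ _)
  have hΛ4 : 8 * n * A / (γ / 16 * (β * dp)) ≤ Λ := (le_max_right _ _).trans (le_max_right _ _)
  have hΛsq : Λ ≤ Λ ^ 2 := le_self_pow₀ hΛ1 two_ne_zero
  set m := γ / 16 * (β * dp) with hm
  have hm0 : 0 < m := by positivity
  rw [div_le_iff₀ (by positivity)] at hΛ3 hΛ4
  obtain ⟨r1, hr10, hr1⟩ := flat (M := M) hg hp hβ0 hβ hβp hM hC (ε := ε / 2) (Λ := Λ + 2) (by linarith) (by linarith)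
  obtain ⟨r2, hr20, hr2⟩ := exists_small (4 * M) (1 + β) m (by linarith) hm0
  obtain ⟨r3, hr30, hr3⟩ := exists_small (4 * n * K * dp) 1 m (by linarith) hm0
  have hδ₁ := hg.hδ₁
  refine ⟨min (min r1 r2) (min r3 δ₁), by positivity, ?_⟩
  intro r hr0 hr
  have b1 := hr.trans_le ((min_le_left _ _).trans (min_le_left _ _))
  have b2 := hr.trans_le ((min_le_left _ _).trans (min_le_right _ _))
  have b3 := hr.trans_le ((min_le_right _ _).trans (min_le_left _ _))
  have b4 := hr.trans_le ((min_le_right _ _).trans (min_le_right _ _))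
  have hce : 0 < cp - ε / 2 := by linarith
  set N := max 1 (A / (cp - ε / 2)) with hN
  have hN1 : 1 ≤ N := le_max_left _ _
  have hN2 : A / (cp - ε / 2) ≤ N := le_max_right _ _
  rw [div_le_iff₀ hce] at hN2
  have hρ0 : 0 < r ^ (1 - β) := Real.rpow_pos_of_pos hr0 _
  have hkr : 0 < (k * r) ^ (-β) := Real.rpow_pos_of_pos (by positivity) _
  have hγk : cp - ε / 2 ≤ (1 - γ) * cp * ((1 + k) ^ (1 - β) - k ^ (1 - β)) := by
    have h1 : 1 ≤ (1 + k) ^ (1 - β) := Real.one_le_rpow (by linarith) h1β.le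
    have h2 : (1 - γ) * cp * (1 - k ^ (1 - β)) ≤ (1 - γ) * cp * ((1 + k) ^ (1 - β) - k ^ (1 - β)) := by
      have : 0 < 1 - γ := by linarith
      gcongr
    have h3 : 0 ≤ γ * (cp * k ^ (1 - β)) := by positivity
    linarith
  have hc2 : 4 * A / Λ ≤ γ / 8 * dp := by
    rw [div_le_iff₀ (by positivity)]
    linarith
  have hc3 : 4 * M * r ^ (1 + β) + 4 * n * K * dp * r + 8 * n * A / Λ ^ 2 < γ / 4 * (β * dp) := by
    have t1 := hr2 _ hr0 b2.le
    have t2 := hr3 _ hr0 b3.le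
    rw [Real.rpow_one] at t2
    have t3 : 8 * n * A / Λ ^ 2 ≤ m := by
      rw [div_le_iff₀ (by positivity)]
      have : m * Λ ≤ m * Λ ^ 2 := by gcongr
      linarith
    have : γ / 4 * (β * dp) = 4 * m := by rw [hm]; ring
    linarith
  refine ⟨N * (dp * (k * r) ^ (-β)), by positivity, ?_⟩
  intro v g Lv hs x hx hxr hvx z hz hzr hzx
  have hcr : ∀ y ∈ closure Ω, δ y ≤ r → |v y| ≤ A * r ^ (1 - β) := fun y hy hyr => by
    refine (hs.crude hg hβ0 hβ hy (by linarith)).trans ?_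
    have : δ y ^ (1 - β) ≤ r ^ (1 - β) := Real.rpow_le_rpow (hg.nonneg hy) hyr h1β.le
    gcongr
  have hzp := hg.pos z hz
  have hub : v z ≤ dp * (k * r) ^ (-β) * δ z := by
    refine barrier_core hg hp hβ0 hβ hβp hM hdp0 hcd hdp hs.cont (fun y hy => (hs.zero y hy).le) hs.hlap
      (fun y hy => by linarith [(abs_le.1 (hs.eqn y hy)).1]) hr0 b4 hA0
      (fun y hy hyr => (abs_le.1 (hcr y hy hyr)).2) hγ0 hγ1 hk0 hk1 hγk hΛ1 hc2 hc3 hz hzr ?_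
    intro y hy hyr hyn
    have hyx : ‖y - x‖ ≤ (Λ + 2) * r := by
      have := norm_sub_le_norm_sub_add_norm_sub y z x
      linarith
    have := hr1 v g Lv hs x hx y hy (by rw [hxr]; exact b1) (by rw [hxr, hyr]) (by rw [hxr]; exact hyx)
    rw [hxr] at this
    linarith
  have hN0 : 0 < N := by linarith
  have hlb : -(1 / N) * v z ≤ dp * (k * r) ^ (-β) * δ z := by
    refine barrier_core (w := fun y => -(1 / N) * v y) (g := fun y => (-(1 / N)) • g y)
      (Lw := fun y => -(1 / N) * Lv y) hg hp hβ0 hβ hβp hM hdp0 hcd hdp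
      (continuousOn_const.mul hs.cont) (fun y hy => by rw [hs.zero y hy, mul_zero])
      (fun y hy => (hs.hlap y hy).const_mul _) ?_ hr0 b4 hA0
      ?_ hγ0 hγ1 hk0 hk1 hγk hΛ1 hc2 hc3 hz hzr ?_
    · intro y hy
      have h1 := (abs_le.1 (hs.eqn y hy)).2
      have h2 : 0 ≤ ‖g y‖ ^ p := by positivity
      have h3 : 0 ≤ ‖(-(1 / N)) • g y‖ ^ p := by positivity
      have h4 : 1 / N * Lv y ≤ 1 / N * M := by
        have : Lv y ≤ M := by linarith
        gcongr
      have h5 : 1 / N * M ≤ 1 * M := by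
        have : 1 / N ≤ 1 := by rw [div_le_one hN0]; exact hN1
        gcongr
      linarith
    · intro y hy hyr
      have h1 := hcr y hy hyr
      have h2 : 1 / N ≤ 1 := by rw [div_le_one hN0]; exact hN1
      calc -(1 / N) * v y ≤ |-(1 / N) * v y| := le_abs_self _
        _ = 1 / N * |v y| := by rw [abs_mul, abs_neg, abs_of_pos (by positivity)]
        _ ≤ 1 * |v y| := by gcongr
        _ ≤ _ := by linarith
    · intro y hy hyr hyn
      have h1 := hcr y (subset_closure hy) hyr.le
      calc -(1 / N) * v y ≤ |-(1 / N) * v y| := le_abs_self _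
        _ = 1 / N * |v y| := by rw [abs_mul, abs_neg, abs_of_pos (by positivity)]
        _ ≤ 1 / N * (A * r ^ (1 - β)) := by gcongr
        _ = 1 / N * A * r ^ (1 - β) := by ring
        _ ≤ (cp - ε / 2) * r ^ (1 - β) := by
          gcongr
          rw [one_div, inv_mul_le_iff₀ hN0]
          exact hN2
  have hX : 0 < dp * (k * r) ^ (-β) * δ z := by positivity
  have h8 := mul_le_mul_of_nonneg_left hlb hN0.le
  have e8 : N * (-(1 / N) * v z) = - v z := by field_simp
  rw [e8] at h8
  have h9 : 1 * (dp * (k * r) ^ (-β) * δ z) ≤ N * (dp * (k * r) ^ (-β) * δ z) := by gcongr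
  rw [abs_le]
  constructor <;> linarith

end Barrier

section NonGBU
variable {n : ℕ}

local notation "E" => EuclideanSpace ℝ (Fin n)

variable {Ω : Set (EuclideanSpace ℝ (Fin n))} {δ : EuclideanSpace ℝ (Fin n) → ℝ} {K δ₁ p β M C : ℝ}

theorem grad_step {v : E → ℝ} {g : E → E} {Lv : E → ℝ} (hg : Geo Ω δ K δ₁) (hp : 2 < p)
    (hβ0 : 0 < β) (hβ : β < 1) (hβp : β * (p - 1) = 1) (hM : 0 ≤ M) (hC : 0 < C)
    (hs : Sol Ω δ p β M C v g Lv) {a : E} (ha : a ∈ frontier Ω) {η K₃ θ N : ℝ} (hη : 0 < η) (hK₃ : 0 < K₃)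
    (hθ0 : 0 < θ) (hθ : θ ≤ 1 / 2) (hθ2 : n * (4 * C ^ (p - 1) * θ) ≤ 1 / 2)
    (hv : ∀ x ∈ Ω, ‖x - a‖ < η → |v x| ≤ K₃ * δ x) (hN0 : 0 ≤ N)
    (hN : ∀ x ∈ Ω, ‖x - a‖ < η → ‖g x‖ * (η - ‖x - a‖) ≤ N)
    {x : E} (hx : x ∈ Ω) (hxa : ‖x - a‖ < η) :
    ‖g x‖ * (η - ‖x - a‖) ≤ n * (n * (3 / 2 * K₃ * η / θ) + M * η ^ 2) + N / 2 := by
  set d := η - ‖x - a‖ with hd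
  have hd0 : 0 < d := by linarith
  have hdη : d ≤ η := by linarith [norm_nonneg (x - a)]
  have hδx := hg.pos x hx
  have hδη : δ x ≤ η := by
    have := hg.lip x a
    rw [hg.zero a ha] at this
    linarith
  set m := min (δ x) d with hm
  have hm0 : 0 < m := by positivity
  have hm1 : m ≤ δ x := min_le_left _ _
  have hm2 : m ≤ d := min_le_right _ _
  set ρ := θ * m with hρ
  have hρ0 : 0 < ρ := by positivity
  have hρm : ρ ≤ m / 2 := by
    have : θ * m ≤ 1 / 2 * m := by gcongr
    linarith
  have hball : ∀ y ∈ closedBall x ρ, y ∈ Ω ∧ d / 2 ≤ η - ‖y - a‖ ∧ δ x / 2 ≤ δ y ∧ δ y ≤ 3 / 2 * δ x := by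
    intro y hy
    rw [mem_closedBall, dist_eq_norm] at hy
    have h1 := hg.lip x y
    rw [norm_sub_rev] at h1
    have h2 := hg.lip y x
    have h3 := norm_sub_le_norm_sub_add_norm_sub y x a
    exact ⟨hg.sub x hx y (by linarith), by linarith, by linarith, by linarith⟩
  have hCp : 0 < C ^ (p - 1) := Real.rpow_pos_of_pos hC _
  have hint := interp (S := 3 / 2 * K₃ * δ x) (N := M + 4 * C ^ (p - 1) * N / (δ x * d)) hρ0
    (fun y hy => hs.hlap y (hball y hy).1)
    (fun y hy => by
      obtain ⟨y1, y2, y3, y4⟩ := hball y hy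
      refine (hv y y1 (by linarith)).trans ?_
      have := mul_le_mul_of_nonneg_left y4 hK₃.le
      linarith)
    (fun y hy => by
      obtain ⟨y1, y2, y3, y4⟩ := hball y hy
      have h1 := hs.eqn y y1
      have hy0 := hg.pos y y1
      have h2 : |Lv y| ≤ M + ‖g y‖ ^ p := by
        have h2 : 0 ≤ ‖g y‖ ^ p := by positivity
        rw [abs_le] at h1 ⊢
        constructor <;> linarith
      refine h2.trans ?_
      have h3 : ‖g y‖ ^ (p - 1) ≤ C ^ (p - 1) / δ y := by
        have h4 : ‖g y‖ ^ (p - 1) ≤ (C * δ y ^ (-β)) ^ (p - 1) :=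
          Real.rpow_le_rpow (norm_nonneg _) (hs.gb y y1) (by linarith)
        rwa [Real.mul_rpow hC.le (by positivity), ← Real.rpow_mul hy0.le, neg_mul, hβp,
          Real.rpow_neg_one, ← div_eq_mul_inv] at h4
      have h5 : C ^ (p - 1) / δ y ≤ C ^ (p - 1) / (δ x / 2) := by gcongr
      have h6 : ‖g y‖ ≤ N / (d / 2) := by
        rw [le_div_iff₀ (by positivity)]
        refine le_trans ?_ (hN y y1 (by linarith))
        gcongr
      have h7 : ‖g y‖ ^ p = ‖g y‖ ^ (p - 1) * ‖g y‖ := by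
        rw [← Real.rpow_add_one' (norm_nonneg _) (by linarith)]; congr 1; ring
      rw [h7]
      have h8 : ‖g y‖ ^ (p - 1) * ‖g y‖ ≤ C ^ (p - 1) / (δ x / 2) * (N / (d / 2)) := by
        have := h3.trans h5
        gcongr
      have h9 : C ^ (p - 1) / (δ x / 2) * (N / (d / 2)) = 4 * C ^ (p - 1) * N / (δ x * d) := by
        rw [div_mul_div_comm, div_eq_div_iff (by positivity) (by positivity)]; ring
      linarith)
  have h1 := mul_le_mul_of_nonneg_right hint hd0.le
  have i1 : 3 / 2 * K₃ * δ x / ρ * d ≤ 3 / 2 * K₃ * η / θ := by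
    have h2 : δ x * d ≤ η * m := by
      rcases min_cases (δ x) d with h | h
      · rw [hm, h.1, mul_comm]; gcongr
      · rw [hm, h.1]; gcongr
    rw [hρ, div_mul_eq_mul_div, div_le_div_iff₀ (by positivity) hθ0]
    have h3 := mul_le_mul_of_nonneg_left h2 (by positivity : 0 ≤ 3 / 2 * K₃ * θ)
    linarith
  have i2 : M * ρ * d ≤ M * η ^ 2 := by
    have : ρ * d ≤ η * η := by
      have : ρ ≤ η := by linarith
      gcongr
    have := mul_le_mul_of_nonneg_left this hM
    linarith
  have i3 : 4 * C ^ (p - 1) * N / (δ x * d) * ρ * d ≤ 4 * C ^ (p - 1) * θ * N := by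
    have e : 4 * C ^ (p - 1) * N / (δ x * d) * ρ * d = 4 * C ^ (p - 1) * θ * N * (m / δ x) := by
      rw [hρ]; field_simp
    rw [e]
    have : m / δ x ≤ 1 := by rw [div_le_one hδx]; exact hm1
    have h2 : 0 ≤ 4 * C ^ (p - 1) * θ * N := by positivity
    exact mul_le_of_le_one_right h2 this
  have i4 := mul_le_mul_of_nonneg_right hθ2 hN0
  refine h1.trans ?_
  have hn0 : (0 : ℝ) ≤ n := by positivity
  have j1 := mul_le_mul_of_nonneg_left i1 hn0
  have j2 : n * (3 / 2 * K₃ * δ x) / ρ * d = n * (3 / 2 * K₃ * δ x / ρ * d) := by ring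
  have j3 : (n * (n * (3 / 2 * K₃ * δ x) / ρ + (M + 4 * C ^ (p - 1) * N / (δ x * d)) * ρ)) * d =
    n * (n * (3 / 2 * K₃ * δ x / ρ * d) + (M * ρ * d + 4 * C ^ (p - 1) * N / (δ x * d) * ρ * d)) := by ring
  rw [j3]
  have j4 : n * (n * (3 / 2 * K₃ * δ x / ρ * d) + (M * ρ * d + 4 * C ^ (p - 1) * N / (δ x * d) * ρ * d))
     ≤ n * (n * (3 / 2 * K₃ * η / θ) + (M * η ^ 2 + 4 * C ^ (p - 1) * θ * N)) := by gcongr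
  linarith

theorem grad_bound (hg : Geo Ω δ K δ₁) (hp : 2 < p)
    (hβ0 : 0 < β) (hβ : β < 1) (hβp : β * (p - 1) = 1) (hM : 0 ≤ M) (hC : 0 < C)
    {a : E} (ha : a ∈ frontier Ω) {η K₃ : ℝ} (hη : 0 < η) (hK₃ : 0 < K₃) :
    ∃ Q, ∀ v g Lv, Sol Ω δ p β M C v g Lv → (∃ B, ∀ x ∈ Ω, ‖g x‖ ≤ B) →
      (∀ x ∈ Ω, ‖x - a‖ < η → |v x| ≤ K₃ * δ x) → ∀ x ∈ Ω, ‖x - a‖ < η / 2 → ‖g x‖ ≤ Q := by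
  have hCp : 0 < C ^ (p - 1) := Real.rpow_pos_of_pos hC _
  set θ := min (1 / 2) (1 / (8 * (n + 1) * C ^ (p - 1))) with hθ
  have hθ0 : 0 < θ := by positivity
  have hθ1 : n * (4 * C ^ (p - 1) * θ) ≤ 1 / 2 := by
    have h1 : θ ≤ 1 / (8 * (n + 1) * C ^ (p - 1)) := min_le_right _ _
    rw [le_div_iff₀ (by positivity)] at h1
    have : 0 ≤ C ^ (p - 1) * θ := by positivity
    linarith
  set Q := n * (n * (3 / 2 * K₃ * η / θ) + M * η ^ 2) with hQ
  refine ⟨2 * Q / (η / 2), ?_⟩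
  intro v g Lv hs ⟨B, hB⟩ hv x hx hxa
  set S : Set ℝ := (fun x => ‖g x‖ * (η - ‖x - a‖)) '' {x | x ∈ Ω ∧ ‖x - a‖ < η} with hS
  have hbdd : BddAbove S := by
    refine ⟨B * η, ?_⟩
    rintro _ ⟨y, ⟨hy, hya⟩, rfl⟩
    have h1 := hB y hy
    have h2 : η - ‖y - a‖ ≤ η := by linarith [norm_nonneg (y - a)]
    have h3 : 0 ≤ η - ‖y - a‖ := by linarith
    have h4 : 0 ≤ B := (norm_nonneg _).trans h1
    dsimp only
    gcongr
  have hxS : ‖g x‖ * (η - ‖x - a‖) ∈ S := ⟨x, ⟨hx, by linarith⟩, rfl⟩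
  have hle : ∀ y ∈ Ω, ‖y - a‖ < η → ‖g y‖ * (η - ‖y - a‖) ≤ sSup S := fun y hy hya =>
    le_csSup hbdd ⟨y, ⟨hy, hya⟩, rfl⟩
  have hx0 : 0 ≤ ‖g x‖ * (η - ‖x - a‖) := mul_nonneg (norm_nonneg _) (by linarith)
  have hN0 : 0 ≤ sSup S := hx0.trans (le_csSup hbdd hxS)
  have hsup : sSup S ≤ Q + sSup S / 2 := by
    refine csSup_le ⟨_, hxS⟩ ?_
    rintro _ ⟨y, ⟨hy, hya⟩, rfl⟩
    exact grad_step hg hp hβ0 hβ hβp hM hC hs ha hη hK₃ hθ0 (min_le_left _ _) hθ1 hv hN0 hle hy hya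
  have h5 := le_csSup hbdd hxS
  rw [le_div_iff₀ (by positivity)]
  have h6 : ‖g x‖ * (η / 2) ≤ ‖g x‖ * (η - ‖x - a‖) := by
    gcongr
    linarith
  linarith

end NonGBU

section Geometry
variable {n : ℕ}

local notation "E" => EuclideanSpace ℝ (Fin n)

variable {Ω : Set (EuclideanSpace ℝ (Fin n))} {δ : EuclideanSpace ℝ (Fin n) → ℝ} {K δ₁ p β M C : ℝ}

theorem taylor_lip {f : E → ℝ} {b₀ : E} {R : ℝ} {L : NNReal}
    (hd : ∀ y ∈ ball b₀ R, DifferentiableAt ℝ f y)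
    (hL : LipschitzOnWith L (fderiv ℝ f) (ball b₀ R)) {b y : E} (hb : b ∈ ball b₀ R)
    (hy : y ∈ ball b₀ R) : |f y - f b - fderiv ℝ f b (y - b)| ≤ L * ‖y - b‖ ^ 2 := by
  have hseg : segment ℝ b y ⊆ ball b₀ R := (convex_ball b₀ R).segment_subset hb hy
  have hsz : ∀ z ∈ segment ℝ b y, ‖z - b‖ ≤ ‖y - b‖ := fun z hz => by
    obtain ⟨t, ht, rfl⟩ := (segment_eq_image' ℝ b y) ▸ hz
    rw [add_sub_cancel_left, norm_smul, Real.norm_eq_abs, abs_of_nonneg ht.1]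
    exact mul_le_of_le_one_left (norm_nonneg _) ht.2
  have := (convex_segment b y).norm_image_sub_le_of_norm_hasFDerivWithin_le'
    (f := f) (f' := fderiv ℝ f) (φ := fderiv ℝ f b) (C := L * ‖y - b‖)
    (fun z hz => (hd z (hseg hz)).hasFDerivAt.hasFDerivWithinAt)
    (fun z hz => by
      have h1 := hL.dist_le_mul z (hseg hz) b hb
      rw [dist_eq_norm, dist_eq_norm] at h1
      exact h1.trans (mul_le_mul_of_nonneg_left (hsz z hz) L.2))
    (left_mem_segment ℝ b y) (right_mem_segment ℝ b y)
  rw [Real.norm_eq_abs] at this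
  calc _ ≤ _ := this
    _ = _ := by ring

theorem ext_local (hc : IsC2Boundary Ω) {b₀ : E} (hb₀ : b₀ ∈ frontier Ω) :
    ∃ t ∈ nhdsWithin b₀ (frontier Ω), ∃ ρ > 0, ∀ b ∈ t, b ∈ frontier Ω → ∃ e : E, ‖e‖ = 1 ∧
      ∀ y ∈ Ω, 0 ≤ ‖y - b‖ ^ 2 + 2 * ρ * ⟪y - b, e⟫ := by
  obtain ⟨f, U, hU, hf, hne, hUΩ, hUf⟩ := hc b₀ hb₀
  have hfa : ContDiffAt ℝ 2 f b₀ := hf.contDiffAt hU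
  have hf1 : ContDiffAt ℝ 1 (fderiv ℝ f) b₀ := hfa.fderiv_right (by norm_num)
  obtain ⟨L, t, ht, hL⟩ := hf1.exists_lipschitzOnWith
  have hm : 0 < ‖fderiv ℝ f b₀‖ := norm_pos_iff.2 (hne b₀ (mem_of_mem_nhds hU))
  set m := ‖fderiv ℝ f b₀‖ / 2 with hmdef
  have hm0 : 0 < m := by positivity
  have hev : ∀ᶠ y in nhds b₀, m < ‖fderiv ℝ f y‖ :=
    (hf1.continuousAt.norm).eventually (lt_mem_nhds (by rw [hmdef]; linarith))
  have hde : ∀ᶠ y in nhds b₀, DifferentiableAt ℝ f y := by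
    filter_upwards [hfa.eventually (by simp)] with y hy
    exact hy.differentiableAt (by norm_num)
  obtain ⟨R, hR, hball⟩ := Metric.mem_nhds_iff.1
    (Filter.inter_mem (Filter.inter_mem hU ht) (Filter.inter_mem hev hde))
  have hL' : LipschitzOnWith L (fderiv ℝ f) (ball b₀ R) := hL.mono fun y hy => (hball hy).1.2
  have hd' : ∀ y ∈ ball b₀ R, DifferentiableAt ℝ f y := fun y hy => (hball hy).2.2
  refine ⟨ball b₀ (R / 2), mem_nhdsWithin_of_mem_nhds (ball_mem_nhds _ (by positivity)),
    min (R / 4) (m / (2 * (L + 1))), by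
      have : (0 : ℝ) ≤ L := L.2
      positivity, ?_⟩
  intro b hb hbf
  have hbR : b ∈ ball b₀ R := ball_subset_ball (by linarith) hb
  set ρ := min (R / 4) (m / (2 * (L + 1))) with hρ
  have hL0 : (0 : ℝ) ≤ L := L.2
  have hρ0 : 0 < ρ := by positivity
  have hρ1 : ρ ≤ R / 4 := min_le_left _ _
  have hρ2 : ρ * (2 * (L + 1)) ≤ m := by
    rw [← le_div_iff₀ (by positivity)]; exact min_le_right _ _
  set g : E := (InnerProductSpace.toDual ℝ E).symm (fderiv ℝ f b) with hgdef
  have hgn : ‖g‖ = ‖fderiv ℝ f b‖ := by rw [hgdef]; simp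
  have hgm : m < ‖g‖ := by rw [hgn]; exact (hball hbR).2.1
  have hg0 : 0 < ‖g‖ := hm0.trans hgm
  have hgi : ∀ w : E, fderiv ℝ f b w = ⟪g, w⟫ := fun w => by
    rw [hgdef, InnerProductSpace.toDual_symm_apply]
  refine ⟨-(‖g‖⁻¹ • g), by rw [norm_neg, norm_smul, norm_inv, norm_norm, inv_mul_cancel₀ hg0.ne'], ?_⟩
  intro y hy
  by_cases hyR : y ∈ ball b₀ R
  · have hfy : f y < 0 := by
      have : y ∈ U ∩ Ω := ⟨(hball hyR).1.1, hy⟩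
      rw [hUΩ] at this; exact this.2
    have hfb : f b = 0 := by
      have : b ∈ U ∩ frontier Ω := ⟨(hball hbR).1.1, hbf⟩
      rw [hUf] at this; exact this.2
    have h1 := (abs_le.1 (taylor_lip hd' hL' hbR hyR)).1
    rw [hgi, hfb] at h1
    have h2 : ⟪g, y - b⟫ ≤ L * ‖y - b‖ ^ 2 := by linarith
    rw [inner_neg_right, inner_smul_right, real_inner_comm]
    have h3 : ‖g‖⁻¹ * ⟪g, y - b⟫ ≤ ‖g‖⁻¹ * (L * ‖y - b‖ ^ 2) :=
      mul_le_mul_of_nonneg_left h2 (by positivity)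
    have h4 : 2 * ρ * (‖g‖⁻¹ * (L * ‖y - b‖ ^ 2)) ≤ ‖y - b‖ ^ 2 := by
      have : 2 * ρ * L * ‖g‖⁻¹ ≤ 1 := by
        rw [← div_eq_mul_inv, div_le_one hg0]; nlinarith
      calc _ = (2 * ρ * L * ‖g‖⁻¹) * ‖y - b‖ ^ 2 := by ring
        _ ≤ 1 * ‖y - b‖ ^ 2 := mul_le_mul_of_nonneg_right this (by positivity)
        _ = _ := one_mul _
    have h5 := mul_le_mul_of_nonneg_left h3 (by positivity : 0 ≤ 2 * ρ)
    linarith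
  · have h1 : R / 2 ≤ ‖y - b‖ := by
      rw [mem_ball, not_lt] at hyR
      rw [mem_ball] at hb
      have := dist_triangle y b b₀
      rw [← dist_eq_norm]; linarith
    have h2 : -(‖y - b‖ * 1) ≤ ⟪y - b, -(‖g‖⁻¹ • g)⟫ := by
      have h := abs_le.1 (abs_real_inner_le_norm (y - b) (-(‖g‖⁻¹ • g)))
      rw [norm_neg, norm_smul, norm_inv, norm_norm, inv_mul_cancel₀ hg0.ne'] at h
      exact h.1
    have h3 := mul_le_mul_of_nonneg_left h2 (by positivity : 0 ≤ 2 * ρ)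
    have h4 : 2 * ρ * ‖y - b‖ ≤ ‖y - b‖ * ‖y - b‖ :=
      mul_le_mul_of_nonneg_right (by linarith) (norm_nonneg _)
    rw [pow_two]; linarith

theorem ext_unif (hb : Bornology.IsBounded Ω) (hc : IsC2Boundary Ω) :
    ∃ ρ > 0, ∀ b ∈ frontier Ω, ∃ e : E, ‖e‖ = 1 ∧
      ∀ y ∈ Ω, 0 ≤ ‖y - b‖ ^ 2 + 2 * ρ * ⟪y - b, e⟫ := by
  have hK : IsCompact (frontier Ω) := by
    refine Metric.isCompact_of_isClosed_isBounded isClosed_frontier ?_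
    exact hb.closure.subset frontier_subset_closure
  have hmono : ∀ {ρ ρ' : ℝ} {b e y : E}, 0 < ρ' → ρ' ≤ ρ →
      0 ≤ ‖y - b‖ ^ 2 + 2 * ρ * ⟪y - b, e⟫ → 0 ≤ ‖y - b‖ ^ 2 + 2 * ρ' * ⟪y - b, e⟫ := by
    intro ρ ρ' b e y h0 h1 h2
    rcases le_total 0 ⟪y - b, e⟫ with h | h
    · positivity
    · have := mul_le_mul_of_nonpos_right h1 h
      linarith
  have := hK.induction_on (p := fun s => ∃ ρ > 0, ∀ b ∈ s, b ∈ frontier Ω → ∃ e : E, ‖e‖ = 1 ∧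
      ∀ y ∈ Ω, 0 ≤ ‖y - b‖ ^ 2 + 2 * ρ * ⟪y - b, e⟫)
    ⟨1, one_pos, fun b hb => absurd hb (notMem_empty b)⟩
    (fun s t hst ⟨ρ, h0, h⟩ => ⟨ρ, h0, fun b hb => h b (hst hb)⟩)
    (fun s t ⟨ρ, h0, h⟩ ⟨ρ', h0', h'⟩ => ⟨min ρ ρ', lt_min h0 h0', fun b hb hbf => by
      rcases hb with hb | hb
      · obtain ⟨e, he, H⟩ := h b hb hbf
        exact ⟨e, he, fun y hy => hmono (lt_min h0 h0') (min_le_left _ _) (H y hy)⟩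
      · obtain ⟨e, he, H⟩ := h' b hb hbf
        exact ⟨e, he, fun y hy => hmono (lt_min h0 h0') (min_le_right _ _) (H y hy)⟩⟩)
    (fun b hb => ext_local hc hb)
  obtain ⟨ρ, h0, h⟩ := this
  exact ⟨ρ, h0, fun b hb => h b hb hb⟩

theorem normal_unique {b e ν : E} {ρ s : ℝ} (hρ : 0 < ρ) (hs : 0 < s) (he : ‖e‖ = 1) (hν : ‖ν‖ = 1)
    (hext : ∀ y ∈ Ω, 0 ≤ ‖y - b‖ ^ 2 + 2 * ρ * ⟪y - b, e⟫)
    (hint : ∀ y, ‖y - (b + s • ν)‖ < s → y ∈ Ω) : ν = e := by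
  by_contra hne
  have hw : 0 < ‖ν - e‖ ^ 2 := by
    have := norm_pos_iff.2 (sub_ne_zero.2 hne); positivity
  set k := 1 - ⟪ν, e⟫ with hk
  have hk2 : ‖ν - e‖ ^ 2 = 2 * k := by
    rw [norm_sub_sq_real, hν, he, hk]; ring
  have hk0 : 0 < k := by linarith
  set τ := min s ρ / 2 with hτ
  have hτ0 : 0 < τ := by have := lt_min hs hρ; rw [hτ]; linarith
  have hτs : τ < s := by have := min_le_left s ρ; have := lt_min hs hρ; rw [hτ]; linarith
  have hτρ : τ < ρ := by have := min_le_right s ρ; have := lt_min hs hρ; rw [hτ]; linarith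
  have hwν : ⟪ν - e, ν⟫ = k := by
    rw [inner_sub_left, real_inner_self_eq_norm_sq, hν, real_inner_comm, hk]; ring
  have hwe : ⟪ν - e, e⟫ = -k := by
    rw [inner_sub_left, real_inner_self_eq_norm_sq, he, hk]; ring
  have hmem : b + τ • (ν - e) ∈ Ω := by
    apply hint
    have h1 : b + τ • (ν - e) - (b + s • ν) = τ • (ν - e) - s • ν := by abel
    rw [h1]
    have h2 : ‖τ • (ν - e) - s • ν‖ ^ 2 < s ^ 2 := by
      rw [norm_sub_sq_real, inner_smul_left, inner_smul_right, hwν, norm_smul, norm_smul, hν,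
        mul_pow, hk2]
      simp only [Real.norm_eq_abs, sq_abs, mul_one, conj_trivial]
      have : 0 < τ * k * (s - τ) := mul_pos (mul_pos hτ0 hk0) (by linarith)
      linarith
    exact lt_of_pow_lt_pow_left₀ 2 hs.le h2
  have h := hext _ hmem
  rw [add_sub_cancel_left, inner_smul_left, hwe, norm_smul, mul_pow, hk2] at h
  simp only [Real.norm_eq_abs, sq_abs, conj_trivial] at h
  have : 0 < τ * k * (ρ - τ) := mul_pos (mul_pos hτ0 hk0) (by linarith)
  linarith

theorem amgm_norm {w ν : E} {R : ℝ} (hR : 0 < R) (hν : ‖ν‖ = 1) :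
    ‖w + R • ν‖ ≤ R + ⟪w, ν⟫ + ‖w‖ ^ 2 / (2 * R) := by
  have h1 : ‖w + R • ν‖ ^ 2 = ‖w‖ ^ 2 + 2 * R * ⟪w, ν⟫ + R ^ 2 := by
    rw [norm_add_sq_real, inner_smul_right, norm_smul, hν, Real.norm_eq_abs, mul_one, sq_abs]; ring
  have h2 : R + ⟪w, ν⟫ + ‖w‖ ^ 2 / (2 * R) = (‖w + R • ν‖ ^ 2 + R ^ 2) / (2 * R) := by
    rw [h1]; field_simp; ring
  rw [h2, le_div_iff₀ (by positivity)]
  nlinarith [sq_nonneg (‖w + R • ν‖ - R)]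

theorem geo_exists (hΩo : IsOpen Ω) (hΩb : Bornology.IsBounded Ω) (hc : IsC2Boundary Ω)
    (hδ : ∀ x, δ x = infDist x (frontier Ω)) {δ₀ : ℝ} (hδ₀ : 0 < δ₀) {ν : E → E}
    (hν1 : ∀ b ∈ frontier Ω, ‖ν b‖ = 1 ∧
      ∀ s ∈ Ioo (0 : ℝ) δ₀, b + s • ν b ∈ Ω ∧ δ (b + s • ν b) = s)
    (hne : (frontier Ω).Nonempty) :
    ∃ K, Geo Ω δ K (δ₀ / 4) ∧ ∀ b ∈ frontier Ω, ∀ r, 0 < r → r < δ₀ / 4 → ∀ y ∈ closure Ω,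
      |δ y - r - ⟪y - (b + r • ν b), ν b⟫| ≤ K * ‖y - (b + r • ν b)‖ ^ 2 := by
  obtain ⟨ρ, hρ, hext⟩ := ext_unif hΩb hc
  have hKc : IsCompact (frontier Ω) :=
    Metric.isCompact_of_isClosed_isBounded isClosed_frontier
      (hΩb.closure.subset frontier_subset_closure)
  have hdisj : ∀ x ∈ Ω, x ∉ frontier Ω := fun x hx hf => by
    rw [frontier, hΩo.interior_eq] at hf; exact hf.2 hx
  have hlip : ∀ x y, δ x ≤ δ y + ‖x - y‖ := fun x y => by
    rw [hδ, hδ, ← dist_eq_norm]; exact infDist_le_infDist_add_dist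
  have hzero : ∀ x ∈ frontier Ω, δ x = 0 := fun x hx => by rw [hδ]; exact infDist_zero_of_mem hx
  have hpos : ∀ x ∈ Ω, 0 < δ x := fun x hx => by
    rw [hδ]; exact (isClosed_frontier.notMem_iff_infDist_pos hne).1 (hdisj x hx)
  have hle : ∀ x, ∀ q ∈ frontier Ω, δ x ≤ ‖x - q‖ := fun x q hq => by
    rw [hδ, ← dist_eq_norm]; exact infDist_le_dist_of_mem hq
  have hseg : ∀ x ∈ Ω, ∀ z, z ∉ Ω → ∃ q ∈ segment ℝ x z, q ∈ frontier Ω := fun x hx z hz => by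
    have := (convex_segment (𝕜 := ℝ) x z).isPreconnected
    by_contra hno
    push Not at hno
    have hcov : segment ℝ x z ⊆ Ω ∪ (closure Ω)ᶜ := fun q hq => by
      by_cases h : q ∈ Ω
      · exact Or.inl h
      · refine Or.inr fun hc => hno q hq ?_
        rw [frontier, hΩo.interior_eq]; exact ⟨hc, h⟩
    obtain ⟨q, -, hq1, hq2⟩ := this Ω (closure Ω)ᶜ hΩo isClosed_closure.isOpen_compl hcov
      ⟨x, left_mem_segment ℝ x z, hx⟩
      ⟨z, right_mem_segment ℝ x z, (hcov (right_mem_segment ℝ x z)).resolve_left hz⟩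
    exact hq2 (subset_closure hq1)
  have hsub : ∀ x ∈ Ω, ∀ y, ‖y - x‖ < δ x → y ∈ Ω := fun x hx y hy => by
    by_contra hyn
    obtain ⟨q, hq, hqf⟩ := hseg x hx y hyn
    have h1 := hle x q hqf
    have h2 : ‖q - x‖ ≤ ‖y - x‖ := norm_sub_le_of_mem_segment hq
    rw [norm_sub_rev] at h1
    linarith
  -- the exterior condition with the given normal
  have hextν : ∀ b ∈ frontier Ω, ∀ y ∈ Ω, 0 ≤ ‖y - b‖ ^ 2 + 2 * ρ * ⟪y - b, ν b⟫ := by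
    intro b hb
    obtain ⟨e, he, H⟩ := hext b hb
    have h := (hν1 b hb).2 (δ₀ / 2) ⟨by linarith, by linarith⟩
    have : ν b = e := normal_unique hρ (by linarith : 0 < δ₀ / 2) he (hν1 b hb).1 H
      (fun y hy => hsub _ h.1 y (by rw [h.2]; exact hy))
    rw [this]; exact H
  have hproj : ∀ x ∈ Ω, ∃ b ∈ frontier Ω, x = b + δ x • ν b := by
    intro x hx
    obtain ⟨b, hb, hbd⟩ := hKc.exists_infDist_eq_dist hne x
    rw [← hδ, dist_eq_norm] at hbd
    have hd := hpos x hx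
    have h1 : x = b + δ x • ((δ x)⁻¹ • (x - b)) := by
      rw [smul_inv_smul₀ hd.ne']; abel
    refine ⟨b, hb, ?_⟩
    have h2 : (δ x)⁻¹ • (x - b) = ν b := normal_unique hρ hd (hν1 b hb).1
      (by rw [norm_smul, norm_inv, Real.norm_eq_abs, abs_of_pos hd, ← hbd, inv_mul_cancel₀ hd.ne'])
      (hextν b hb) (fun y hy => hsub x hx y (by rw [← h1] at hy; exact hy))
    rw [← h2]; exact h1
  have hupper : ∀ b ∈ frontier Ω, ∀ y ∈ closure Ω, δ y ≤ ‖y - b + ρ • ν b‖ - ρ := by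
    intro b hb
    have hν := (hν1 b hb).1
    have key : ∀ y ∈ Ω, ρ ≤ ‖y - b + ρ • ν b‖ := fun y hy => by
      have := hextν b hb y hy
      have h2 : ρ ^ 2 ≤ ‖y - b + ρ • ν b‖ ^ 2 := by
        rw [norm_add_sq_real, inner_smul_right, norm_smul, hν, Real.norm_eq_abs, mul_one, sq_abs]
        linarith
      exact le_of_sq_le_sq h2 (norm_nonneg _)
    have hcl : ∀ y ∈ closure Ω, ρ ≤ ‖y - b + ρ • ν b‖ := fun y hy =>
      closure_minimal (s := Ω) (t := {y | ρ ≤ ‖y - b + ρ • ν b‖}) key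
        (isClosed_le continuous_const (by fun_prop)) hy
    have hz : b - ρ • ν b ∉ Ω := fun h => by
      have := key _ h
      have h0 : b - ρ • ν b - b + ρ • ν b = 0 := by abel
      rw [h0, norm_zero] at this; linarith
    intro y hy
    by_cases hyΩ : y ∈ Ω
    · obtain ⟨q, hq, hqf⟩ := hseg y hyΩ _ hz
      have h1 := hle y q hqf
      have h2 := hcl q (frontier_subset_closure hqf)
      have h3 := dist_add_dist_of_mem_segment hq
      rw [dist_eq_norm, dist_eq_norm, dist_eq_norm] at h3
      have e1 : q - (b - ρ • ν b) = q - b + ρ • ν b := by abel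
      have e2 : y - (b - ρ • ν b) = y - b + ρ • ν b := by abel
      rw [e1, e2] at h3
      linarith
    · have hyf : y ∈ frontier Ω := by
        rw [frontier, hΩo.interior_eq]; exact ⟨hy, hyΩ⟩
      rw [hzero y hyf]; linarith [hcl y hy]
  set K := 1 / (2 * ρ) + 2 / δ₀ with hK
  have hquad : ∀ b ∈ frontier Ω, ∀ r, 0 < r → r < δ₀ / 4 → ∀ y ∈ closure Ω,
      |δ y - r - ⟪y - (b + r • ν b), ν b⟫| ≤ K * ‖y - (b + r • ν b)‖ ^ 2 := by
    intro b hb r hr0 hr y hy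
    have hν := (hν1 b hb).1
    set w := y - (b + r • ν b) with hw
    have hwn : 0 ≤ ‖w‖ ^ 2 := by positivity
    have hup : δ y - r - ⟪w, ν b⟫ ≤ ‖w‖ ^ 2 / (2 * ρ) := by
      have h1 := hupper b hb y hy
      have h2 := amgm_norm (w := w) (R := ρ + r) (by linarith) hν
      have e1 : w + (ρ + r) • ν b = y - b + ρ • ν b := by rw [hw, add_smul]; abel
      rw [e1] at h2
      have h3 : ‖w‖ ^ 2 / (2 * (ρ + r)) ≤ ‖w‖ ^ 2 / (2 * ρ) :=
        div_le_div_of_nonneg_left hwn (by positivity) (by linarith)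
      linarith
    have hlo : -(‖w‖ ^ 2 * 2 / δ₀) ≤ δ y - r - ⟪w, ν b⟫ := by
      have h1 := hlip (b + (δ₀ / 2) • ν b) y
      rw [((hν1 b hb).2 (δ₀ / 2) ⟨by linarith, by linarith⟩).2] at h1
      have h2 := amgm_norm (w := -w) (R := δ₀ / 2 - r) (by linarith) hν
      have e1 : -w + (δ₀ / 2 - r) • ν b = b + (δ₀ / 2) • ν b - y := by rw [hw, sub_smul]; abel
      rw [e1, inner_neg_left, norm_neg] at h2
      have h3 : ‖w‖ ^ 2 / (2 * (δ₀ / 2 - r)) ≤ ‖w‖ ^ 2 / (δ₀ / 2) :=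
        div_le_div_of_nonneg_left hwn (by positivity) (by linarith)
      have h4 : ‖w‖ ^ 2 / (δ₀ / 2) = ‖w‖ ^ 2 * 2 / δ₀ := by field_simp
      linarith
    have hKe : K * ‖w‖ ^ 2 = ‖w‖ ^ 2 / (2 * ρ) + ‖w‖ ^ 2 * 2 / δ₀ := by rw [hK]; ring
    have p1 : 0 ≤ ‖w‖ ^ 2 / (2 * ρ) := by positivity
    have p2 : 0 ≤ ‖w‖ ^ 2 * 2 / δ₀ := by positivity
    rw [abs_le, hKe]; constructor <;> linarith
  have hnrm : ∀ b ∈ frontier Ω, ∀ s, 0 < s → s < δ₀ / 4 → b + s • ν b ∈ Ω ∧ δ (b + s • ν b) = s :=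
    fun b hb s h0 h1 => (hν1 b hb).2 s ⟨h0, by linarith⟩
  refine ⟨K, ⟨hΩo, hΩb.isCompact_closure, by positivity, by positivity, hlip, hzero, hpos, hsub,
    ?_, ?_, ?_⟩, hquad⟩
  · intro x hx hd
    obtain ⟨b, hb, hxb⟩ := hproj x hx
    refine ⟨ν b, (hν1 b hb).1, fun y hy => ?_⟩
    have := hquad b hb (δ x) (hpos x hx) hd y hy
    rwa [← hxb] at this
  · exact fun b hb => ⟨ν b, (hν1 b hb).1, hnrm b hb⟩
  · intro x hx hd
    obtain ⟨b, hb, hxb⟩ := hproj x hx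
    exact ⟨b, hb, ν b, (hν1 b hb).1, hxb, hnrm b hb⟩

end Geometry

section GradAsym
variable {n : ℕ}

local notation "E" => EuclideanSpace ℝ (Fin n)

variable {Ω : Set (EuclideanSpace ℝ (Fin n))} {δ : EuclideanSpace ℝ (Fin n) → ℝ} {K δ₁ p β M C : ℝ}

theorem pow_taylor_one {τ : ℝ} (hβ0 : 0 < β) (hβ : β < 1) (hτ : 0 < τ) (hτ2 : τ ≤ 2) :
    |τ ^ (1 - β) - 1 - (1 - β) * (τ - 1)| ≤ (τ - 1) ^ 2 := by
  have hup := rpow_one_add_le_one_add_mul_self (s := τ - 1) (by linarith) (p := 1 - β)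
    (by linarith) (by linarith)
  have hup2 := rpow_one_add_le_one_add_mul_self (s := τ - 1) (by linarith) (p := β)
    (by linarith) (by linarith)
  rw [add_sub_cancel] at hup hup2
  have hpos : 0 < τ ^ β := Real.rpow_pos_of_pos hτ _
  have hprod : τ ^ (1 - β) * τ ^ β = τ := by
    rw [← Real.rpow_add hτ]; simp
  have h1 : 1 - β * (τ - 1) ≤ (τ ^ β)⁻¹ := by
    rw [le_inv_comm₀ (by nlinarith) hpos, ← one_div, le_div_iff₀ (by nlinarith)]
    nlinarith [sq_nonneg (β * (τ - 1)), mul_le_mul_of_nonneg_right hup2 (by nlinarith : 0 ≤ 1 - β * (τ - 1))]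
  have h2 : τ ^ (1 - β) = τ * (τ ^ β)⁻¹ := by
    rw [eq_mul_inv_iff_mul_eq₀ hpos.ne', hprod]
  have h3 := mul_le_mul_of_nonneg_left h1 hτ.le
  rw [← h2] at h3
  have h4 : 0 ≤ (1 - β) * (τ - 1) ^ 2 := mul_nonneg (by linarith) (sq_nonneg _)
  rw [abs_le]; constructor
  · nlinarith
  · nlinarith [sq_nonneg (τ - 1)]

theorem pow_taylor {r s : ℝ} (hβ0 : 0 < β) (hβ : β < 1) (hr : 0 < r) (hs : 0 < s) (hs2 : s ≤ 2 * r) :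
    |s ^ (1 - β) - r ^ (1 - β) - (1 - β) * r ^ (-β) * (s - r)| ≤
      ((s - r) / r) ^ 2 * r ^ (1 - β) := by
  have h := pow_taylor_one (τ := s / r) hβ0 hβ (by positivity)
    (by rw [div_le_iff₀ hr]; linarith)
  have hr0 : 0 < r ^ (1 - β) := Real.rpow_pos_of_pos hr _
  have e1 : s ^ (1 - β) = (s / r) ^ (1 - β) * r ^ (1 - β) := by
    rw [← Real.mul_rpow (by positivity) hr.le, div_mul_cancel₀ _ hr.ne']
  have e2 : r ^ (-β) * (s - r) = (s / r - 1) * r ^ (1 - β) := by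
    have : r ^ (1 - β) = r ^ (-β) * r := by
      rw [← Real.rpow_add_one hr.ne']; congr 1; ring
    rw [this]; field_simp
  have e3 : s ^ (1 - β) - r ^ (1 - β) - (1 - β) * r ^ (-β) * (s - r)
      = ((s / r) ^ (1 - β) - 1 - (1 - β) * (s / r - 1)) * r ^ (1 - β) := by
    rw [mul_assoc, e2, e1]; ring
  have e4 : (s - r) / r = s / r - 1 := by field_simp
  rw [e3, abs_mul, abs_of_pos hr0, e4]
  exact mul_le_mul_of_nonneg_right h hr0.le

theorem grad_core {v : E → ℝ} {g : E → E} {Lv : E → ℝ} (hg : Geo Ω δ K δ₁) (hp : 2 < p)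
    (hβ0 : 0 < β) (hβ : β < 1) (hβp : β * (p - 1) = 1) (hM : 0 ≤ M) (hC : 0 < C)
    (hs : Sol Ω δ p β M C v g Lv) {cp dp : ℝ} (hcp : 0 < cp) (hdp0 : 0 < dp)
    (hcd : cp * (1 - β) = dp) {a ν : E} (hν : ‖ν‖ = 1)
    (hnrm : ∀ s, 0 < s → s < δ₁ → a + s • ν ∈ Ω ∧ δ (a + s • ν) = s) {r θ ε₁ : ℝ}
    (hε₁ : 0 < ε₁) (hr : 0 < r) (hr1 : r ≤ 1) (hrδ : 2 * r < δ₁) (hθ0 : 0 < θ) (hθ : θ ≤ 1 / 4)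
    (hquad : ∀ y ∈ closure Ω, |δ y - r - ⟪y - (a + r • ν), ν⟫| ≤ K * ‖y - (a + r • ν)‖ ^ 2)
    (hasy : ∀ s, 0 < s → s ≤ 2 * r → |v (a + s • ν) - cp * s ^ (1 - β)| ≤ ε₁ * s ^ (1 - β))
    (hflat : ∀ x ∈ Ω, ∀ y ∈ Ω, δ x ≤ 2 * r → δ x = δ y → ‖y - x‖ ≤ 1 * δ x →
      v y - v x ≤ ε₁ * δ x ^ (1 - β)) :
    ‖g (a + r • ν) - (dp * r ^ (-β)) • ν‖ ≤
      n * (n * (4 * ε₁ / θ + (cp + dp * K) * θ) + (M + 4 * C ^ p) * θ) * r ^ (-β) := by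
  have hK := hg.hK
  have hrα : 0 < r ^ (1 - β) := Real.rpow_pos_of_pos hr _
  have hrβ : 0 < r ^ (-β) := Real.rpow_pos_of_pos hr _
  have hrαβ : r ^ (1 - β) = r ^ (-β) * r := by
    rw [← Real.rpow_add_one hr.ne']; congr 1; ring
  set x₀ := a + r • ν with hx₀
  obtain ⟨hx₀Ω, hx₀δ⟩ := hnrm r hr (by linarith)
  rw [← hx₀] at hx₀Ω hx₀δ
  have hCp : 0 < C ^ p := Real.rpow_pos_of_pos hC _
  -- points of the small ball
  have hball : ∀ y ∈ closedBall x₀ (θ * r), y ∈ Ω ∧ |δ y - r| ≤ θ * r ∧ ‖y - x₀‖ ≤ θ * r := by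
    intro y hy
    rw [mem_closedBall, dist_eq_norm] at hy
    have hθr : θ * r ≤ 1 / 4 * r := mul_le_mul_of_nonneg_right hθ hr.le
    refine ⟨hg.sub x₀ hx₀Ω y (by rw [hx₀δ]; linarith), ?_, hy⟩
    have h1 := hg.lip y x₀
    have h2 := hg.lip x₀ y
    rw [norm_sub_rev] at h2
    rw [hx₀δ] at h1 h2
    rw [abs_le]; constructor <;> linarith
  have hθr : θ * r ≤ 1 / 4 * r := mul_le_mul_of_nonneg_right hθ hr.le
  have hw : ∀ y ∈ closedBall x₀ (θ * r), HasLap (fun y => v y - (cp * r ^ (1 - β) +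
      dp * r ^ (-β) * ⟪y - x₀, ν⟫)) y (g y - (dp * r ^ (-β)) • ν) (Lv y) := by
    intro y hy
    have h := (hs.hlap y (hball y hy).1).sub ((HasLap.const (cp * r ^ (1 - β)) y).add
      ((HasLap.lin ν x₀ y).const_mul (dp * r ^ (-β))))
    simpa using h
  have hS : ∀ y ∈ closedBall x₀ (θ * r), |v y - (cp * r ^ (1 - β) + dp * r ^ (-β) * ⟪y - x₀, ν⟫)|
      ≤ (4 * ε₁ + (cp + dp * K) * θ ^ 2) * r ^ (1 - β) := by
    intro y hy
    obtain ⟨hyΩ, hyδ, hyn⟩ := hball y hy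
    obtain ⟨hyδ1, hyδ2⟩ := abs_le.1 hyδ
    set s := δ y with hsdef
    have hs0 : 0 < s := hg.pos y hyΩ
    have hs2 : s ≤ 2 * r := by linarith
    obtain ⟨hx'Ω, hx'δ⟩ := hnrm s hs0 (by linarith)
    have hdist : ‖y - (a + s • ν)‖ ≤ 1 * s := by
      have e : y - (a + s • ν) = (y - x₀) + (r - s) • ν := by rw [hx₀, sub_smul]; abel
      have := norm_add_le (y - x₀) ((r - s) • ν)
      rw [← e, norm_smul, hν, mul_one, Real.norm_eq_abs, abs_sub_comm] at this
      linarith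
    have f1 := hflat _ hx'Ω y hyΩ (by rw [hx'δ]; exact hs2) (by rw [hx'δ]) (by rw [hx'δ]; exact hdist)
    have f2 := hflat y hyΩ _ hx'Ω hs2 (by rw [hx'δ]) (by rw [norm_sub_rev]; exact hdist)
    rw [hx'δ] at f1
    rw [← hsdef] at f2
    have f3 := abs_le.1 (hasy s hs0 hs2)
    have hsα : s ^ (1 - β) ≤ 2 * r ^ (1 - β) := by
      calc s ^ (1 - β) ≤ (2 * r) ^ (1 - β) := Real.rpow_le_rpow hs0.le hs2 (by linarith)
        _ = 2 ^ (1 - β) * r ^ (1 - β) := Real.mul_rpow (by norm_num) hr.le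
        _ ≤ 2 * r ^ (1 - β) := by
          refine mul_le_mul_of_nonneg_right ?_ hrα.le
          calc (2 : ℝ) ^ (1 - β) ≤ 2 ^ (1 : ℝ) :=
                Real.rpow_le_rpow_of_exponent_le (by norm_num) (by linarith)
            _ = 2 := by simp
    have f4 := mul_le_mul_of_nonneg_left hsα hε₁.le
    have f5 : |v y - cp * s ^ (1 - β)| ≤ 4 * ε₁ * r ^ (1 - β) := by
      rw [abs_le]; constructor <;> linarith [f3.1, f3.2]
    have f6 : |cp * s ^ (1 - β) - cp * r ^ (1 - β) - dp * r ^ (-β) * (s - r)| ≤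
        cp * θ ^ 2 * r ^ (1 - β) := by
      have h := pow_taylor hβ0 hβ hr hs0 hs2
      have e : cp * s ^ (1 - β) - cp * r ^ (1 - β) - dp * r ^ (-β) * (s - r) =
          cp * (s ^ (1 - β) - r ^ (1 - β) - (1 - β) * r ^ (-β) * (s - r)) := by
        rw [← hcd]; ring
      rw [e, abs_mul, abs_of_pos hcp, mul_assoc cp (θ ^ 2)]
      refine mul_le_mul_of_nonneg_left (h.trans (mul_le_mul_of_nonneg_right ?_ hrα.le)) hcp.le
      have : |(s - r) / r| ≤ θ := by
        rw [abs_div, abs_of_pos hr, div_le_iff₀ hr]; exact hyδ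
      rw [← sq_abs]
      exact pow_le_pow_left₀ (abs_nonneg _) this 2
    have f7 : |dp * r ^ (-β) * (s - r) - dp * r ^ (-β) * ⟪y - x₀, ν⟫| ≤
        dp * K * θ ^ 2 * r ^ (1 - β) := by
      have h := hquad y (subset_closure hyΩ)
      rw [← mul_sub, abs_mul, abs_of_pos (mul_pos hdp0 hrβ)]
      have h1 : K * ‖y - x₀‖ ^ 2 ≤ K * (θ ^ 2 * r) := by
        refine mul_le_mul_of_nonneg_left ?_ hK.le
        calc ‖y - x₀‖ ^ 2 ≤ (θ * r) ^ 2 := pow_le_pow_left₀ (norm_nonneg _) hyn 2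
          _ = (θ ^ 2 * r) * r := by ring
          _ ≤ (θ ^ 2 * r) * 1 := mul_le_mul_of_nonneg_left hr1 (by positivity)
          _ = _ := mul_one _
      calc _ ≤ dp * r ^ (-β) * (K * (θ ^ 2 * r)) :=
            mul_le_mul_of_nonneg_left (h.trans h1) (by positivity)
        _ = _ := by rw [hrαβ]; ring
    have e : v y - (cp * r ^ (1 - β) + dp * r ^ (-β) * ⟪y - x₀, ν⟫) =
        (v y - cp * s ^ (1 - β)) + (cp * s ^ (1 - β) - cp * r ^ (1 - β) - dp * r ^ (-β) * (s - r))
        + (dp * r ^ (-β) * (s - r) - dp * r ^ (-β) * ⟪y - x₀, ν⟫) := by ring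
    rw [e]
    refine (abs_add_three _ _ _).trans ?_
    calc _ ≤ 4 * ε₁ * r ^ (1 - β) + cp * θ ^ 2 * r ^ (1 - β) + dp * K * θ ^ 2 * r ^ (1 - β) := by
          linarith
      _ = _ := by ring
  have hN : ∀ y ∈ closedBall x₀ (θ * r), |Lv y| ≤ (M + 4 * C ^ p) * (r ^ (-β) * r⁻¹) := by
    intro y hy
    obtain ⟨hyΩ, hyδ, hyn⟩ := hball y hy
    obtain ⟨hyδ1, hyδ2⟩ := abs_le.1 hyδ
    have hs0 : 0 < δ y := hg.pos y hyΩ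
    have h1 : ‖g y‖ ^ p ≤ C ^ p * (4 * (r ^ (-β) * r⁻¹)) := by
      calc ‖g y‖ ^ p ≤ (C * δ y ^ (-β)) ^ p :=
            Real.rpow_le_rpow (norm_nonneg _) (hs.gb y hyΩ) (by linarith)
        _ = C ^ p * δ y ^ (-(1 + β)) := by
            rw [Real.mul_rpow hC.le (by positivity), ← Real.rpow_mul hs0.le]
            congr 2; linarith
        _ ≤ C ^ p * (r / 2) ^ (-(1 + β)) := by
            refine mul_le_mul_of_nonneg_left ?_ hCp.le
            exact Real.rpow_le_rpow_of_nonpos (by positivity) (by linarith) (by linarith)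
        _ = C ^ p * ((2 : ℝ) ^ (1 + β) * (r ^ (-β) * r⁻¹)) := by
            rw [Real.div_rpow hr.le (by norm_num), Real.rpow_neg (by norm_num : (0:ℝ) ≤ 2),
              div_inv_eq_mul, ← Real.rpow_neg_one r, ← Real.rpow_add hr]
            rw [show -(1 + β) = -β + -1 by ring]; ring
        _ ≤ _ := by
            refine mul_le_mul_of_nonneg_left (mul_le_mul_of_nonneg_right ?_ (by positivity)) hCp.le
            calc (2 : ℝ) ^ (1 + β) ≤ 2 ^ (2 : ℝ) :=
                Real.rpow_le_rpow_of_exponent_le (by norm_num) (by linarith)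
              _ = 4 := by norm_num
    have h2 := abs_le.1 (hs.eqn y hyΩ)
    have h3 : 0 ≤ ‖g y‖ ^ p := by positivity
    have h4 : 1 ≤ r ^ (-β) * r⁻¹ := by
      have := Real.one_le_rpow_of_pos_of_le_one_of_nonpos hr hr1 (by linarith : -β ≤ 0)
      have h5 := (one_le_inv₀ hr).2 hr1
      nlinarith
    have h5 := mul_le_mul_of_nonneg_left h4 hM
    rw [abs_le]; constructor <;> linarith [h2.1, h2.2]
  have := interp (mul_pos hθ0 hr) hw hS hN
  refine this.trans (le_of_eq ?_)
  rw [hrαβ]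
  field_simp

theorem grad_asym {v : E → ℝ} {g : E → E} {Lv : E → ℝ} (hg : Geo Ω δ K δ₁) (hp : 2 < p)
    (hβ0 : 0 < β) (hβ : β < 1) (hβp : β * (p - 1) = 1) (hM : 0 ≤ M) (hC : 0 < C)
    (hs : Sol Ω δ p β M C v g Lv) {cp dp : ℝ} (hcp : 0 < cp) (hdp0 : 0 < dp)
    (hcd : cp * (1 - β) = dp) {a ν : E} (hν : ‖ν‖ = 1)
    (hnrm : ∀ s, 0 < s → s < δ₁ → a + s • ν ∈ Ω ∧ δ (a + s • ν) = s)
    (hquad : ∀ r, 0 < r → r < δ₁ → ∀ y ∈ closure Ω,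
      |δ y - r - ⟪y - (a + r • ν), ν⟫| ≤ K * ‖y - (a + r • ν)‖ ^ 2)
    (hasy : ∀ ε > 0, ∃ r₀ > 0, ∀ s, 0 < s → s < r₀ →
      |v (a + s • ν) - cp * s ^ (1 - β)| ≤ ε * s ^ (1 - β)) {ε : ℝ} (hε : 0 < ε) :
    ∃ r₀ > 0, ∀ r, 0 < r → r < r₀ → ‖g (a + r • ν) - (dp * r ^ (-β)) • ν‖ ≤ ε * r ^ (-β) := by
  have hK := hg.hK
  have hCp : 0 < C ^ p := Real.rpow_pos_of_pos hC _
  set D := (n : ℝ) * (n * (cp + dp * K) + (M + 4 * C ^ p)) + 1 with hD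
  have hD0 : 0 < D := by positivity
  set θ := min (1 / 4) (ε / (2 * D)) with hθ
  have hθ0 : 0 < θ := by positivity
  have hθ1 : D * θ ≤ ε / 2 := by
    have : θ ≤ ε / (2 * D) := min_le_right _ _
    rw [le_div_iff₀ (by positivity)] at this; linarith
  set ε₁ := ε * θ / (8 * (n ^ 2 + 1)) with hε₁
  have hε₁0 : 0 < ε₁ := by positivity
  obtain ⟨r₁, hr₁, H1⟩ := hasy ε₁ hε₁0
  obtain ⟨r₂, hr₂, H2⟩ := flat (M := M) hg hp hβ0 hβ hβp hM hC hε₁0 one_pos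
  have hδ₁ := hg.hδ₁
  refine ⟨min (min 1 (δ₁ / 2)) (min (r₁ / 2) (r₂ / 2)), by positivity, fun r hr hrr => ?_⟩
  simp only [lt_min_iff] at hrr
  obtain ⟨⟨q1, q2⟩, q3, q4⟩ := hrr
  have := grad_core hg hp hβ0 hβ hβp hM hC hs hcp hdp0 hcd hν hnrm hε₁0 hr q1.le (by linarith) hθ0
    (min_le_left _ _) (hquad r hr (by linarith)) (fun s h0 h1 => H1 s h0 (by linarith))
    (fun x hx y hy h1 h2 h3 => H2 v g Lv hs x hx y hy (by linarith) h2 h3)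
  refine this.trans (mul_le_mul_of_nonneg_right ?_ (by positivity))
  have e1 : (n : ℝ) * (n * (4 * ε₁ / θ + (cp + dp * K) * θ) + (M + 4 * C ^ p) * θ) =
      n ^ 2 * (4 * ε₁ / θ) + (D - 1) * θ := by rw [hD]; ring
  have e2 : (n : ℝ) ^ 2 * (4 * ε₁ / θ) ≤ ε / 2 := by
    have : (n : ℝ) ^ 2 * (4 * ε₁ / θ) = n ^ 2 / (n ^ 2 + 1) * (ε / 2) := by
      rw [hε₁]; field_simp; ring
    rw [this]
    refine mul_le_of_le_one_left (by positivity) ?_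
    rw [div_le_one (by positivity)]; linarith
  rw [e1]; linarith

end GradAsym

section LinBound
variable {n : ℕ}

local notation "E" => EuclideanSpace ℝ (Fin n)

variable {Ω : Set (EuclideanSpace ℝ (Fin n))} {δ : EuclideanSpace ℝ (Fin n) → ℝ} {K δ₁ p β M C : ℝ}

theorem Sol.lin_bound {v : E → ℝ} {g : E → E} {Lv : E → ℝ} (hg : Geo Ω δ K δ₁)
    (hs : Sol Ω δ p β M C v g Lv) {B : ℝ} (hB : ∀ x ∈ Ω, ‖g x‖ ≤ B) :
    ∃ B', ∀ x ∈ Ω, v x ≤ B' * δ x := by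
  obtain ⟨A, hA⟩ := hg.cpt.exists_bound_of_continuousOn hs.cont
  have hδ₁ := hg.hδ₁
  refine ⟨max B (A / δ₁), fun x h1 => ?_⟩
  have hdp := hg.pos x h1
  rcases lt_or_ge (δ x) δ₁ with hd | hd
  · obtain ⟨b, hb, ν, hν, hxb, hray⟩ := hg.proj x h1 hd
    set d := δ x with hdd
    set f : ℝ → ℝ := fun s => v (b + s • ν) with hf
    have hl : ∀ s : ℝ, HasDerivAt (fun s : ℝ => b + s • ν) ν s := fun s => by
      simpa using ((hasDerivAt_id s).smul_const ν).const_add b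
    have hfd : ∀ s ∈ Ioo 0 d, HasDerivAt f ⟪g (b + s • ν), ν⟫ s := fun s hs' => by
      have h2 := hray s hs'.1 (hs'.2.trans hd)
      have := (hs.hlap _ h2.1).hasFDerivAt.comp_hasDerivAt s (hl s)
      simp only [InnerProductSpace.toDual_apply_apply] at this
      exact this
    have hfc : ContinuousOn f (Icc 0 d) := by
      refine hs.cont.comp (by fun_prop) fun s hs' => ?_
      rcases eq_or_lt_of_le hs'.1 with h | h
      · rw [← h]; simpa using frontier_subset_closure hb
      · exact subset_closure (hray s h (lt_of_le_of_lt hs'.2 hd)).1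
    obtain ⟨c, hc, hce⟩ := exists_hasDerivAt_eq_slope f _ hdp hfc hfd
    have f0 : f 0 = 0 := by simp [hf, hs.zero b hb]
    have f1 : f d = v x := by simp only [hf]; rw [← hxb]
    rw [f0, f1, sub_zero, sub_zero, eq_div_iff hdp.ne'] at hce
    have h4 := abs_real_inner_le_norm (g (b + c • ν)) ν
    rw [hν, mul_one] at h4
    have h5 := (abs_le.1 h4).2.trans (hB _ (hray c hc.1 (hc.2.trans hd)).1)
    rw [← hce]
    exact mul_le_mul_of_nonneg_right (h5.trans (le_max_left _ _)) hdp.le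
  · have h2 := hA x (subset_closure h1)
    rw [Real.norm_eq_abs] at h2
    have hA0 : 0 ≤ A := (abs_nonneg _).trans h2
    calc v x ≤ A := (abs_le.1 h2).2
      _ = A / δ₁ * δ₁ := by field_simp
      _ ≤ A / δ₁ * δ x := mul_le_mul_of_nonneg_left hd (by positivity)
      _ ≤ _ := mul_le_mul_of_nonneg_right (le_max_right _ _) hdp.le

end LinBound

theorem stmt14 {n : ℕ} (hn : 1 ≤ n)
    -- the exponents and constants
    (p β cp dp : ℝ) (hp : 2 < p) (hβ : β = 1 / (p - 1))
    (hcp : cp = β ^ β / (1 - β)) (hdp : dp = β ^ β)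
    -- the bounded domain Ω with C² boundary
    (Ω : Set (EuclideanSpace ℝ (Fin n))) (hΩo : IsOpen Ω) (hΩb : Bornology.IsBounded Ω) (hΩc2 : IsC2Boundary Ω)
    -- the distance to the boundary
    (δ : EuclideanSpace ℝ (Fin n) → ℝ) (hδ : ∀ x, δ x = infDist x (frontier Ω))
    -- δ₀ and the boundary neighborhood Ωδ = {x ∈ Ω : δ(x) < δ₀}
    (δ₀ : ℝ) (hδ₀ : 0 < δ₀)
    (Ωδ : Set (EuclideanSpace ℝ (Fin n))) (hΩδ : Ωδ = {x ∈ Ω | δ x < δ₀})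
    -- δ is C² on Ωδ
    (hδC2 : ContDiffOn ℝ 2 δ Ωδ)
    -- every x ∈ Ωδ has a unique nearest boundary point P x
    (P : EuclideanSpace ℝ (Fin n) → EuclideanSpace ℝ (Fin n))
    (hP : ∀ x ∈ Ωδ, P x ∈ frontier Ω ∧ dist x (P x) = δ x ∧
      ∀ b ∈ frontier Ω, dist x b = δ x → b = P x)
    -- interior sphere condition of radius δ₀ at every boundary point
    (hsph : ∀ b ∈ frontier Ω, ∃ y, ball y δ₀ ⊆ Ω ∧ dist y b = δ₀)
    -- the inward unit normal field ν
    (ν : EuclideanSpace ℝ (Fin n) → EuclideanSpace ℝ (Fin n))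
    (hν1 : ∀ b ∈ frontier Ω, ‖ν b‖ = 1 ∧
      ∀ s ∈ Ioo (0 : ℝ) δ₀, b + s • ν b ∈ Ω ∧ δ (b + s • ν b) = s)
    (hν2 : ∀ x ∈ Ωδ, ν x = ν (P x) ∧ HasGradientAt δ (ν x) x)
    -- the solution u on [0,T], with spatial gradient G, spatial Hessian H and
    -- time derivative u'
    (T : ℝ) (hT : 0 < T)
    (u : EuclideanSpace ℝ (Fin n) → ℝ → ℝ)
    (G : EuclideanSpace ℝ (Fin n) → ℝ → EuclideanSpace ℝ (Fin n))
    (H : EuclideanSpace ℝ (Fin n) → ℝ → (EuclideanSpace ℝ (Fin n) →L[ℝ] EuclideanSpace ℝ (Fin n)))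
    (u' : EuclideanSpace ℝ (Fin n) → ℝ → ℝ)
    -- u is continuous on Ω̄ × [0,T] and vanishes on ∂Ω × [0,T]
    (hu_cont : ContinuousOn (fun q : EuclideanSpace ℝ (Fin n) × ℝ => u q.1 q.2) (closure Ω ×ˢ Icc 0 T))
    (hu_bd : ∀ b ∈ frontier Ω, ∀ t ∈ Icc (0 : ℝ) T, u b t = 0)
    -- u is continuously differentiable in x on Ω̄ × [0,T), with spatial gradient G
    (hG : ∀ t ∈ Ico (0 : ℝ) T, ∀ x ∈ closure Ω,
      HasGradientWithinAt (fun y => u y t) (G x t) (closure Ω) x)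
    (hG_cont : ContinuousOn (fun q : EuclideanSpace ℝ (Fin n) × ℝ => G q.1 q.2) (closure Ω ×ˢ Ico 0 T))
    -- on Ω × (0,T], u has spatial gradient G, spatial Hessian H and time derivative u',
    -- all continuous there
    (hG2 : ∀ t ∈ Ioc (0 : ℝ) T, ∀ x ∈ Ω, HasGradientAt (fun y => u y t) (G x t) x)
    (hH : ∀ t ∈ Ioc (0 : ℝ) T, ∀ x ∈ Ω, HasFDerivAt (fun y => G y t) (H x t) x)
    (hu' : ∀ t ∈ Ioc (0 : ℝ) T, ∀ x ∈ Ω, HasDerivAt (fun s => u x s) (u' x t) t)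
    (hreg : ContinuousOn (fun q : EuclideanSpace ℝ (Fin n) × ℝ =>
      (u q.1 q.2, G q.1 q.2, H q.1 q.2, u' q.1 q.2)) (Ω ×ˢ Ioc 0 T))
    -- the PDE uₜ - Δu = |∇u|^p on Ω × (0,T]
    (hPDE : ∀ t ∈ Ioc (0 : ℝ) T, ∀ x ∈ Ω,
      u' x t - ∑ i : Fin n, ⟪H x t (EuclideanSpace.single i (1 : ℝ)),
        EuclideanSpace.single i (1 : ℝ)⟫ = ‖G x t‖ ^ p)
    -- a priori bounds: |uₜ| ≤ M on Ω × [T/2,T] and the Bernstein estimate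
    (M : ℝ) (hM : ∀ x ∈ Ω, ∀ t ∈ Icc (T / 2) T, |u' x t| ≤ M)
    (C₀ : ℝ) (hC₀ : ∀ x ∈ Ω, ∀ t ∈ Ico (0 : ℝ) T, ‖G x t‖ ≤ C₀ * ((δ x) ^ (-β) + 1))
    -- a ∈ ∂Ω is a gradient blow-up point:
    -- limsup of |∇u(x,t)| as t → T⁻, x → a equals ∞
    (a : EuclideanSpace ℝ (Fin n)) (ha : a ∈ frontier Ω)
    (hGBU : ∀ K : ℝ, ∀ η > 0, ∃ x ∈ Ω, ∃ t ∈ Ioo (T - η) T,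
      0 < t ∧ dist x a < η ∧ K ≤ ‖G x t‖)
    :
    ∀ ε > 0, ∀ᶠ r in nhdsWithin (0 : ℝ) (Ioi 0),
      dp - ε ≤ r ^ β * |⟪G (a + r • ν a) T, ν (a + r • ν a)⟫| := by
  have hp1 : 0 < p - 1 := by linarith
  have hβ0 : 0 < β := by rw [hβ]; positivity
  have hβ1 : β < 1 := by rw [hβ, div_lt_one hp1]; linarith
  have hβp : β * (p - 1) = 1 := by rw [hβ]; field_simp
  have hdp0 : 0 < dp := by rw [hdp]; positivity
  have h1β : 0 < 1 - β := by linarith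
  have hcd : cp * (1 - β) = dp := by rw [hcp, hdp]; field_simp
  have hcp0 : 0 < cp := by rw [hcp]; positivity
  have hdpp : dp ^ (p - 1) = β := by
    rw [hdp, ← Real.rpow_mul hβ0.le, hβp, Real.rpow_one]
  obtain ⟨K, hg, hquad⟩ := geo_exists hΩo hΩb hΩc2 hδ hδ₀ hν1 ⟨a, ha⟩
  have hνa := (hν1 a ha).1
  have hray : ∀ s, 0 < s → s < δ₀ / 4 → a + s • ν a ∈ Ω ∧ δ (a + s • ν a) = s :=
    fun s h0 h1 => (hν1 a ha).2 s ⟨h0, by linarith⟩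
  -- the solutions at fixed times
  obtain ⟨D₀, hD₀⟩ := hg.cpt.exists_bound_of_continuousOn hg.cont.continuousOn
  set D := |D₀| + 1 with hD
  have hD0 : 0 < D := by positivity
  have hDb : ∀ x ∈ Ω, δ x ≤ D := fun x hx => by
    have h1 := hD₀ x (subset_closure hx)
    rw [Real.norm_eq_abs] at h1
    have h2 := le_abs_self (δ x)
    have h3 := le_abs_self D₀
    linarith
  set C := (|C₀| + 1) * (1 + D ^ β) with hC
  have hC0 : 0 < C := by positivity
  have hgb1 : ∀ t ∈ Ico (0 : ℝ) T, ∀ x ∈ Ω, ‖G x t‖ ≤ C * δ x ^ (-β) := fun t ht x hx => by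
    have hd := hg.pos x hx
    have h1 := hC₀ x hx t ht
    have h2 : 1 ≤ D ^ β * δ x ^ (-β) := by
      rw [Real.rpow_neg hd.le, ← div_eq_mul_inv, ← Real.div_rpow hD0.le hd.le]
      exact Real.one_le_rpow ((one_le_div hd).2 (hDb x hx)) hβ0.le
    have h3 : C₀ ≤ |C₀| + 1 := by have := le_abs_self C₀; linarith
    have h4 : 0 ≤ δ x ^ (-β) + 1 := by positivity
    calc ‖G x t‖ ≤ C₀ * (δ x ^ (-β) + 1) := h1
      _ ≤ (|C₀| + 1) * (δ x ^ (-β) + 1) := mul_le_mul_of_nonneg_right h3 h4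
      _ ≤ (|C₀| + 1) * (δ x ^ (-β) + D ^ β * δ x ^ (-β)) :=
          mul_le_mul_of_nonneg_left (by linarith) (by positivity)
      _ = _ := by rw [hC]; ring
  have hGlim : ∀ x ∈ Ω, Tendsto (fun t => G x t) (nhdsWithin T (Iio T)) (nhds (G x T)) := by
    intro x hx
    have h1 : ContinuousOn (fun q : EuclideanSpace ℝ (Fin n) × ℝ => G q.1 q.2) (Ω ×ˢ Ioc 0 T) :=
      hreg.snd.fst
    have h2 : ContinuousOn (fun t : ℝ => G x t) (Ioc 0 T) :=
      h1.comp (f := fun t : ℝ => (x, t)) (by fun_prop) (fun t ht => ⟨hx, ht⟩)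
    have h3 := (h2 T ⟨hT, le_refl T⟩).tendsto
    rw [← nhdsWithin_Ioo_eq_nhdsLT hT]
    exact h3.mono_left (nhdsWithin_mono _ Ioo_subset_Ioc_self)
  have hulim : ∀ x ∈ Ω, Tendsto (fun t => u x t) (nhdsWithin T (Iio T)) (nhds (u x T)) := by
    intro x hx
    have h2 : ContinuousOn (fun t : ℝ => u x t) (Icc 0 T) :=
      hu_cont.comp (f := fun t : ℝ => (x, t)) (by fun_prop) (fun t ht => ⟨subset_closure hx, ht⟩)
    have h3 := (h2 T ⟨hT.le, le_refl T⟩).tendsto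
    rw [← nhdsWithin_Ioo_eq_nhdsLT hT]
    exact h3.mono_left (nhdsWithin_mono _ Ioo_subset_Icc_self)
  have hgb : ∀ t ∈ Icc (0 : ℝ) T, ∀ x ∈ Ω, ‖G x t‖ ≤ C * δ x ^ (-β) := fun t ht x hx => by
    rcases eq_or_lt_of_le ht.2 with h | h
    · rw [h]
      refine le_of_tendsto (hGlim x hx).norm ?_
      rw [← nhdsWithin_Ioo_eq_nhdsLT hT]
      filter_upwards [self_mem_nhdsWithin] with s hs
      exact hgb1 s ⟨hs.1.le, hs.2⟩ x hx
    · exact hgb1 t ⟨ht.1, h⟩ x hx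
  have hsol : ∀ t ∈ Icc (T / 2) T, Sol Ω δ p β |M| C (fun x => u x t) (fun x => G x t)
      (fun x => lap (H x t)) := by
    intro t ht
    have ht0 : t ∈ Ioc 0 T := ⟨by linarith [ht.1], ht.2⟩
    have ht1 : t ∈ Icc 0 T := ⟨ht0.1.le, ht.2⟩
    refine ⟨?_, fun x hx => hu_bd x hx t ht1, ?_, ?_, hgb t ht1⟩
    · exact hu_cont.comp (f := fun x : EuclideanSpace ℝ (Fin n) => (x, t)) (by fun_prop)
        (fun x hx => ⟨hx, ht1⟩)
    · intro x hx
      refine ⟨fun y => G y t, H x t, ?_, hH t ht0 x hx, rfl, rfl⟩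
      filter_upwards [hΩo.mem_nhds hx] with y hy
      exact hG2 t ht0 y hy
    · intro x hx
      have h1 := hPDE t ht0 x hx
      have h2 := hM x hx t ht
      have h3 : lap (H x t) + ‖G x t‖ ^ p = u' x t := by
        rw [← h1, lap]; ring
      show |lap (H x t) + ‖G x t‖ ^ p| ≤ |M|
      rw [h3]; exact h2.trans (le_abs_self M)
  have hGbd : ∀ t ∈ Ico (T / 2) T, ∃ B, ∀ x ∈ Ω, ‖G x t‖ ≤ B := by
    intro t ht
    have ht0 : t ∈ Ico 0 T := ⟨by linarith [ht.1], ht.2⟩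
    have h1 : ContinuousOn (fun x => G x t) (closure Ω) :=
      hG_cont.comp (f := fun x : EuclideanSpace ℝ (Fin n) => (x, t)) (by fun_prop)
        (fun x hx => ⟨hx, ht0⟩)
    obtain ⟨B, hB⟩ := hg.cpt.exists_bound_of_continuousOn h1
    exact ⟨B, fun x hx => hB x (subset_closure hx)⟩
  have hM0 : 0 ≤ |M| := abs_nonneg M
  -- lower bound of u at time T along the normal
  have hlow : ∀ ε > 0, ∃ r₀ > 0, ∀ s, 0 < s → s < r₀ →
      (cp - ε) * s ^ (1 - β) ≤ u (a + s • ν a) T := by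
    intro ε₀ hε₀
    set ε := min ε₀ (cp / 2) with hε
    have hε0 : 0 < ε := by positivity
    have hεc : ε < cp := by
      have := min_le_right ε₀ (cp / 2); linarith
    obtain ⟨r₀, hr₀, H1⟩ := barrier_sol (M := |M|) (C := C) hg hp hβ0 hβ1 hβp hM0 hC0 hdp0 hcd hdpp hε0 hεc
    refine ⟨min r₀ (δ₀ / 4), by positivity, fun s hs0 hs => ?_⟩
    have hs1 := hs.trans_le (min_le_left _ _)
    have hs2 := hs.trans_le (min_le_right _ _)
    have hsp : 0 < s ^ (1 - β) := Real.rpow_pos_of_pos hs0 _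
    refine (mul_le_mul_of_nonneg_right (sub_le_sub_left (min_le_left ε₀ (cp / 2)) cp) hsp.le).trans ?_
    by_contra hcon
    push Not at hcon
    obtain ⟨hxΩ, hxδ⟩ := hray s hs0 hs2
    obtain ⟨K₃, hK₃, H2⟩ := H1 s hs0 hs1
    obtain ⟨Q, H3⟩ := grad_bound (p := p) (β := β) (M := |M|) (C := C) hg hp hβ0 hβ1 hβp hM0 hC0 ha hs0 hK₃
    have hev := (hulim _ hxΩ).eventually (gt_mem_nhds hcon)
    rw [eventually_nhdsWithin_iff] at hev
    obtain ⟨η₁, hη₁, H4⟩ := Metric.eventually_nhds_iff.1 hev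
    obtain ⟨x, hx, t, ht, ht0, hxa, hQ⟩ := hGBU (Q + 1) (min η₁ (min (s / 2) (T / 2))) (by positivity)
    have m1 : min η₁ (min (s / 2) (T / 2)) ≤ η₁ := min_le_left _ _
    have m2 : min η₁ (min (s / 2) (T / 2)) ≤ s / 2 := (min_le_right _ _).trans (min_le_left _ _)
    have m3 : min η₁ (min (s / 2) (T / 2)) ≤ T / 2 := (min_le_right _ _).trans (min_le_right _ _)
    have htT : t ∈ Icc (T / 2) T := ⟨by linarith [ht.1], ht.2.le⟩
    have hut : u (a + s • ν a) t < (cp - ε) * s ^ (1 - β) := by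
      refine H4 ?_ ht.2
      rw [Real.dist_eq, abs_lt]; constructor <;> linarith [ht.1, ht.2]
    have hb := H3 _ _ _ (hsol t htT) (hGbd t ⟨htT.1, ht.2⟩) (fun z hz hza => by
      refine H2 _ _ _ (hsol t htT) _ hxΩ hxδ hut.le z hz ?_ ?_
      · have := hg.lip z a
        rw [hg.zero a ha] at this; linarith
      · have e : z - (a + s • ν a) = (z - a) - s • ν a := by abel
        have := norm_sub_le (z - a) (s • ν a)
        rw [← e, norm_smul, hνa, mul_one, Real.norm_eq_abs, abs_of_pos hs0] at this
        linarith) x hx (by rw [← dist_eq_norm]; linarith)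
    have hb' : ‖G x t‖ ≤ Q := hb
    linarith
  have hup : ∀ ε > 0, ∃ r₀ > 0, ∀ s, 0 < s → s < r₀ →
      u (a + s • ν a) T ≤ (cp + ε) * s ^ (1 - β) := by
    intro ε hε
    obtain ⟨r₀, hr₀, H1⟩ := upper (M := |M|) (C := C) hg hp hβ0 hβ1 hβp hM0 hC0 hdp0 hcd hdpp hε
    refine ⟨min r₀ (δ₀ / 4), by positivity, fun s hs0 hs => ?_⟩
    have hs1 := hs.trans_le (min_le_left _ _)
    have hs2 := hs.trans_le (min_le_right _ _)
    obtain ⟨hxΩ, hxδ⟩ := hray s hs0 hs2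
    refine le_of_tendsto (hulim _ hxΩ) ?_
    rw [← nhdsWithin_Ioo_eq_nhdsLT (by linarith : T / 2 < T)]
    filter_upwards [self_mem_nhdsWithin] with t ht
    have htT : t ∈ Icc (T / 2) T := ⟨ht.1.le, ht.2.le⟩
    obtain ⟨B, hB⟩ := hGbd t ⟨ht.1.le, ht.2⟩
    have := H1 _ _ _ (hsol t htT) ((hsol t htT).lin_bound hg hB) _ hxΩ (by rw [hxδ]; exact hs1)
    rw [hxδ] at this
    exact this
  intro ε hε
  obtain ⟨r₀, hr₀, H⟩ := grad_asym hg hp hβ0 hβ1 hβp hM0 hC0 (hsol T ⟨by linarith, le_refl T⟩) hcp0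
    hdp0 hcd hνa hray (hquad a ha) (fun ε hε => by
      obtain ⟨r₁, hr₁, A1⟩ := hlow ε hε
      obtain ⟨r₂, hr₂, A2⟩ := hup ε hε
      refine ⟨min r₁ r₂, lt_min hr₁ hr₂, fun s hs0 hs => ?_⟩
      have a1 := A1 s hs0 (hs.trans_le (min_le_left _ _))
      have a2 := A2 s hs0 (hs.trans_le (min_le_right _ _))
      rw [abs_le]; constructor <;> linarith) hε
  rw [eventually_nhdsWithin_iff]
  filter_upwards [gt_mem_nhds (lt_min hr₀ hδ₀)] with r hr hr0
  have hr0' : 0 < r := hr0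
  have hr1 := H r hr0' (hr.trans_le (min_le_left _ _))
  obtain ⟨hxΩ, hxδ⟩ := (hν1 a ha).2 r ⟨hr0', hr.trans_le (min_le_right _ _)⟩
  have hmem : a + r • ν a ∈ Ωδ := by
    rw [hΩδ]; exact ⟨hxΩ, by rw [hxδ]; exact hr.trans_le (min_le_right _ _)⟩
  have hPa : a = P (a + r • ν a) := by
    refine (hP _ hmem).2.2 a ha ?_
    rw [hxδ, dist_eq_norm, add_sub_cancel_left, norm_smul, hνa, mul_one, Real.norm_eq_abs,
      abs_of_pos hr0']
  have hνx : ν (a + r • ν a) = ν a := by rw [(hν2 _ hmem).1, ← hPa]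
  rw [hνx]
  set g := G (a + r • ν a) T with hgdef
  have h1 : |⟪g - (dp * r ^ (-β)) • ν a, ν a⟫| ≤ ε * r ^ (-β) := by
    have := abs_real_inner_le_norm (g - (dp * r ^ (-β)) • ν a) (ν a)
    rw [hνa, mul_one] at this
    exact this.trans hr1
  rw [inner_sub_left, inner_smul_left, real_inner_self_eq_norm_sq, hνa] at h1
  simp only [conj_trivial, one_pow, mul_one] at h1
  have h2 := (abs_le.1 h1).1
  have h3 := le_abs_self ⟪g, ν a⟫
  have h4 : (dp - ε) * r ^ (-β) ≤ |⟪g, ν a⟫| := by linarith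
  have hrp : 0 < r ^ β := Real.rpow_pos_of_pos hr0' _
  have h5 := mul_le_mul_of_nonneg_left h4 hrp.le
  have h6 : r ^ β * ((dp - ε) * r ^ (-β)) = dp - ε := by
    rw [Real.rpow_neg hr0'.le]; field_simp
  linarith
end
end

section
/- Fix p > 2, k ∈ (0, d_p), M > 0 and a function ε ↦ C_ε from (0,1) to (0,∞). There exists r₀ > 0, depending only on n, p, k, M and the function ε ↦ C_ε, with the following property. Let ω ⊆ ℝⁿ be open, let a ∈ ℝⁿ and e a unit vector with the open segment {a + se : 0 < s < R} contained in ω for some R > 0, let t₀ < t₁, and let v, its first and second spatial derivatives and its first time derivative be continuous on ω × [t₀, t₁], with v_t − Δv = |∇v|^p in ω × (t₀, t₁) and |v_t| ≤ M in ω × (t₀, t₁). Suppose that for every ε ∈ (0,1), every s ∈ (0, R), every t ∈ (t₀, t₁) and every unit vector τ orthogonal to e, one has |∇v(a+se, t)·τ|^p + |τ·(D²v(a+se, t))τ| ≤ ε s^{−βp} + C_ε. If ∇v(a+re, t)·e ≤ k r^{−β} for some r ∈ (0, min{r₀, R}) and some t ∈ (t₀, t₁), then ∇v(a+se, t)·e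 ≤ k s^{−β} for all s ∈ (0, r). -/
open Set Metric Filter RealInnerProductSpace

noncomputable section

set_option linter.unusedVariables false

/-- Backward barrier argument in one variable. -/
theorem aux_barrier (h h' : ℝ → ℝ) (s r : ℝ) (hsr : s < r)
    (hd : ∀ x ∈ Icc s r, HasDerivAt h (h' x) x) (hr : h r ≤ 0)
    (hpos : ∀ x ∈ Icc s r, h x = 0 → 0 < h' x) : h s ≤ 0 := by
  have hd' : ∀ x ∈ Icc (-r) (-s), HasDerivAt (fun y => h (-y)) (-(h' (-x))) x := by
    intro x hx
    have h1 := hd (-x) ⟨by linarith [hx.2], by linarith [hx.1]⟩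
    have h2 := h1.scomp x (hasDerivAt_neg x)
    simpa [Function.comp_def] using h2
  have key := image_le_of_deriv_right_lt_deriv_boundary' (f := fun y => h (-y))
    (f' := fun x => -(h' (-x))) (a := -r) (b := -s) (B := fun _ => (0 : ℝ)) (B' := fun _ => (0 : ℝ))
    (fun x hx => (hd' x hx).continuousAt.continuousWithinAt)
    (fun x hx => (hd' x (Ico_subset_Icc_self hx)).hasDerivWithinAt)
    (by simpa using hr) continuousOn_const
    (fun x hx => (hasDerivAt_const x (0 : ℝ)).hasDerivWithinAt)
    (by
      intro x hx h0
      have := hpos (-x) ⟨by linarith [hx.2], by linarith [hx.1]⟩ h0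
      simpa using this)
  have := key (x := -s) ⟨by linarith, le_refl _⟩
  simpa using this

/-- Norm bound by normal and tangential parts. -/
theorem aux_norm {n : ℕ} (p A : ℝ) (hp : 2 < p) (hA : 0 ≤ A)
    (G e : EuclideanSpace ℝ (Fin n)) (he : ‖e‖ = 1)
    (h : ∀ τ : EuclideanSpace ℝ (Fin n), ‖τ‖ = 1 → ⟪τ, e⟫ = 0 → |⟪G, τ⟫| ^ p ≤ A) :
    ‖G‖ ≤ |⟪G, e⟫| + A ^ (1 / p) := by
  set w := G - ⟪G, e⟫ • e with hw
  have hee : ⟪e, e⟫ = 1 := by rw [real_inner_self_eq_norm_sq, he]; norm_num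
  have hwe : ⟪w, e⟫ = 0 := by
    rw [hw, inner_sub_left, real_inner_smul_left, hee]; ring
  have hG : G = ⟪G, e⟫ • e + w := by rw [hw]; abel
  have h1 : ‖G‖ ≤ |⟪G, e⟫| + ‖w‖ := by
    calc ‖G‖ = ‖⟪G, e⟫ • e + w‖ := by rw [← hG]
      _ ≤ ‖⟪G, e⟫ • e‖ + ‖w‖ := norm_add_le _ _
      _ = |⟪G, e⟫| + ‖w‖ := by rw [norm_smul, he, mul_one, Real.norm_eq_abs]
  have h2 : ‖w‖ ≤ A ^ (1 / p) := by
    by_cases hw0 : w = 0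
    · rw [hw0, norm_zero]; positivity
    · have hwn : 0 < ‖w‖ := norm_pos_iff.mpr hw0
      have h3 := h (‖w‖⁻¹ • w) (by rw [norm_smul, norm_inv, norm_norm]; field_simp)
        (by rw [real_inner_smul_left, hwe, mul_zero])
      have h4 : ⟪G, ‖w‖⁻¹ • w⟫ = ‖w‖ := by
        have : ⟪G, w⟫ = ‖w‖ ^ 2 := by
          rw [← real_inner_self_eq_norm_sq]
          conv_lhs => rw [hG]
          rw [inner_add_left, real_inner_smul_left, real_inner_comm w e, hwe]; ring
        rw [real_inner_smul_right, this]; field_simp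
      rw [h4, abs_of_pos hwn] at h3
      calc ‖w‖ = (‖w‖ ^ p) ^ (1 / p) := by
            rw [← Real.rpow_mul hwn.le, mul_one_div_cancel (by linarith), Real.rpow_one]
        _ ≤ A ^ (1 / p) := Real.rpow_le_rpow (by positivity) h3 (by positivity)
  linarith

/-- Laplacian bound by the normal second derivative and tangential ones. -/
theorem aux_trace {n : ℕ} (hn : 1 ≤ n) (A : ℝ)
    (H : EuclideanSpace ℝ (Fin n) →L[ℝ] EuclideanSpace ℝ (Fin n))
    (e : EuclideanSpace ℝ (Fin n)) (he : ‖e‖ = 1)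
    (h : ∀ τ : EuclideanSpace ℝ (Fin n), ‖τ‖ = 1 → ⟪τ, e⟫ = 0 → |⟪H τ, τ⟫| ≤ A) :
    ∑ i : Fin n, ⟪H (EuclideanSpace.single i (1 : ℝ)), EuclideanSpace.single i (1 : ℝ)⟫
      ≤ ⟪H e, e⟫ + (n - 1) * A := by
  have hon : Orthonormal ℝ (Set.domRestrict {(⟨0, hn⟩ : Fin n)} (fun _ : Fin n => e)) := by
    constructor
    · intro i; exact he
    · intro i j hij
      exact absurd (Subsingleton.elim i j) hij
  obtain ⟨b, hb⟩ := hon.exists_orthonormalBasis_extension_of_card_eq (by simp)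
  have hb0 : b ⟨0, hn⟩ = e := hb _ (by simp)
  have e1 := LinearMap.trace_eq_sum_inner (H : EuclideanSpace ℝ (Fin n) →ₗ[ℝ] EuclideanSpace ℝ (Fin n)) b
  have e2 := LinearMap.trace_eq_sum_inner (H : EuclideanSpace ℝ (Fin n) →ₗ[ℝ] EuclideanSpace ℝ (Fin n))
    (EuclideanSpace.basisFun (Fin n) ℝ)
  have e3 : ∑ i : Fin n, ⟪H (EuclideanSpace.single i (1 : ℝ)), EuclideanSpace.single i (1 : ℝ)⟫
      = ∑ i, ⟪H (b i), b i⟫ := by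
    rw [e2] at e1
    simp only [EuclideanSpace.basisFun_apply, ContinuousLinearMap.coe_coe] at e1
    calc _ = _ := Finset.sum_congr rfl (fun i _ => real_inner_comm _ _)
      _ = _ := e1
      _ = _ := Finset.sum_congr rfl (fun i _ => real_inner_comm _ _)
  rw [e3, ← Finset.add_sum_erase _ _ (Finset.mem_univ (⟨0, hn⟩ : Fin n)), hb0]
  have h5 : ∑ i ∈ Finset.univ.erase (⟨0, hn⟩ : Fin n), ⟪H (b i), b i⟫
      ≤ ∑ i ∈ Finset.univ.erase (⟨0, hn⟩ : Fin n), A := by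
    refine Finset.sum_le_sum fun i hi => ?_
    refine (le_abs_self _).trans (h _ (b.orthonormal.1 i) ?_)
    rw [← hb0]
    exact b.orthonormal.2 (Finset.ne_of_mem_erase hi)
  rw [Finset.sum_const, Finset.card_erase_of_mem (Finset.mem_univ _), Finset.card_univ,
    Fintype.card_fin, nsmul_eq_mul, Nat.cast_sub hn, Nat.cast_one] at h5
  linarith

/-- Choice of the small parameter. -/
theorem aux_eta (n : ℕ) (p β k : ℝ) (hp : 2 < p) (hβ : β = 1 / (p - 1)) (hk : 0 < k)
    (hk' : k < β ^ β) : ∃ η > (0 : ℝ), (k + η ^ (1 / p)) ^ p + n * η < β * k := by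
  have hβ0 : 0 < β := by rw [hβ]; apply one_div_pos.mpr; linarith
  have h0 : k ^ p < β * k := by
    have h1 : k ^ (p - 1) < β := by
      calc k ^ (p - 1) < (β ^ β) ^ (p - 1) := Real.rpow_lt_rpow hk.le hk' (by linarith)
        _ = β := by
          rw [← Real.rpow_mul hβ0.le]
          have : β * (p - 1) = 1 := by rw [hβ]; field_simp [show p - 1 ≠ 0 by linarith]
          rw [this, Real.rpow_one]
    have h2 : k ^ p = k ^ (p - 1) * k := by
      conv_lhs => rw [show p = (p - 1) + 1 by ring]
      rw [Real.rpow_add hk, Real.rpow_one]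
    rw [h2]; exact mul_lt_mul_of_pos_right h1 hk
  have hc : Continuous (fun η : ℝ => (k + η ^ (1 / p)) ^ p + n * η) := by
    have h1 : Continuous (fun η : ℝ => η ^ (1 / p)) :=
      Real.continuous_rpow_const (by positivity)
    have h2 : Continuous (fun x : ℝ => x ^ p) := Real.continuous_rpow_const (by positivity)
    exact (h2.comp (continuous_const.add h1)).add (continuous_const.mul continuous_id)
  have hev : ∀ᶠ η in nhds (0 : ℝ), (k + η ^ (1 / p)) ^ p + n * η < β * k := by
    refine hc.continuousAt.eventually_lt continuousAt_const ?_
    rw [Real.zero_rpow (by positivity)]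
    simpa using h0
  have hev2 : ∀ᶠ η in nhdsWithin (0 : ℝ) (Ioi 0), (k + η ^ (1 / p)) ^ p + n * η < β * k :=
    hev.filter_mono nhdsWithin_le_nhds
  obtain ⟨η, h1, h2⟩ := (hev2.and self_mem_nhdsWithin).exists
  exact ⟨η, h2, h1⟩

theorem stmt15 {n : ℕ} (hn : 1 ≤ n)
    (p β dp : ℝ) (hp : 2 < p) (hβ : β = 1 / (p - 1)) (hdp : dp = β ^ β)
    (k : ℝ) (hk : k ∈ Ioo 0 dp) (M : ℝ) (hM : 0 < M)
    (Cf : ℝ → ℝ) (hCf : ∀ ε ∈ Ioo (0 : ℝ) 1, 0 < Cf ε) :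
    ∃ r₀ > (0 : ℝ),
    ∀ ω : Set (EuclideanSpace ℝ (Fin n)), IsOpen ω →
    ∀ a e : EuclideanSpace ℝ (Fin n), ‖e‖ = 1 →
    ∀ R > (0 : ℝ), (∀ s ∈ Ioo (0 : ℝ) R, a + s • e ∈ ω) →
    ∀ t₀ t₁ : ℝ, t₀ < t₁ →
    ∀ (v : EuclideanSpace ℝ (Fin n) → ℝ → ℝ) (Gv : EuclideanSpace ℝ (Fin n) → ℝ → EuclideanSpace ℝ (Fin n)) (Hv : EuclideanSpace ℝ (Fin n) → ℝ → (EuclideanSpace ℝ (Fin n) →L[ℝ] EuclideanSpace ℝ (Fin n)))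
      (v' : EuclideanSpace ℝ (Fin n) → ℝ → ℝ),
    -- v, its first and second spatial derivatives and its first time derivative are
    -- continuous on ω × [t₀, t₁]
    ContinuousOn (fun q : EuclideanSpace ℝ (Fin n) × ℝ => (v q.1 q.2, Gv q.1 q.2, Hv q.1 q.2, v' q.1 q.2))
      (ω ×ˢ Icc t₀ t₁) →
    (∀ t ∈ Icc t₀ t₁, ∀ x ∈ ω, HasGradientAt (fun y => v y t) (Gv x t) x) →
    (∀ t ∈ Icc t₀ t₁, ∀ x ∈ ω, HasFDerivAt (fun y => Gv y t) (Hv x t) x) →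
    (∀ x ∈ ω, ∀ t ∈ Icc t₀ t₁, HasDerivWithinAt (fun s => v x s) (v' x t) (Icc t₀ t₁) t) →
    -- vₜ - Δv = |∇v|^p in ω × (t₀, t₁)
    (∀ x ∈ ω, ∀ t ∈ Ioo t₀ t₁,
      v' x t - ∑ i : Fin n, ⟪Hv x t (EuclideanSpace.single i (1 : ℝ)),
        EuclideanSpace.single i (1 : ℝ)⟫ = ‖Gv x t‖ ^ p) →
    -- |vₜ| ≤ M in ω × (t₀, t₁)
    (∀ x ∈ ω, ∀ t ∈ Ioo t₀ t₁, |v' x t| ≤ M) →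
    -- tangential estimate (7.3)
    (∀ ε ∈ Ioo (0 : ℝ) 1, ∀ s ∈ Ioo (0 : ℝ) R, ∀ t ∈ Ioo t₀ t₁,
      ∀ τ : EuclideanSpace ℝ (Fin n), ‖τ‖ = 1 → ⟪τ, e⟫ = 0 →
        |⟪Gv (a + s • e) t, τ⟫| ^ p + |⟪Hv (a + s • e) t τ, τ⟫| ≤ ε * s ^ (-(β * p)) + Cf ε) →
    -- conclusion
    ∀ r ∈ Ioo 0 (min r₀ R), ∀ t ∈ Ioo t₀ t₁,
      ⟪Gv (a + r • e) t, e⟫ ≤ k * r ^ (-β) →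
      ∀ s ∈ Ioo (0 : ℝ) r, ⟪Gv (a + s • e) t, e⟫ ≤ k * s ^ (-β) := by
  obtain ⟨hk0, hk1⟩ := hk
  rw [hdp] at hk1
  obtain ⟨η, hη, hF⟩ := aux_eta n p β k hp hβ hk0 hk1
  have hβ0 : 0 < β := by rw [hβ]; apply one_div_pos.mpr; linarith
  have hβp : β * p = β + 1 := by
    rw [hβ]; field_simp [show p - 1 ≠ 0 by linarith]; ring
  have hβp0 : 0 < β * p := by linarith
  set ε : ℝ := min (η / 2) (1 / 2) with hε
  have hεm : ε ∈ Ioo (0 : ℝ) 1 :=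
    ⟨lt_min (by linarith) (by norm_num), (min_le_right _ _).trans_lt (by norm_num)⟩
  have hC := hCf ε hεm
  set K := Cf ε + M with hK
  have hKpos : 0 < K := by positivity
  refine ⟨(η / 2 / K) ^ (1 / (β * p)), by positivity, ?_⟩
  intro ω hω a e he R hR hseg t₀ t₁ ht v Gv Hv v' hcont hgrad hhess htime hpde hvt htan
    r hr t htt hrk s hs
  have htI : t ∈ Icc t₀ t₁ := Ioo_subset_Icc_self htt
  have hrR : r < R := hr.2.trans_le (min_le_right _ _)
  have hrr : r < (η / 2 / K) ^ (1 / (β * p)) := hr.2.trans_le (min_le_left _ _)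
  have key := aux_barrier (fun x => ⟪Gv (a + x • e) t, e⟫ - k * x ^ (-β))
    (fun x => ⟪Hv (a + x • e) t e, e⟫ - k * ((-β) * x ^ (-β - 1))) s r hs.2 ?_
    (by simpa using hrk) ?_
  · simpa using key
  · intro x hx
    have hx0 : 0 < x := hs.1.trans_le hx.1
    have hxω := hseg x ⟨hx0, hx.2.trans_lt hrR⟩
    have h1 : HasDerivAt (fun y : ℝ => a + y • e) e x := by
      simpa using ((hasDerivAt_id x).smul_const e).const_add a
    have h2 : HasDerivAt (fun y : ℝ => Gv (a + y • e) t) (Hv (a + x • e) t e) x :=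
      HasFDerivAt.comp_hasDerivAt (f := fun y : ℝ => a + y • e) (l := fun y => Gv y t) x
        (hhess t htI _ hxω) h1
    have h3 : HasDerivAt (fun y : ℝ => ⟪Gv (a + y • e) t, e⟫) ⟪Hv (a + x • e) t e, e⟫ x := by
      simpa using h2.inner ℝ (hasDerivAt_const x e)
    exact h3.sub ((Real.hasDerivAt_rpow_const (Or.inl hx0.ne')).const_mul k)
  · intro x hx hzero
    have hx0 : 0 < x := hs.1.trans_le hx.1
    have hxR : x ∈ Ioo 0 R := ⟨hx0, hx.2.trans_lt hrR⟩
    have hxω := hseg x hxR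
    have hφ : ⟪Gv (a + x • e) t, e⟫ = k * x ^ (-β) := by
      linarith
    set A := ε * x ^ (-(β * p)) + Cf ε with hA
    set Q := x ^ (-(β * p)) with hQ
    have hQ0 : 0 < Q := by positivity
    have hA0 : 0 < A := by have := hεm.1; positivity
    have hxp : K * x ^ (β * p) ≤ η / 2 := by
      have h1 : x ^ (β * p) ≤ ((η / 2 / K) ^ (1 / (β * p))) ^ (β * p) :=
        Real.rpow_le_rpow hx0.le (hx.2.trans hrr.le) hβp0.le
      rw [← Real.rpow_mul (by positivity), one_div_mul_cancel hβp0.ne', Real.rpow_one] at h1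
      calc K * x ^ (β * p) ≤ K * (η / 2 / K) := by gcongr
        _ = η / 2 := by field_simp
    have hKQ : K ≤ η / 2 * Q := by
      have h1 : x ^ (β * p) * Q = 1 := by
        rw [hQ, ← Real.rpow_add hx0]; simp
      calc K = K * x ^ (β * p) * Q := by rw [mul_assoc, h1, mul_one]
        _ ≤ η / 2 * Q := by gcongr
    have hAM : A + M ≤ η * Q := by
      have : ε * Q ≤ η / 2 * Q := by gcongr; exact min_le_left _ _
      linarith
    have hAQ : A ≤ η * Q := by linarith
    have hnorm := aux_norm p A hp hA0.le (Gv (a + x • e) t) e he (fun τ h1 h2 => by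
      have h3 := htan ε hεm x hxR t htt τ h1 h2
      have := abs_nonneg ⟪Hv (a + x • e) t τ, τ⟫
      linarith)
    have htr := aux_trace hn A (Hv (a + x • e) t) e he (fun τ h1 h2 => by
      have h3 := htan ε hεm x hxR t htt τ h1 h2
      have : 0 ≤ |⟪Gv (a + x • e) t, τ⟫| ^ p := by positivity
      linarith)
    have hQp : Q = (x ^ (-β)) ^ p := by
      rw [hQ, ← Real.rpow_mul hx0.le]; congr 1; ring
    have hQ1p : Q ^ (1 / p) = x ^ (-β) := by
      rw [hQp, ← Real.rpow_mul (by positivity), mul_one_div_cancel (by linarith), Real.rpow_one]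
    have hnorm2 : ‖Gv (a + x • e) t‖ ≤ (k + η ^ (1 / p)) * x ^ (-β) := by
      have h1 : A ^ (1 / p) ≤ η ^ (1 / p) * x ^ (-β) := by
        rw [← hQ1p, ← Real.mul_rpow hη.le hQ0.le]
        exact Real.rpow_le_rpow hA0.le hAQ (by positivity)
      have h2 : |⟪Gv (a + x • e) t, e⟫| = k * x ^ (-β) := by
        rw [hφ, abs_of_pos (by positivity)]
      rw [h2] at hnorm
      linarith
    have hnormp : ‖Gv (a + x • e) t‖ ^ p ≤ (k + η ^ (1 / p)) ^ p * Q := by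
      rw [hQp, ← Real.mul_rpow (by positivity) (by positivity)]
      exact Real.rpow_le_rpow (norm_nonneg _) hnorm2 (by linarith)
    have hp1 := hpde _ hxω t htt
    have hv1 := (abs_le.mp (hvt _ hxω t htt)).1
    have hn1 : (1 : ℝ) ≤ n := by exact_mod_cast hn
    have hnA : (n - 1 : ℝ) * A ≤ (n - 1) * (η * Q) :=
      mul_le_mul_of_nonneg_left hAQ (by linarith)
    have hFQ := mul_lt_mul_of_pos_right hF hQ0
    have hexp : x ^ (-β - 1) = Q := by rw [hQ, hβp]; congr 1; ring
    rw [hexp]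
    have hMQ : M ≤ η * Q := by linarith
    nlinarith
end
end
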